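/- Let I ⊆ R = k[x_1,...,x_n] be a squarefree monomial ideal and r ≥ 0. For every α ∈ {-1,0}^n, the multiplicity m_{r,α} of the characteristic-cycle-type decomposition of H^r_I(R) equals dim_k of the degree-α component of H^r_I(R); i.e., the graded piece H^r_I(R)_α is a finite-dimensional k-vector space whose dimension equals the Betti-type invariant m_{r,α} = dim_k H̃_{|α|-r-1}(K(>p_α); k) of the intersection poset, where p_α corresponds to α (and m_{r,α} = 0 if p_α is not in the poset). -/

import Mathlib

open MvPolynomial

/-- `a ∈ Ω = {-1,0}^n`. -/
def isOm {n : ℕ} (a : Fin n → ℤ) : Prop := ∀ i, a i = 0 ∨ a i = -1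

/-- The face prime ideal `p_a = (xᵢ : a i = -1)`. -/
noncomputable def faceIdeal {n : ℕ} (k : Type*) [CommSemiring k] (a : Fin n → ℤ) :
    Ideal (MvPolynomial (Fin n) k) :=
  Ideal.span (MvPolynomial.X '' {i | a i = -1})

/-- `|a|`, the number of `-1` entries of `a ∈ Ω`. -/
def wt {n : ℕ} (a : Fin n → ℤ) : ℕ := (Finset.univ.filter fun i => a i = -1).card

/-- The local cohomology module `H^r_I(R)` for `R = k[x₁,…,xₙ]`, as a type. -/
abbrev LC {n : ℕ} (k : Type) [Field k] (I : Ideal (MvPolynomial (Fin n) k)) (r : ℕ) : Type :=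
  ((localCohomology I r).obj
    (ModuleCat.of (MvPolynomial (Fin n) k) (MvPolynomial (Fin n) k)))

/-- A family of `k`-subspaces indexed by `ℤⁿ` is a compatible `ℤⁿ`-grading of an
`R = k[x₁,…,xₙ]`-module when multiplication by `xᵢ` raises degrees by `eᵢ`. -/
def GradingCompat {n : ℕ} (k : Type) [Field k] (M : Type*) [AddCommGroup M]
    [Module (MvPolynomial (Fin n) k) M] [Module k M]
    (g : (Fin n → ℤ) → Submodule k M) : Prop :=
  ∀ (i : Fin n) (d : Fin n → ℤ), ∀ m ∈ g d,
    (MvPolynomial.X i : MvPolynomial (Fin n) k) • m ∈ g (d + Pi.single i 1)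

/-- Chains of `m` elements of a preorder `P`: strictly increasing `m`-tuples. These are the
`(m-1)`-simplices of the order complex `K(P)`; for `m = 0` there is exactly one (empty) chain. -/
def pchains (P : Type*) [Preorder P] (m : ℕ) : Type _ :=
  {f : Fin m → P // StrictMono f}

/-- The boundary map of the augmented simplicial chain complex of the order complex of `P`
with coefficients in `M`: the alternating sum over deletions of a vertex.  In degree `0`
this is the augmentation onto `pchains P 0 →₀ M ≃ M`. -/
noncomputable def simpBdry (A : Type*) [CommRing A] (M : Type*) [AddCommGroup M] [Module A M]
    (P : Type*) [Preorder P] (m : ℕ) :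
    (pchains P (m + 1) →₀ M) →ₗ[A] (pchains P m →₀ M) :=
  Finsupp.lsum ℕ fun c =>
    ∑ i : Fin (m + 1), ((-1 : A) ^ (i : ℕ)) •
      (Finsupp.lsingle (⟨c.1 ∘ i.succAbove, c.2.comp (Fin.strictMono_succAbove i)⟩ : pchains P m))

/-- Cycles of the augmented simplicial chain complex (everything in lowest degree). -/
noncomputable def simpCycles (A : Type*) [CommRing A] (M : Type*) [AddCommGroup M] [Module A M]
    (P : Type*) [Preorder P] : (m : ℕ) → Submodule A (pchains P m →₀ M)
  | 0 => ⊤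
  | (m + 1) => LinearMap.ker (simpBdry A M P m)

/-- `simpHomology A M P m` is the reduced simplicial homology `H̃_{m-1}(K(P); M)` of the order
complex of `P` with coefficients in the `A`-module `M`, computed from the augmented chain
complex; with this convention `H̃_{-1}(∅; M) = M` (the case `m = 0`, `P = ∅`). -/
@[reducible] noncomputable def simpHomology (A : Type*) [CommRing A] (M : Type*) [AddCommGroup M] [Module A M]
    (P : Type*) [Preorder P] (m : ℕ) : Type _ :=
  ↥(simpCycles A M P m) ⧸
    (Submodule.comap (simpCycles A M P m).subtype (LinearMap.range (simpBdry A M P m)))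

/-- Membership in the intersection poset of the coordinate-subspace arrangement defined by a
monomial ideal `I`: the (proper) sums of nonempty collections of minimal primes of `I`. -/
@[reducible] def arrMem {n : ℕ} (k : Type) [Field k] (I : Ideal (MvPolynomial (Fin n) k))
    (J : Ideal (MvPolynomial (Fin n) k)) : Prop :=
  J ≠ ⊤ ∧ ∃ T : Finset (Ideal (MvPolynomial (Fin n) k)),
    ↑T ⊆ I.minimalPrimes ∧ T.Nonempty ∧ J = T.sup id

/-- The intersection poset `P(X)` of the arrangement defined by `I`, ordered by inclusion of
the subspaces, i.e. by reverse inclusion of the defining ideals. -/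
@[reducible] def arrP {n : ℕ} (k : Type) [Field k] (I : Ideal (MvPolynomial (Fin n) k)) :
    Type :=
  {J : (Ideal (MvPolynomial (Fin n) k))ᵒᵈ // arrMem k I (OrderDual.ofDual J)}

universe u v

/-!
Local cohomology is computed from the resolutions of Taylor type of the ideals generated by the
`t`-th powers of the generators: the cohomology of `Hom(-, R)` splits by multidegree, and in degree
`a` the limit over `t` is the cohomology of the Čech-like complex of those tuples of generators
whose union contains the negative support `F` of `a`. Covers of `F` and transversals of the
generators inside `F` are the two edges of an exact bicomplex, so this is also the cohomology of the
simplex on `F` relative to the non-transversals.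

Minimal primes of the ideal are minimal transversals, so the members of the intersection poset are
the unions of minimal transversals, and a transversal contains a largest such union. Hence the
members contained in a proper transversal form a cone, and a second exact bicomplex identifies the
relative cohomology with the homology of the open interval. If `F` is not such a union, a
variable outside all minimal transversals in `F` contracts the relative complex.
-/

section HomologyClass
open CategoryTheory Limits

variable {A : Type u} [CommRing A] {ι : Type*} {c : ComplexShape ι}
  {K L : HomologicalComplex (ModuleCat.{v} A) c}

/-- The inclusion of the concrete kernel of `K.d i j` into the categorical cycles. -/
noncomputable def kerToCycles (K : HomologicalComplex (ModuleCat.{v} A) c) (i j : ι)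
    (hj : c.next i = j) : ModuleCat.of A (LinearMap.ker (K.d i j).hom) ⟶ K.cycles i :=
  K.liftCycles (ModuleCat.ofHom (LinearMap.ker (K.d i j).hom).subtype) j hj (by ext x; exact x.2)

/-- The homology class of a cycle, a cycle being an element of the concrete kernel of `K.d i j`. -/
noncomputable def homologyClass (K : HomologicalComplex (ModuleCat.{v} A) c) (i j : ι)
    (hj : c.next i = j) : LinearMap.ker (K.d i j).hom →ₗ[A] K.homology i :=
  (kerToCycles K i j hj ≫ K.homologyπ i).hom

lemma iCycles_injective (i : ι) : Function.Injective (K.iCycles i) :=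
  (ModuleCat.mono_iff_injective _).1 inferInstance

lemma iCycles_kerToCycles (i j : ι) (hj : c.next i = j) (x : LinearMap.ker (K.d i j).hom) :
    K.iCycles i (kerToCycles K i j hj x) = x :=
  ConcreteCategory.congr_hom (K.liftCycles_i
    (A := ModuleCat.of A (LinearMap.ker (K.d i j).hom)) _ j hj _) x

lemma homologyClass_surjective (i j : ι) (hj : c.next i = j) :
    Function.Surjective (homologyClass K i j hj) := by
  intro y
  obtain ⟨z, rfl⟩ := (ModuleCat.epi_iff_surjective (K.homologyπ i)).1 inferInstance y
  have hz : K.d i j (K.iCycles i z) = 0 := ConcreteCategory.congr_hom (K.iCycles_d i j) z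
  refine ⟨⟨K.iCycles i z, hz⟩, congrArg (K.homologyπ i) (iCycles_injective i ?_)⟩
  exact iCycles_kerToCycles i j hj _

lemma homologyπ_eq_zero_iff (h i : ι) (hh : c.prev i = h) (z : K.cycles i) :
    K.homologyπ i z = 0 ↔ ∃ w, K.d h i w = K.iCycles i z := by
  have exact : (ShortComplex.mk _ _ (K.toCycles_comp_homologyπ h i)).Exact :=
    ShortComplex.exact_of_g_is_cokernel _ (K.homologyIsCokernel h i hh)
  have iCycles_toCycles (w : K.X h) : K.iCycles i (K.toCycles h i w) = K.d h i w :=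
    ConcreteCategory.congr_hom (K.toCycles_i h i) w
  refine ((ShortComplex.ShortExact.moduleCat_exact_iff_function_exact _).1 exact z).trans
    (exists_congr fun w => ?_)
  rw [← iCycles_toCycles]
  exact (iCycles_injective i).eq_iff.symm

lemma homologyClass_eq_zero_iff (h i j : ι) (hh : c.prev i = h) (hj : c.next i = j)
    (x : LinearMap.ker (K.d i j).hom) :
    homologyClass K i j hj x = 0 ↔ ∃ w, K.d h i w = x := by
  rw [← iCycles_kerToCycles i j hj x]
  exact homologyπ_eq_zero_iff h i hh _

lemma homologyMap_homologyClass (φ : K ⟶ L) (i j : ι) (hj : c.next i = j)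
    (x : LinearMap.ker (K.d i j).hom) (y : LinearMap.ker (L.d i j).hom)
    (hxy : φ.f i x.1 = y) :
    HomologicalComplex.homologyMap φ i (homologyClass K i j hj x) = homologyClass L i j hj y := by
  have cycles_eq :
      HomologicalComplex.cyclesMap φ i (kerToCycles K i j hj x) = kerToCycles L i j hj y := by
    refine iCycles_injective i ?_
    calc _ = φ.f i (K.iCycles i (kerToCycles K i j hj x)) :=
          ConcreteCategory.congr_hom (HomologicalComplex.cyclesMap_i φ i) _
      _ = _ := by rw [iCycles_kerToCycles, iCycles_kerToCycles, hxy]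
  refine .trans ?_ (congrArg (L.homologyπ i) cycles_eq)
  exact ConcreteCategory.congr_hom (HomologicalComplex.homologyπ_naturality φ i) _

end HomologyClass

section ExtClass
open CategoryTheory Limits Opposite

variable {A : Type u} [CommRing A] {X X' : ModuleCat.{u} A}

/-- The cocycles computing `Ext^r(X, Y)` from a projective resolution of `X`. -/
abbrev extCocycles (P : ProjectiveResolution X) (Y : ModuleCat.{u} A) (r : ℕ) :
    Submodule A (P.complex.X r ⟶ Y) :=
  LinearMap.ker ((P.complex.linearYonedaObj A Y).d r (r + 1)).hom

lemma isoExt_inv_injective (P : ProjectiveResolution X) (Y : ModuleCat.{u} A) (r : ℕ) :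
    Function.Injective (P.isoExt (R := A) r Y).inv :=
  (ModuleCat.mono_iff_injective _).1 inferInstance

/-- The class in `Ext^r(X, Y)` of a cocycle on a projective resolution of `X`. -/
noncomputable def extClass (P : ProjectiveResolution X) (Y : ModuleCat.{u} A) (r : ℕ) :
    extCocycles P Y r →ₗ[A] ((Ext A (ModuleCat.{u} A) r).obj (op X)).obj Y :=
  (P.isoExt r Y).inv.hom ∘ₗ homologyClass (P.complex.linearYonedaObj A Y) r (r + 1) (by simp)

lemma extClass_surjective (P : ProjectiveResolution X) (Y : ModuleCat.{u} A) (r : ℕ) :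
    Function.Surjective (extClass P Y r) :=
  ((ModuleCat.epi_iff_surjective (P.isoExt (R := A) r Y).inv).1 inferInstance).comp
    (homologyClass_surjective _ _ _)

lemma extClass_eq_zero_iff (P : ProjectiveResolution X) (Y : ModuleCat.{u} A) (r : ℕ)
    (x : extCocycles P Y r) : extClass P Y r x = 0 ↔
      homologyClass (P.complex.linearYonedaObj A Y) r (r + 1) (by simp) x = 0 :=
  map_eq_zero_iff (P.isoExt (R := A) r Y).inv.hom (isoExt_inv_injective P Y r)

lemma extClass_succ_eq_zero_iff (P : ProjectiveResolution X) (Y : ModuleCat.{u} A) (r : ℕ)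
    (x : extCocycles P Y (r + 1)) :
    extClass P Y (r + 1) x = 0 ↔ ∃ w : P.complex.X r ⟶ Y, P.complex.d (r + 1) r ≫ w = x :=
  (extClass_eq_zero_iff P Y (r + 1) x).trans
    (homologyClass_eq_zero_iff (K := P.complex.linearYonedaObj A Y) r (r + 1) (r + 2)
      (by simp) (by simp) x)

lemma extClass_zero_eq_zero_iff (P : ProjectiveResolution X) (Y : ModuleCat.{u} A)
    (x : extCocycles P Y 0) : extClass P Y 0 x = 0 ↔ x = 0 := by
  refine ((extClass_eq_zero_iff P Y 0 x).trans
    (homologyClass_eq_zero_iff (K := P.complex.linearYonedaObj A Y) 0 0 1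
      (by simp) (by simp) x)).trans ?_
  rw [(P.complex.linearYonedaObj A Y).shape 0 0 (by simp)]
  exact ⟨fun ⟨_, h⟩ => Subtype.ext h.symm, fun h => ⟨0, congrArg Subtype.val h.symm⟩⟩

/-- Precomposition with a chain map, as a morphism of `Hom` complexes. -/
noncomputable def linearYonedaObjMap {K L : ChainComplex (ModuleCat.{u} A) ℕ} (φ : K ⟶ L)
    (Y : ModuleCat.{u} A) : L.linearYonedaObj A Y ⟶ K.linearYonedaObj A Y :=
  (HomologicalComplex.unopFunctor _ _).map
    ((((linearYoneda A (ModuleCat.{u} A)).obj Y).rightOp.mapHomologicalComplex _).map φ).op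

lemma isoExt_inv_naturality (f : X ⟶ X') (P : ProjectiveResolution X)
    (Q : ProjectiveResolution X') (φ : P.complex ⟶ Q.complex)
    (comm : φ.f 0 ≫ Q.π.f 0 = P.π.f 0 ≫ f) (Y : ModuleCat.{u} A) (r : ℕ) :
    (Q.isoExt (R := A) r Y).inv ≫ ((Ext A (ModuleCat.{u} A) r).map f.op).app Y =
      HomologicalComplex.homologyMap (linearYonedaObjMap φ Y) r ≫
        (P.isoExt (R := A) r Y).inv := by
  let F := ((linearYoneda A (ModuleCat.{u} A)).obj Y).rightOp
  let homologyMapUnop :=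
    (HomologicalComplex.homologyMap ((F.mapHomologicalComplex _).map φ) r).unop
  have derived : (Q.isoLeftDerivedObj F r).hom.unop ≫
      ((Ext A (ModuleCat.{u} A) r).map f.op).app Y =
      homologyMapUnop ≫ (P.isoLeftDerivedObj F r).hom.unop :=
    congrArg Quiver.Hom.unop
      (ProjectiveResolution.isoLeftDerivedObj_hom_naturality f P Q φ comm F r)
  have homologyOp : ((Q.complex.linearYonedaObj A Y).homologyOp r).hom.unop ≫ homologyMapUnop =
      HomologicalComplex.homologyMap (linearYonedaObjMap φ Y) r ≫
        ((P.complex.linearYonedaObj A Y).homologyOp r).hom.unop :=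
    congrArg Quiver.Hom.unop
      (HomologicalComplex.homologyOp_hom_naturality (i := r) (linearYonedaObjMap φ Y))
  refine (Category.assoc _ _ _).trans ((congrArg _ derived).trans ?_)
  refine (Category.assoc _ _ _).symm.trans ((congrArg (· ≫ _) homologyOp).trans ?_)
  exact Category.assoc _ _ _

lemma extMap_extClass (f : X ⟶ X') (P : ProjectiveResolution X) (Q : ProjectiveResolution X')
    (φ : P.complex ⟶ Q.complex) (comm : φ.f 0 ≫ Q.π.f 0 = P.π.f 0 ≫ f) (Y : ModuleCat.{u} A)
    (r : ℕ) (x : extCocycles Q Y r) (y : extCocycles P Y r) (hxy : φ.f r ≫ x.1 = y) :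
    ((Ext A (ModuleCat.{u} A) r).map f.op).app Y (extClass Q Y r x) = extClass P Y r y :=
  (congrArg (fun g => g.hom (homologyClass (Q.complex.linearYonedaObj A Y) r (r + 1) (by simp) x))
    (isoExt_inv_naturality f P Q φ comm Y r)).trans <|
  congrArg (P.isoExt (R := A) r Y).inv
    (homologyMap_homologyClass (linearYonedaObjMap φ Y) r (r + 1) (by simp) x y hxy)

end ExtClass

section SequentialLocalCohomology
open CategoryTheory Limits Opposite localCohomology

variable {A : Type u} [CommRing A] {I : Ideal A} {J : ℕ → Ideal A}

/-- A decreasing sequence of ideals defining the same topology as the powers of `I`; it computes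
local cohomology with support in `I` as a sequential colimit. -/
structure IsAdicSequence (I : Ideal A) (J : ℕ → Ideal A) : Prop where
  antitone : Antitone J
  le_radical : ∀ t, I ≤ (J t).radical
  exists_le_pow : ∀ N, ∃ t, J t ≤ I ^ N

namespace IsAdicSequence

/-- The sequence `J` as a diagram of ideals. -/
def diagram (hJ : IsAdicSequence I J) : ℕᵒᵖ ⥤ Ideal A where
  obj t := J (unop t)
  map w := ⟨⟨hJ.antitone w.unop.down.down⟩⟩

/-- The sequence `J` as a diagram of ideals whose radical contains `I`. -/
def toSelfLERadical (hJ : IsAdicSequence I J) : ℕᵒᵖ ⥤ SelfLERadical I :=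
  ObjectProperty.lift _ hJ.diagram fun t => hJ.le_radical (unop t)

instance initial_toSelfLERadical [IsNoetherianRing A] (hJ : IsAdicSequence I J) :
    Functor.Initial hJ.toSelfLERadical where
  out J' := by
    apply +allowSynthFailures zigzag_isConnected
    · obtain ⟨N, hN⟩ := Ideal.exists_pow_le_of_le_radical_of_fg J'.2 (IsNoetherian.noetherian I)
      obtain ⟨t, ht⟩ := hJ.exists_le_pow N
      exact ⟨CostructuredArrow.mk (⟨⟨⟨ht.trans hN⟩⟩⟩ : hJ.toSelfLERadical.obj (op t) ⟶ J')⟩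
    · intro j₁ j₂
      apply Relation.ReflTransGen.single
      rcases le_total (unop j₁.left) (unop j₂.left) with h | h
      · exact Or.inr ⟨CostructuredArrow.homMk (homOfLE h).op rfl⟩
      · exact Or.inl ⟨CostructuredArrow.homMk (homOfLE h).op rfl⟩

/-- Local cohomology is computed by any sequence defining the adic topology. -/
noncomputable def isoLocalCohomology [IsNoetherianRing A] (hJ : IsAdicSequence I J) (r : ℕ) :
    ofDiagram.{u, 0} hJ.diagram r ≅ localCohomology I r :=
  isoOfFinal.{u, u, 0} hJ.toSelfLERadical (selfLERadicalDiagram I) r ≪≫ isoSelfLERadical I r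

/-- `Ext^r(A/J_t, Y)`. -/
noncomputable abbrev extQuotient (J : ℕ → Ideal A) (r : ℕ) (Y : ModuleCat.{u} A) (t : ℕ) :
    ModuleCat.{u} A :=
  ((Ext A (ModuleCat.{u} A) r).obj (op (ModuleCat.of A (A ⧸ J t)))).obj Y

/-- The map `Ext^r(A/J_s, Y) → Ext^r(A/J_t, Y)` induced by the projection `A/J_t → A/J_s`. -/
noncomputable def extQuotientMap (hJ : IsAdicSequence I J) (r : ℕ) (Y : ModuleCat.{u} A)
    {s t : ℕ} (h : s ≤ t) : extQuotient J r Y s ⟶ extQuotient J r Y t :=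
  ((Ext A (ModuleCat.{u} A) r).map
    (ModuleCat.ofHom (Submodule.mapQ (J t) (J s) LinearMap.id (hJ.antitone h))).op).app Y

variable [IsNoetherianRing A] (hJ : IsAdicSequence I J) (r : ℕ) (Y : ModuleCat.{u} A)

/-- The cocone exhibiting `colim_t Ext^r(A/J_t, Y)`. -/
noncomputable def extCocone : Cocone
    (localCohomology.diagram hJ.diagram r ⋙ (evaluation _ (ModuleCat.{u} A)).obj Y) :=
  haveI := hasColimitDiagram.{u, 0} hJ.diagram r
  ((evaluation _ _).obj Y).mapCocone (colimit.cocone (localCohomology.diagram hJ.diagram r))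

noncomputable def isColimitExtCocone : IsColimit (hJ.extCocone r Y) :=
  haveI := hasColimitDiagram.{u, 0} hJ.diagram r
  isColimitOfPreserves ((evaluation _ _).obj Y) (colimit.isColimit _)

/-- The canonical map from `Ext^r(A/J_t, Y)` to the local cohomology of `Y`. -/
noncomputable def extToLocalCohomology (t : ℕ) :
    extQuotient J r Y t ⟶ (localCohomology I r).obj Y :=
  (hJ.extCocone r Y).ι.app (op (op t)) ≫ ((hJ.isoLocalCohomology r).app Y).hom

lemma exists_extToLocalCohomology_eq (y : (localCohomology I r).obj Y) :
    ∃ t x, hJ.extToLocalCohomology r Y t x = y := by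
  have := preservesFilteredColimitsOfSize_shrink.{0, u, 0, u} (forget (ModuleCat.{u} A))
  let e := (hJ.isoLocalCohomology r).app Y
  obtain ⟨y, rfl⟩ := (ModuleCat.epi_iff_surjective e.hom).1 inferInstance y
  obtain ⟨t, x, hx⟩ := Concrete.isColimit_exists_rep _ (hJ.isColimitExtCocone r Y) y
  exact ⟨t.unop.unop, x, congrArg e.hom hx⟩

lemma extToLocalCohomology_extQuotientMap {s t : ℕ} (h : s ≤ t) (x : extQuotient J r Y s) :
    hJ.extToLocalCohomology r Y t (hJ.extQuotientMap r Y h x) =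
      hJ.extToLocalCohomology r Y s x :=
  congrArg ((hJ.isoLocalCohomology r).app Y).hom
    (ConcreteCategory.congr_hom ((hJ.extCocone r Y).w (homOfLE h).op.op) x)

lemma exists_extQuotientMap_eq_zero {t : ℕ} (x : extQuotient J r Y t)
    (hx : hJ.extToLocalCohomology r Y t x = 0) :
    ∃ (t' : ℕ) (h : t ≤ t'), hJ.extQuotientMap r Y h x = 0 := by
  have := preservesFilteredColimitsOfSize_shrink.{0, u, 0, u} (forget (ModuleCat.{u} A))
  let e := (hJ.isoLocalCohomology r).app Y
  have hι : (hJ.extCocone r Y).ι.app (op (op t)) x = (hJ.extCocone r Y).ι.app (op (op t)) 0 :=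
    (ModuleCat.mono_iff_injective e.hom).1 inferInstance <|
      hx.trans (map_zero (hJ.extToLocalCohomology r Y t).hom).symm
  obtain ⟨t', f, _, hf⟩ :=
    Concrete.isColimit_exists_of_rep_eq _ (hJ.isColimitExtCocone r Y) _ _ hι
  exact ⟨t'.unop.unop, f.unop.unop.down.down, hf.trans (map_zero _)⟩

end IsAdicSequence

end SequentialLocalCohomology

section ModuleResolution
open CategoryTheory Limits Opposite

variable {A : Type u} [CommRing A] {M : ℕ → Type u} [∀ r, AddCommGroup (M r)]
  [∀ r, Module A (M r)] {Q : Type u} [AddCommGroup Q] [Module A Q]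

variable (A M Q) in
/-- A resolution `⋯ → M 1 → M 0 → Q → 0`, presented by linear maps. -/
structure ModuleResolution where
  /-- The differentials. -/
  d : ∀ r, M (r + 1) →ₗ[A] M r
  /-- The augmentation. -/
  aug : M 0 →ₗ[A] Q
  exact_d : ∀ r, Function.Exact (d (r + 1)) (d r)
  exact_aug : Function.Exact (d 0) aug
  aug_surjective : Function.Surjective aug

namespace ModuleResolution

variable (R : ModuleResolution A M Q)

/-- The underlying chain complex. -/
noncomputable def complex : ChainComplex (ModuleCat.{u} A) ℕ :=
  ChainComplex.of (fun r => ModuleCat.of A (M r)) (fun r => ModuleCat.ofHom (R.d r))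
    fun r => by ext x; exact (R.exact_d r).apply_apply_eq_zero x

lemma complex_d (r : ℕ) : R.complex.d (r + 1) r = ModuleCat.ofHom (R.d r) :=
  ChainComplex.of_d (fun r => ModuleCat.of A (M r)) (fun r => ModuleCat.ofHom (R.d r)) r

/-- The augmentation as a morphism of complexes. -/
noncomputable def π : R.complex ⟶ (ChainComplex.single₀ _).obj (ModuleCat.of A Q) :=
  (ChainComplex.toSingle₀Equiv R.complex (ModuleCat.of A Q)).symm
    ⟨ModuleCat.ofHom R.aug, by
      rw [complex_d]
      ext x
      exact R.exact_aug.apply_apply_eq_zero x⟩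

lemma π_f_zero : R.π.f 0 = ModuleCat.ofHom R.aug :=
  ChainComplex.toSingle₀Equiv_symm_apply_f_zero _ _

lemma quasiIsoAt_π_zero : QuasiIsoAt R.π 0 := by
  rw [ChainComplex.quasiIsoAt₀_iff, ShortComplex.quasiIso_iff_of_zeros' _ rfl rfl rfl]
  constructor
  · refine (ShortComplex.ShortExact.moduleCat_exact_iff_function_exact _).2 ?_
    change Function.Exact (R.complex.d 1 0) (R.π.f 0)
    rw [π_f_zero, complex_d]
    exact R.exact_aug
  · change Epi (R.π.f 0)
    rw [π_f_zero]
    exact (ModuleCat.epi_iff_surjective (ModuleCat.ofHom R.aug)).2 R.aug_surjective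

lemma quasiIsoAt_π_succ (r : ℕ) : QuasiIsoAt R.π (r + 1) := by
  rw [quasiIsoAt_iff_exactAt' (hL := ChainComplex.exactAt_succ_single_obj ..),
    HomologicalComplex.exactAt_iff' _ (r + 2) (r + 1) r (by simp) (by simp)]
  refine (ShortComplex.ShortExact.moduleCat_exact_iff_function_exact _).2 ?_
  change Function.Exact (R.complex.d (r + 2) (r + 1)) (R.complex.d (r + 1) r)
  rw [complex_d, complex_d]
  exact R.exact_d r

/-- A resolution by projective modules as a projective resolution in the module category. -/
noncomputable def toProjectiveResolution [∀ r, Module.Projective A (M r)] :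
    ProjectiveResolution (ModuleCat.of A Q) where
  complex := R.complex
  projective r := (IsProjective.iff_projective (R := A) (M r)).1 inferInstance
  π := R.π
  quasiIso := ⟨fun
    | 0 => R.quasiIsoAt_π_zero
    | r + 1 => R.quasiIsoAt_π_succ r⟩

variable (Y : Type u) [AddCommGroup Y] [Module A Y]

/-- The degree-`r` cocycles of the complex `Hom(M, Y)`. -/
noncomputable def cocycles (r : ℕ) : Submodule A (M r →ₗ[A] Y) :=
  LinearMap.ker (LinearMap.lcomp A Y (R.d r))

/-- The degree-`r` coboundaries of the complex `Hom(M, Y)`. -/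
noncomputable def coboundaries : ∀ r, Submodule A (M r →ₗ[A] Y)
  | 0 => ⊥
  | r + 1 => LinearMap.range (LinearMap.lcomp A Y (R.d r))

variable {Y} in
lemma comp_ofHom_eq_zero {r : ℕ} (ψ : R.cocycles Y r) :
    R.complex.d (r + 1) r ≫ ModuleCat.ofHom ψ.1 = 0 := by
  rw [complex_d]
  exact congrArg ModuleCat.ofHom ψ.2

variable [∀ r, Module.Projective A (M r)]

/-- The class in `Ext^r(Q, Y)` of a cocycle of `Hom(M, Y)`. -/
noncomputable def extClass (r : ℕ) :
    R.cocycles Y r →ₗ[A] ((Ext A (ModuleCat.{u} A) r).obj (op (ModuleCat.of A Q))).obj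
      (ModuleCat.of A Y) :=
  _root_.extClass R.toProjectiveResolution (ModuleCat.of A Y) r ∘ₗ
    { toFun := fun ψ => ⟨ModuleCat.ofHom ψ.1, R.comp_ofHom_eq_zero ψ⟩
      map_add' := fun _ _ => rfl
      map_smul' := fun _ _ => rfl }

lemma extClass_surjective (r : ℕ) : Function.Surjective (R.extClass Y r) := by
  refine (_root_.extClass_surjective R.toProjectiveResolution (ModuleCat.of A Y) r).comp ?_
  intro ψ
  refine ⟨⟨ψ.1.hom, ?_⟩, rfl⟩
  have hψ : R.complex.d (r + 1) r ≫ ψ.1 = 0 := ψ.2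
  rw [complex_d] at hψ
  exact congrArg ModuleCat.Hom.hom hψ

variable {Y} in
lemma extClass_eq_zero_iff {r : ℕ} (ψ : R.cocycles Y r) :
    R.extClass Y r ψ = 0 ↔ ψ.1 ∈ R.coboundaries Y r := by
  cases r with
  | zero =>
    refine (extClass_zero_eq_zero_iff R.toProjectiveResolution (ModuleCat.of A Y) _).trans ?_
    exact ⟨fun h => congrArg ModuleCat.Hom.hom (congrArg Subtype.val h),
      fun h => Subtype.ext (congrArg ModuleCat.ofHom h)⟩
  | succ r =>
    refine (extClass_succ_eq_zero_iff R.toProjectiveResolution (ModuleCat.of A Y) r _).trans ?_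
    change (∃ w, R.complex.d (r + 1) r ≫ w = ModuleCat.ofHom ψ.1) ↔ _
    rw [complex_d]
    exact ⟨fun ⟨w, hw⟩ => ⟨w.hom, congrArg ModuleCat.Hom.hom hw⟩,
      fun ⟨w, hw⟩ => ⟨ModuleCat.ofHom w, congrArg ModuleCat.ofHom hw⟩⟩

lemma extMap_extClass {Q' : Type u} [AddCommGroup Q'] [Module A Q'] (R' : ModuleResolution A M Q')
    (φ : ∀ r, M r →ₗ[A] M r) (hφ : ∀ r, φ r ∘ₗ R.d r = R'.d r ∘ₗ φ (r + 1)) (f : Q →ₗ[A] Q')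
    (hf : R'.aug ∘ₗ φ 0 = f ∘ₗ R.aug) (r : ℕ) (ψ : R'.cocycles Y r) (ψ' : R.cocycles Y r)
    (h : ψ'.1 = ψ.1 ∘ₗ φ r) :
    ((Ext A (ModuleCat.{u} A) r).map (ModuleCat.ofHom f).op).app (ModuleCat.of A Y)
      (R'.extClass Y r ψ) = R.extClass Y r ψ' := by
  let Φ : R.complex ⟶ R'.complex :=
    { f := fun r => ModuleCat.ofHom (φ r)
      comm' := by
        rintro _ r ⟨rfl⟩
        rw [complex_d, complex_d]
        exact congrArg ModuleCat.ofHom (hφ r).symm }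
  refine _root_.extMap_extClass (ModuleCat.ofHom f) R.toProjectiveResolution
    R'.toProjectiveResolution Φ ?_ _ r _ _ (congrArg ModuleCat.ofHom h.symm)
  change Φ.f 0 ≫ R'.π.f 0 = R.π.f 0 ≫ _
  rw [π_f_zero, π_f_zero]
  exact congrArg ModuleCat.ofHom hf

end ModuleResolution

end ModuleResolution

section ResolutionTower

/-- A presentation of `L` as the colimit of the subquotients `Z t / (Z t ⊓ B t)` of a fixed module
`V` along transition maps `τ t t'` for `t ≤ t'`. -/
structure SubquotientColimit {A : Type*} [CommRing A] {V : Type*} [AddCommGroup V] [Module A V]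
    (Z B : ℕ → Submodule A V) (τ : ℕ → ℕ → V →ₗ[A] V)
    (L : Type*) [AddCommGroup L] [Module A L] where
  /-- The class in the colimit of an element of the `t`-th subquotient. -/
  toColimit : ∀ t, Z t →ₗ[A] L
  exists_rep : ∀ y, ∃ t x, toColimit t x = y
  toColimit_trans : ∀ {t t'}, t ≤ t' → ∀ (x : Z t) (x' : Z t'), x'.1 = τ t t' x →
    toColimit t' x' = toColimit t x
  toColimit_eq_zero_iff : ∀ {t} (x : Z t), toColimit t x = 0 ↔ ∃ t' ≥ t, τ t t' x ∈ B t'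

variable {A : Type u} [CommRing A] {I : Ideal A} {J : ℕ → Ideal A} (hJ : IsAdicSequence I J)
  {M : ℕ → Type u} [∀ r, AddCommGroup (M r)] [∀ r, Module A (M r)]

variable (M) in
/-- Resolutions of the quotients `A ⧸ J t` by the same modules `M r`, with transition maps lifting
the projections `A ⧸ J t' → A ⧸ J t`. -/
structure ResolutionTower (hJ : IsAdicSequence I J) where
  /-- The resolution of `A ⧸ J t`. -/
  res : ∀ t, ModuleResolution A M (A ⧸ J t)
  /-- The transition maps from the `t'`-th to the `t`-th resolution. -/
  trans : ∀ (_t _t' : ℕ) r, M r →ₗ[A] M r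
  trans_comp_d : ∀ {t t'}, t ≤ t' → ∀ r,
    trans t t' r ∘ₗ (res t').d r = (res t).d r ∘ₗ trans t t' (r + 1)
  aug_comp_trans : ∀ {t t'} (h : t ≤ t'), (res t).aug ∘ₗ trans t t' 0 =
    Submodule.mapQ (J t') (J t) LinearMap.id (hJ.antitone h) ∘ₗ (res t').aug

namespace ResolutionTower

variable {hJ} (T : ResolutionTower M hJ)

lemma comp_trans_mem_cocycles {t t' : ℕ} (h : t ≤ t') {Y : Type u} [AddCommGroup Y] [Module A Y]
    {r : ℕ} (ψ : (T.res t).cocycles Y r) : ψ.1 ∘ₗ T.trans t t' r ∈ (T.res t').cocycles Y r := by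
  have hψ : ψ.1 ∘ₗ (T.res t).d r = 0 := ψ.2
  change (ψ.1 ∘ₗ T.trans t t' r) ∘ₗ (T.res t').d r = 0
  rw [LinearMap.comp_assoc, T.trans_comp_d h, ← LinearMap.comp_assoc, hψ, LinearMap.zero_comp]

variable [IsNoetherianRing A] [∀ r, Module.Projective A (M r)]

/-- Local cohomology as the colimit of the cohomology modules of `Hom(M, Y)` for the differentials
of a tower of projective resolutions. -/
noncomputable def subquotientColimit (r : ℕ) (Y : Type u) [AddCommGroup Y] [Module A Y] :
    SubquotientColimit (fun t => (T.res t).cocycles Y r) (fun t => (T.res t).coboundaries Y r)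
      (fun t t' => LinearMap.lcomp A Y (T.trans t t' r))
      ((localCohomology I r).obj (ModuleCat.of A Y)) where
  toColimit t := (hJ.extToLocalCohomology r (ModuleCat.of A Y) t).hom ∘ₗ (T.res t).extClass Y r
  exists_rep y := by
    obtain ⟨t, x, rfl⟩ := hJ.exists_extToLocalCohomology_eq r (ModuleCat.of A Y) y
    obtain ⟨ψ, rfl⟩ := (T.res t).extClass_surjective Y r x
    exact ⟨t, ψ, rfl⟩
  toColimit_trans {t t'} h ψ ψ' hψ := by
    have class_eq : hJ.extQuotientMap r (ModuleCat.of A Y) h ((T.res t).extClass Y r ψ) =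
        (T.res t').extClass Y r ψ' :=
      (T.res t').extMap_extClass Y (T.res t) _ (T.trans_comp_d h) _ (T.aug_comp_trans h) r ψ ψ' hψ
    exact (congrArg (hJ.extToLocalCohomology r (ModuleCat.of A Y) t') class_eq).symm.trans
      (hJ.extToLocalCohomology_extQuotientMap r _ h _)
  toColimit_eq_zero_iff {t} ψ := by
    have class_eq {t' : ℕ} (h : t ≤ t') :
        hJ.extQuotientMap r (ModuleCat.of A Y) h ((T.res t).extClass Y r ψ) =
          (T.res t').extClass Y r ⟨_, T.comp_trans_mem_cocycles h ψ⟩ :=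
      (T.res t').extMap_extClass Y (T.res t) _ (T.trans_comp_d h) _ (T.aug_comp_trans h) r ψ _ rfl
    constructor
    · intro h
      obtain ⟨t', htt', hx⟩ := hJ.exists_extQuotientMap_eq_zero r (ModuleCat.of A Y) _ h
      exact ⟨t', htt', ((T.res t').extClass_eq_zero_iff _).1 ((class_eq htt').symm.trans hx)⟩
    · rintro ⟨t', htt', hx⟩
      have class_eq_zero := (class_eq htt').trans (((T.res t').extClass_eq_zero_iff _).2 hx)
      refine (hJ.extToLocalCohomology_extQuotientMap r _ htt' _).symm.trans ?_
      exact (congrArg (hJ.extToLocalCohomology r (ModuleCat.of A Y) t') class_eq_zero).trans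
        (map_zero (hJ.extToLocalCohomology r (ModuleCat.of A Y) t').hom)

end ResolutionTower

end ResolutionTower

section TupleChains

lemma sum_neg_one_pow_smul_succAbove_comp_succAbove {A M : Type*} [Ring A] [AddCommGroup M]
    [Module A M] {r : ℕ} (f : (Fin r → Fin (r + 2)) → M) :
    ∑ i : Fin (r + 2), ∑ j : Fin (r + 1),
      (-1 : A) ^ (i : ℕ) • (-1 : A) ^ (j : ℕ) • f (i.succAbove ∘ j.succAbove) = 0 := by
  simp only [smul_smul, ← pow_add]
  rw [← Fintype.sum_prod_type']
  refine Finset.sum_involution (fun p _ => (p.1.succAbove p.2, p.2.predAbove p.1))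
    (fun p _ => ?_) (fun p _ _ h => Fin.succAbove_ne p.1 p.2 (congrArg Prod.fst h))
    (fun _ _ => Finset.mem_univ _)
    (fun p _ =>
      Prod.ext (Fin.succAbove_succAbove_predAbove ..) (Fin.predAbove_predAbove_succAbove ..))
  rw [Fin.neg_one_pow_succAbove_add_predAbove, neg_smul,
    show (p.1.succAbove p.2).succAbove ∘ (p.2.predAbove p.1).succAbove =
      p.1.succAbove ∘ p.2.succAbove from
    funext fun l => Fin.succAbove_succAbove_succAbove_predAbove ..]
  exact add_neg_cancel _

lemma cons_comp_succ_succAbove {X : Type*} {r : ℕ} (T : Fin (r + 1) → X) (s : X)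
    (i : Fin (r + 1)) :
    (Fin.cons s T : Fin (r + 2) → X) ∘ i.succ.succAbove = Fin.cons s (T ∘ i.succAbove) := by
  funext l
  refine Fin.cases ?_ (fun l => ?_) l <;> simp

lemma cons_comp_zero_succAbove {X : Type*} {r : ℕ} (T : Fin r → X) (s : X) :
    (Fin.cons s T : Fin (r + 1) → X) ∘ (0 : Fin (r + 1)).succAbove = T := by
  funext l
  simp

variable {A X M : Type*} [CommRing A] [AddCommGroup M] [Module A M]

variable (A X M) in
/-- The simplicial boundary on (not necessarily injective) tuples in `X`, with coefficients
in `M`. -/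
noncomputable def tupleBoundary (r : ℕ) : ((Fin (r + 1) → X) →₀ M) →ₗ[A] ((Fin r → X) →₀ M) :=
  Finsupp.lsum ℕ fun T => ∑ i : Fin (r + 1),
    (-1 : ℤ) ^ (i : ℕ) • Finsupp.lsingle (T ∘ i.succAbove)

lemma tupleBoundary_single (r : ℕ) (T : Fin (r + 1) → X) (a : M) :
    tupleBoundary A X M r (Finsupp.single T a) =
      ∑ i : Fin (r + 1), (-1 : ℤ) ^ (i : ℕ) • Finsupp.single (T ∘ i.succAbove) a := by
  simp [tupleBoundary]

lemma tupleBoundary_tupleBoundary (r : ℕ) (x : (Fin (r + 2) → X) →₀ M) :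
    tupleBoundary A X M r (tupleBoundary A X M (r + 1) x) = 0 := by
  suffices tupleBoundary A X M r ∘ₗ tupleBoundary A X M (r + 1) = 0 from
    DFunLike.congr_fun this x
  ext T a : 2
  simp only [LinearMap.comp_apply, Finsupp.lsingle_apply, tupleBoundary_single, map_sum,
    map_zsmul, Finset.smul_sum, LinearMap.zero_apply]
  exact sum_neg_one_pow_smul_succAbove_comp_succAbove fun c => Finsupp.single (T ∘ c) a

/-- Prepending `s` to tuples while applying `f` to the coefficients. -/
noncomputable def prepend (s : X) (f : M →ₗ[A] M) (r : ℕ) :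
    ((Fin r → X) →₀ M) →ₗ[A] ((Fin (r + 1) → X) →₀ M) :=
  Finsupp.lsum ℕ fun T => Finsupp.lsingle (Fin.cons s T) ∘ₗ f

lemma prepend_single (s : X) (f : M →ₗ[A] M) (r : ℕ) (T : Fin r → X) (a : M) :
    prepend s f r (Finsupp.single T a) = Finsupp.single (Fin.cons s T) (f a) := by
  simp [prepend]

lemma prepend_apply_cons [DecidableEq X] (s s' : X) (f : M →ₗ[A] M) (r : ℕ)
    (x : (Fin r → X) →₀ M) (T : Fin r → X) :
    prepend s f r x (Fin.cons s' T) = if s = s' then f (x T) else 0 := by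
  induction x using Finsupp.induction_linear with
  | zero => simp
  | add x y hx hy =>
    rw [map_add, Finsupp.add_apply, hx, hy, Finsupp.add_apply, map_add]
    split_ifs <;> simp
  | single T' a =>
    classical
    simp only [prepend_single, Finsupp.single_apply, Fin.cons_inj]
    split_ifs <;> simp_all

lemma tupleBoundary_prepend (s : X) (f : M →ₗ[A] M) (r : ℕ) (x : (Fin (r + 1) → X) →₀ M) :
    tupleBoundary A X M (r + 1) (prepend s f (r + 1) x) =
      Finsupp.mapRange.linearMap f x - prepend s f r (tupleBoundary A X M r x) := by
  suffices tupleBoundary A X M (r + 1) ∘ₗ prepend s f (r + 1) =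
      Finsupp.mapRange.linearMap f - prepend s f r ∘ₗ tupleBoundary A X M r from
    DFunLike.congr_fun this x
  ext T a : 2
  simp only [LinearMap.comp_apply, Finsupp.lsingle_apply, LinearMap.sub_apply, prepend_single,
    tupleBoundary_single, map_sum, map_zsmul, Finsupp.mapRange.linearMap_apply,
    Finsupp.mapRange_single]
  rw [Fin.sum_univ_succ, cons_comp_zero_succAbove, sub_eq_add_neg, ← Finset.sum_neg_distrib]
  refine congrArg₂ _ (by simp) (Finset.sum_congr rfl fun i _ => ?_)
  rw [cons_comp_succ_succAbove, Fin.val_succ, pow_succ, mul_neg_one, neg_smul]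

end TupleChains

section MonomialPow

variable {σ k : Type*} [CommRing k]

/-- The exponent vector with entries `t` on `U` and `0` elsewhere. -/
noncomputable def expPow (t : ℕ) (U : Finset σ) : σ →₀ ℕ := Finsupp.indicator U fun _ _ => t

lemma expPow_le_iff {t : ℕ} {U : Finset σ} {e : σ →₀ ℕ} : expPow t U ≤ e ↔ ∀ i ∈ U, t ≤ e i := by
  classical
  refine forall_congr' fun i => ?_
  by_cases hi : i ∈ U <;> simp [expPow, Finsupp.indicator_apply, hi]

variable (k) in
/-- The monomial `∏_{i ∈ U} xᵢᵗ`. -/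
noncomputable def monomialPow (t : ℕ) (U : Finset σ) : MvPolynomial σ k := monomial (expPow t U) 1

lemma prod_X_pow_eq_monomialPow (t : ℕ) (U : Finset σ) :
    (∏ i ∈ U, (X i : MvPolynomial σ k)) ^ t = monomialPow k t U := by
  rw [← Finset.prod_pow, monomialPow, expPow, Finsupp.indicator_eq_sum_single, monomial_sum_one]
  exact Finset.prod_congr rfl fun i _ => X_pow_eq_monomial

lemma monomialPow_add (t t' : ℕ) (U : Finset σ) :
    monomialPow k (t + t') U = monomialPow k t U * monomialPow k t' U := by
  simp only [← prod_X_pow_eq_monomialPow, pow_add]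

lemma monomialPow_empty (t : ℕ) : monomialPow k t (∅ : Finset σ) = 1 := by
  simp [← prod_X_pow_eq_monomialPow]

lemma monomialPow_sdiff_mul [DecidableEq σ] (t : ℕ) {U V : Finset σ} (h : U ⊆ V) :
    monomialPow k t (V \ U) * monomialPow k t U = monomialPow k t V := by
  simp only [← prod_X_pow_eq_monomialPow, ← mul_pow, Finset.prod_sdiff h]

lemma monomialPow_mul_injective (t : ℕ) (U : Finset σ) :
    Function.Injective (monomialPow k t U * ·) := fun a b h => by
  ext e
  simpa [monomialPow, coeff_monomial_mul] using congrArg (coeff (expPow t U + e)) h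

lemma monomialPow_dvd_iff {t : ℕ} {U : Finset σ} {a : MvPolynomial σ k} :
    monomialPow k t U ∣ a ↔ ∀ e ∈ a.support, ∀ i ∈ U, t ≤ e i := by
  simp only [monomialPow, monomial_one_dvd_iff_modMonomial_eq_zero, ← expPow_le_iff]
  refine ⟨fun h e he => by_contra fun hle => mem_support_iff.1 he ?_, fun h => ?_⟩
  · rw [← coeff_modMonomial_of_not_le a hle, h, coeff_zero]
  · ext e
    by_cases hle : expPow t U ≤ e
    · rw [coeff_modMonomial_of_le a hle, coeff_zero]
    · rw [coeff_modMonomial_of_not_le a hle, coeff_zero]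
      exact notMem_support_iff.1 fun he => hle (h e he)

open Classical in
/-- The projection of a polynomial onto the span of the monomials whose exponents satisfy `p`. -/
noncomputable def filterMonomials (p : (σ →₀ ℕ) → Prop) :
    MvPolynomial σ k →ₗ[k] MvPolynomial σ k :=
  (basisMonomials σ k).constr k fun e => if p e then monomial e 1 else 0

lemma coeff_filterMonomials (p : (σ →₀ ℕ) → Prop) [DecidablePred p] (a : MvPolynomial σ k)
    (e : σ →₀ ℕ) :
    coeff e (filterMonomials p a) = if p e then coeff e a else 0 := by
  classical
  suffices lcoeff k e ∘ₗ filterMonomials p = if p e then lcoeff k e else 0 by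
    have := DFunLike.congr_fun this a
    split_ifs at this ⊢ <;> exact this
  refine (basisMonomials σ k).ext fun e' => ?_
  rw [LinearMap.comp_apply, filterMonomials, Module.Basis.constr_basis, coe_basisMonomials]
  by_cases h : e' = e
  · subst h
    split_ifs <;> simp
  · split_ifs <;> simp [coeff_monomial, h]

/-- Assigning to each exponent one of the monomials `monomialPow k t (u s)` below it decomposes
the polynomials in the ideal generated by these monomials. -/
lemma exists_monomialPow_decomposition [DecidableEq σ] {ι : Type*} [Fintype ι] (u : ι → Finset σ)
    (t : ℕ) : ∃ π : ι → MvPolynomial σ k →ₗ[k] MvPolynomial σ k,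
      (∀ s V a, monomialPow k t V ∣ a → monomialPow k t (u s ∪ V) ∣ π s a) ∧
      ∀ s a, monomialPow k t (u s) ∣ a → ∑ s', π s' a = a := by
  classical
  refine ⟨fun s => filterMonomials fun e => ∃ h : (∃ s, expPow t (u s) ≤ e), h.choose = s,
    fun s V a ha => monomialPow_dvd_iff.2 fun e he i hi => ?_, fun s a ha => ?_⟩
  · rw [mem_support_iff, coeff_filterMonomials, ne_eq, ite_eq_right_iff, Classical.not_imp] at he
    obtain ⟨⟨h, rfl⟩, he⟩ := he
    rcases Finset.mem_union.1 hi with hi | hi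
    · exact expPow_le_iff.1 h.choose_spec i hi
    · exact monomialPow_dvd_iff.1 ha e (mem_support_iff.2 he) i hi
  · ext e
    simp only [coeff_sum, coeff_filterMonomials]
    by_cases he : e ∈ a.support
    · have h : ∃ s, expPow t (u s) ≤ e := ⟨s, expPow_le_iff.2 (monomialPow_dvd_iff.1 ha e he)⟩
      simp [h]
    · simp [notMem_support_iff.1 he]

end MonomialPow

section MonomialPowIdeal

variable {σ k ι : Type*} [CommRing k]

variable (k) in
/-- The squarefree monomial ideal generated by the products of the variables in the members of `u`:
the edge ideal of the hypergraph with edges `u s`. -/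
noncomputable def edgeIdeal (u : ι → Finset σ) : Ideal (MvPolynomial σ k) :=
  Ideal.span (Set.range fun s => ∏ i ∈ u s, X i)

variable (k) in
/-- The ideal generated by the monomials `monomialPow k t (u s)`. -/
noncomputable def monomialPowIdeal (u : ι → Finset σ) (t : ℕ) : Ideal (MvPolynomial σ k) :=
  Ideal.span (Set.range fun s => monomialPow k t (u s))

variable {u : ι → Finset σ}

lemma monomialPowIdeal_antitone : Antitone (monomialPowIdeal k u) := fun t t' h =>
  Ideal.span_le.2 <| Set.range_subset_iff.2 fun s => by
    rw [← Nat.add_sub_cancel' h, monomialPow_add]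
    exact Ideal.mul_mem_right _ _ (Ideal.subset_span ⟨s, rfl⟩)

lemma isAdicSequence_monomialPowIdeal :
    IsAdicSequence (edgeIdeal k u) (monomialPowIdeal k u) where
  antitone := monomialPowIdeal_antitone
  le_radical t := Ideal.span_le.2 <| Set.range_subset_iff.2 fun s =>
    ⟨t, by
      rw [prod_X_pow_eq_monomialPow]
      exact Ideal.subset_span ⟨s, rfl⟩⟩
  exists_le_pow N := by
    refine ⟨N, Ideal.span_le.2 <| Set.range_subset_iff.2 fun s => ?_⟩
    rw [← prod_X_pow_eq_monomialPow]
    exact Ideal.pow_mem_pow (Ideal.subset_span (Set.mem_range_self s)) N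

end MonomialPowIdeal

section TupleUnion

variable {σ ι : Type*} [DecidableEq σ]

/-- The union of the members of the family `u` listed by a tuple of indices. -/
def tupleUnion (u : ι → Finset σ) {r : ℕ} (T : Fin r → ι) : Finset σ :=
  Finset.univ.biUnion fun i => u (T i)

variable {u : ι → Finset σ} {r : ℕ}

lemma mem_tupleUnion {T : Fin r → ι} {j : σ} : j ∈ tupleUnion u T ↔ ∃ i, j ∈ u (T i) := by
  simp [tupleUnion]

lemma subset_tupleUnion (T : Fin r → ι) (i : Fin r) : u (T i) ⊆ tupleUnion u T :=
  Finset.subset_biUnion_of_mem (fun i => u (T i)) (Finset.mem_univ i)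

lemma tupleUnion_cons (T : Fin r → ι) (s : ι) :
    tupleUnion u (Fin.cons s T : Fin (r + 1) → ι) = u s ∪ tupleUnion u T := by
  ext j
  simp [mem_tupleUnion, Fin.exists_fin_succ]

lemma tupleUnion_comp_subset {m : ℕ} (T : Fin r → ι) (c : Fin m → Fin r) :
    tupleUnion u (T ∘ c) ⊆ tupleUnion u T :=
  Finset.biUnion_subset.2 fun i _ => subset_tupleUnion T (c i)

end TupleUnion

section TaylorResolution

variable {σ ι k : Type u} [CommRing k] [DecidableEq σ] (u : ι → Finset σ)

variable (k) in
/-- The differential of the Taylor-type complex of the monomials `monomialPow k t (u s)`, built on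
all tuples of indices. -/
noncomputable def taylorBoundary (t r : ℕ) :
    ((Fin (r + 1) → ι) →₀ MvPolynomial σ k) →ₗ[MvPolynomial σ k]
      ((Fin r → ι) →₀ MvPolynomial σ k) :=
  Finsupp.lsum ℕ fun T => ∑ i : Fin (r + 1),
    ((-1) ^ (i : ℕ) * monomialPow k t (tupleUnion u T \ tupleUnion u (T ∘ i.succAbove))) •
      Finsupp.lsingle (T ∘ i.succAbove)

variable (k) in
/-- Multiplication of the coefficient of each tuple `T` by `monomialPow k t (tupleUnion u T)`. -/
noncomputable def taylorScale (t r : ℕ) : ((Fin r → ι) →₀ MvPolynomial σ k) →ₗ[MvPolynomial σ k]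
    ((Fin r → ι) →₀ MvPolynomial σ k) :=
  Finsupp.lsum ℕ fun T => monomialPow k t (tupleUnion u T) • Finsupp.lsingle T

variable {u}

lemma taylorBoundary_single (t r : ℕ) (T : Fin (r + 1) → ι) (a : MvPolynomial σ k) :
    taylorBoundary k u t r (Finsupp.single T a) = ∑ i : Fin (r + 1),
      Finsupp.single (T ∘ i.succAbove) ((-1) ^ (i : ℕ) *
        monomialPow k t (tupleUnion u T \ tupleUnion u (T ∘ i.succAbove)) * a) := by
  simp [taylorBoundary]

lemma taylorScale_single (t r : ℕ) (T : Fin r → ι) (a : MvPolynomial σ k) :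
    taylorScale k u t r (Finsupp.single T a) =
      Finsupp.single T (monomialPow k t (tupleUnion u T) * a) := by
  simp [taylorScale]

lemma taylorScale_apply (t r : ℕ) (x : (Fin r → ι) →₀ MvPolynomial σ k) (T : Fin r → ι) :
    taylorScale k u t r x T = monomialPow k t (tupleUnion u T) * x T := by
  classical
  induction x using Finsupp.induction_linear with
  | zero => simp
  | add x y hx hy => rw [map_add, Finsupp.add_apply, hx, hy, Finsupp.add_apply, mul_add]
  | single T' a =>
    rw [taylorScale_single]
    obtain rfl | h := eq_or_ne T' T
    · simp
    · simp [h.symm]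

lemma taylorScale_injective (t r : ℕ) : Function.Injective (taylorScale k u t r) := fun x y h =>
  Finsupp.ext fun T => monomialPow_mul_injective t (tupleUnion u T) <| by
    simpa only [taylorScale_apply] using DFunLike.congr_fun h T

lemma taylorScale_taylorScale (t t' r : ℕ) (x : (Fin r → ι) →₀ MvPolynomial σ k) :
    taylorScale k u t r (taylorScale k u t' r x) = taylorScale k u (t + t') r x := by
  ext1 T
  simp only [taylorScale_apply, monomialPow_add, mul_assoc]

lemma taylorScale_zero (t : ℕ) : taylorScale k u t 0 = LinearMap.id := by
  ext1 T
  rw [Subsingleton.elim T default]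
  ext1
  simp [taylorScale_single, tupleUnion, monomialPow_empty]

/-- Rescaling turns the weighted boundary into the plain one, whose homology is elementary. -/
lemma taylorScale_taylorBoundary (t r : ℕ) (x : (Fin (r + 1) → ι) →₀ MvPolynomial σ k) :
    taylorScale k u t r (taylorBoundary k u t r x) =
      tupleBoundary k ι (MvPolynomial σ k) r (taylorScale k u t (r + 1) x) := by
  induction x using Finsupp.induction_linear with
  | zero => simp
  | add x y hx hy => simp only [map_add, hx, hy]
  | single T a =>
    rw [taylorBoundary_single, taylorScale_single, tupleBoundary_single, map_sum]
    refine Finset.sum_congr rfl fun i _ => ?_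
    rw [taylorScale_single, ← monomialPow_sdiff_mul t (tupleUnion_comp_subset T i.succAbove),
      Finsupp.smul_single, zsmul_eq_mul]
    congr 1
    push_cast
    ring

lemma taylorBoundary_taylorBoundary (t r : ℕ) (x : (Fin (r + 2) → ι) →₀ MvPolynomial σ k) :
    taylorBoundary k u t r (taylorBoundary k u t (r + 1) x) = 0 := by
  apply taylorScale_injective t
  rw [taylorScale_taylorBoundary, taylorScale_taylorBoundary, tupleBoundary_tupleBoundary, map_zero]

lemma taylorScale_sub_taylorBoundary {t t' : ℕ} (h : t ≤ t') (r : ℕ)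
    (x : (Fin (r + 1) → ι) →₀ MvPolynomial σ k) :
    taylorScale k u (t' - t) r (taylorBoundary k u t' r x) =
      taylorBoundary k u t r (taylorScale k u (t' - t) (r + 1) x) := by
  apply taylorScale_injective t
  rw [taylorScale_taylorScale, taylorScale_taylorBoundary, taylorScale_taylorScale,
    Nat.add_sub_cancel' h, taylorScale_taylorBoundary]

variable (k u) in
/-- The augmentation of the Taylor-type complex. -/
noncomputable def taylorAugmentation (t : ℕ) :
    ((Fin 0 → ι) →₀ MvPolynomial σ k) →ₗ[MvPolynomial σ k]
      MvPolynomial σ k ⧸ monomialPowIdeal k u t :=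
  (monomialPowIdeal k u t).mkQ ∘ₗ Finsupp.lapply default

lemma taylorBoundary_zero_single (t : ℕ) (T : Fin 1 → ι) (a : MvPolynomial σ k) :
    taylorBoundary k u t 0 (Finsupp.single T a) =
      Finsupp.single default (monomialPow k t (u (T 0)) * a) := by
  have hT : tupleUnion u T \ tupleUnion u (T ∘ (0 : Fin 1).succAbove) = u (T 0) := by
    ext j
    simp [mem_tupleUnion]
  rw [taylorBoundary_single, Fin.sum_univ_one, hT, Subsingleton.elim (T ∘ _) default]
  simp

lemma taylorBoundary_exact_taylorAugmentation (t : ℕ) :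
    Function.Exact (taylorBoundary k u t 0) (taylorAugmentation k u t) := by
  refine fun x => ⟨fun hx => ?_, ?_⟩
  · have hle : monomialPowIdeal k u t ≤
        (LinearMap.range (taylorBoundary k u t 0)).map (Finsupp.lapply default) :=
      Ideal.span_le.2 <| Set.range_subset_iff.2 fun s =>
        ⟨_, ⟨Finsupp.single (fun _ => s) 1, rfl⟩, by simp [taylorBoundary_zero_single]⟩
    obtain ⟨_, ⟨y, rfl⟩, hy⟩ := hle ((Submodule.Quotient.mk_eq_zero _).1 hx)
    exact ⟨y, Finsupp.ext fun T => Subsingleton.elim default T ▸ hy⟩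
  · rintro ⟨y, rfl⟩
    suffices taylorAugmentation k u t ∘ₗ taylorBoundary k u t 0 = 0 from DFunLike.congr_fun this y
    ext T
    simp only [LinearMap.comp_apply, Finsupp.lsingle_apply, taylorBoundary_zero_single,
      taylorAugmentation, Finsupp.lapply_apply, Finsupp.single_eq_same, LinearMap.zero_apply]
    exact (Submodule.Quotient.mk_eq_zero _).2
      (Ideal.mul_mem_right _ _ (Ideal.subset_span ⟨T 0, rfl⟩))

variable [Finite ι]

lemma mem_range_taylorScale_of_dvd {t r : ℕ} {z : (Fin r → ι) →₀ MvPolynomial σ k}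
    (h : ∀ T, monomialPow k t (tupleUnion u T) ∣ z T) : ∃ y, taylorScale k u t r y = z := by
  cases nonempty_fintype ι
  choose y hy using h
  refine ⟨Finsupp.equivFunOnFinite.symm y, Finsupp.ext fun T => ?_⟩
  rw [taylorScale_apply, hy]
  rfl

lemma exists_taylorBoundary_eq (t r : ℕ) {x : (Fin (r + 1) → ι) →₀ MvPolynomial σ k}
    (hx : taylorBoundary k u t r x = 0) : ∃ y, taylorBoundary k u t (r + 1) y = x := by
  classical
  cases nonempty_fintype ι
  obtain ⟨π, hπ_dvd, hπ_sum⟩ := exists_monomialPow_decomposition (k := k) u t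
  have hdvd (T) : monomialPow k t (tupleUnion u T) ∣ taylorScale k u t (r + 1) x T :=
    taylorScale_apply t (r + 1) x T ▸ dvd_mul_right _ _
  let z := ∑ s, prepend s (π s) (r + 1) (taylorScale k u t (r + 1) x)
  have hz : tupleBoundary k ι _ (r + 1) z = taylorScale k u t (r + 1) x := by
    simp only [z, map_sum, tupleBoundary_prepend, ← taylorScale_taylorBoundary, hx, map_zero,
      sub_zero]
    ext1 T
    rw [Finsupp.finsetSum_apply]
    refine hπ_sum (T 0) _ (Dvd.dvd.trans ?_ (hdvd T))
    exact ⟨_, (monomialPow_sdiff_mul t (subset_tupleUnion T 0)).symm.trans (mul_comm _ _)⟩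
  have hz_dvd (T) : monomialPow k t (tupleUnion u T) ∣ z T := by
    obtain ⟨s, T, rfl⟩ : ∃ s T', T = Fin.cons s T' := ⟨_, _, (Fin.cons_self_tail T).symm⟩
    have : z (Fin.cons s T) = π s (taylorScale k u t (r + 1) x T) := by
      simp [z, Finsupp.finsetSum_apply, prepend_apply_cons]
    rw [this, tupleUnion_cons]
    exact hπ_dvd s _ _ (hdvd _)
  obtain ⟨y, hy⟩ := mem_range_taylorScale_of_dvd hz_dvd
  refine ⟨y, taylorScale_injective (u := u) t _ ?_⟩
  rw [taylorScale_taylorBoundary, hy, hz]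

variable (k u) in
/-- The Taylor-type resolution of `R ⧸ monomialPowIdeal k u t`. -/
noncomputable def taylorResolution (t : ℕ) :
    ModuleResolution (MvPolynomial σ k) (fun r => (Fin r → ι) →₀ MvPolynomial σ k)
      (MvPolynomial σ k ⧸ monomialPowIdeal k u t) where
  d := taylorBoundary k u t
  aug := taylorAugmentation k u t
  exact_d r _ :=
    ⟨exists_taylorBoundary_eq t r, fun ⟨y, hy⟩ => hy ▸ taylorBoundary_taylorBoundary t r y⟩
  exact_aug := taylorBoundary_exact_taylorAugmentation t
  aug_surjective :=
    (Submodule.mkQ_surjective _).comp fun a => ⟨Finsupp.single default a, by simp⟩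

variable (k u) in
/-- The Taylor-type resolutions for varying exponents, connected by the rescaling maps. -/
noncomputable def taylorTower : ResolutionTower (fun r => (Fin r → ι) →₀ MvPolynomial σ k)
    (isAdicSequence_monomialPowIdeal (k := k) (u := u)) where
  res := taylorResolution k u
  trans t t' r := taylorScale k u (t' - t) r
  trans_comp_d h r := LinearMap.ext fun x => taylorScale_sub_taylorBoundary h r x
  aug_comp_trans h := by
    rw [taylorScale_zero]
    rfl

end TaylorResolution

section Subquotient

variable {A V W W' : Type*} [Ring A] [AddCommGroup V] [Module A V] [AddCommGroup W] [Module A W]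
  [AddCommGroup W'] [Module A W']

/-- The quotient of `Z` by the part of `B` contained in it. -/
abbrev Subquotient (Z B : Submodule A V) : Type _ := Z ⧸ B.submoduleOf Z

lemma finrank_subquotient_eq_zero [Nontrivial A] {Z B : Submodule A V} (h : Z ≤ B) :
    Module.finrank A (Subquotient Z B) = 0 := by
  have : Subsingleton (Subquotient Z B) := by
    rw [Submodule.Quotient.subsingleton_iff, Submodule.submoduleOf_eq_top]
    exact h
  exact Module.finrank_zero_of_subsingleton

lemma nonempty_subquotient_equiv_map (f : V →ₗ[A] W) {Z B : Submodule A V} (hB : B ≤ Z)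
    (hker : Z ⊓ LinearMap.ker f ≤ B) :
    Nonempty (Subquotient Z B ≃ₗ[A] Subquotient (Z.map f) (B.map f)) := by
  let g : Z →ₗ[A] Subquotient (Z.map f) (B.map f) :=
    Submodule.mkQ _ ∘ₗ f.restrict fun _ hx => Submodule.mem_map_of_mem hx
  have g_surjective : Function.Surjective g := by
    refine (Submodule.mkQ_surjective _).comp ?_
    rintro ⟨_, x, hx, rfl⟩
    exact ⟨⟨x, hx⟩, rfl⟩
  have ker_g : LinearMap.ker g = B.submoduleOf Z := by
    ext x
    rw [LinearMap.mem_ker, LinearMap.comp_apply, Submodule.mkQ_apply,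
      Submodule.Quotient.mk_eq_zero]
    refine ⟨fun ⟨y, hy, hxy⟩ => ?_, fun hx => ⟨x, hx, rfl⟩⟩
    have hsub : (x : V) - y ∈ B :=
      hker ⟨Z.sub_mem x.2 (hB hy), LinearMap.sub_mem_ker_iff.2 hxy.symm⟩
    exact (B.sub_mem_iff_left hy).1 hsub
  exact ⟨(Submodule.quotEquivOfEq _ _ ker_g.symm).trans (g.quotKerEquivOfSurjective g_surjective)⟩

lemma nonempty_subquotient_equiv_map_of_injective {f : V →ₗ[A] W} (hf : Function.Injective f)
    {Z B : Submodule A V} (hB : B ≤ Z) :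
    Nonempty (Subquotient Z B ≃ₗ[A] Subquotient (Z.map f) (B.map f)) :=
  nonempty_subquotient_equiv_map f hB (by simp [LinearMap.ker_eq_bot.2 hf])

lemma nonempty_subquotient_map_equiv_map (f : V →ₗ[A] W) (g : V →ₗ[A] W') {D Z : Submodule A V}
    (hZ : Z ≤ D) (hf : D ⊓ LinearMap.ker f ≤ Z) (hg : D ⊓ LinearMap.ker g ≤ Z) :
    Nonempty (Subquotient (Z.map f) ((D ⊓ LinearMap.ker g).map f) ≃ₗ[A]
      Subquotient (Z.map g) ((D ⊓ LinearMap.ker f).map g)) := by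
  obtain ⟨ef⟩ := nonempty_subquotient_equiv_map f (sup_le hf hg)
    ((inf_le_inf_right _ hZ).trans le_sup_left)
  obtain ⟨eg⟩ := nonempty_subquotient_equiv_map g (sup_le hf hg)
    ((inf_le_inf_right _ hZ).trans le_sup_right)
  rw [Submodule.map_sup, LinearMap.le_ker_iff_map.1 inf_le_right, bot_sup_eq] at ef
  rw [Submodule.map_sup, LinearMap.le_ker_iff_map.1 inf_le_right, sup_bot_eq] at eg
  exact ⟨ef.symm.trans eg⟩

lemma map_inf_ker_of_comp_eq {V' : Type*} [AddCommGroup V'] [Module A V'] {e : V →ₗ[A] W}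
    {e' : V' →ₗ[A] W'} (he' : Function.Injective e') {d : V →ₗ[A] V'} {d' : W →ₗ[A] W'}
    (h : ∀ x, d' (e x) = e' (d x)) (C : Submodule A V) :
    (C ⊓ LinearMap.ker d).map e = C.map e ⊓ LinearMap.ker d' := by
  have mem_ker_iff (x : V) : e x ∈ LinearMap.ker d' ↔ x ∈ LinearMap.ker d := by
    rw [LinearMap.mem_ker, h, map_eq_zero_iff e' he', LinearMap.mem_ker]
  ext y
  constructor
  · rintro ⟨x, ⟨hx, hdx⟩, rfl⟩
    exact ⟨⟨x, hx, rfl⟩, (mem_ker_iff x).2 hdx⟩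
  · rintro ⟨⟨x, hx, rfl⟩, hdx⟩
    exact ⟨x, ⟨hx, (mem_ker_iff x).1 hdx⟩, rfl⟩

end Subquotient

section DegreewiseDescription

variable (k : Type*) {A V W D : Type*} [CommRing k] [CommRing A] [AddCommGroup V] [AddCommGroup W]
  [Module A V] [Module k V] [Module k W]

/-- A description of a system of subquotients `Z t ⧸ B t` by homogeneous components: elements of `V`
at stage `t` have components in `W`, finitely many of them nonzero, and the subquotient of `W`
in degree `b` is `Zd b ⧸ Bd b`. An element of `Zd b` lifts to a homogeneous element of degree `b` at
all stages from `level b` on. -/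
structure DegreewiseDescription (Z B : ℕ → Submodule A V) (τ : ℕ → ℕ → V →ₗ[A] V)
    (Zd Bd : D → Submodule k W) where
  /-- The component of degree `b` at stage `t`. -/
  component : ℕ → D → V →ₗ[k] W
  /-- The homogeneous element of degree `b` at stage `t` with prescribed component. -/
  lift : ℕ → D → W →ₗ[k] V
  /-- The first stage at which all elements of `Zd b` can be lifted. -/
  level : D → ℕ
  component_mem : ∀ {t b x}, x ∈ Z t → component t b x ∈ Zd b
  component_mem_boundaries : ∀ {t b x}, x ∈ B t → component t b x ∈ Bd b
  lift_mem : ∀ {t b w}, level b ≤ t → w ∈ Zd b → lift t b w ∈ Z t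
  lift_mem_boundaries : ∀ {t b w}, level b ≤ t → w ∈ Bd b → lift t b w ∈ B t
  component_lift_self : ∀ {t b w}, level b ≤ t → w ∈ Zd b → component t b (lift t b w) = w
  component_lift_of_ne : ∀ {t b b'} w, b' ≠ b → component t b' (lift t b w) = 0
  component_trans : ∀ {t t'} b x, t ≤ t' → component t' b (τ t t' x) = component t b x
  ext : ∀ {t x y}, (∀ b, component t b x = component t b y) → x = y
  finite_support : ∀ t x, {b | component t b x ≠ 0}.Finite

namespace DegreewiseDescription

variable {k} {Z B : ℕ → Submodule A V} {τ : ℕ → ℕ → V →ₗ[A] V} {Zd Bd : D → Submodule k W}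
  (d : DegreewiseDescription k Z B τ Zd Bd)

lemma trans_lift {t t' : ℕ} {b : D} {w : W} (hb : d.level b ≤ t) (h : t ≤ t') (hw : w ∈ Zd b) :
    τ t t' (d.lift t b w) = d.lift t' b w := by
  refine d.ext (t := t') fun b' => ?_
  rw [d.component_trans b' _ h]
  obtain rfl | hne := eq_or_ne b' b
  · rw [d.component_lift_self hb hw, d.component_lift_self (hb.trans h) hw]
  · rw [d.component_lift_of_ne w hne, d.component_lift_of_ne w hne]

lemma exists_level_le (S : Finset D) (t : ℕ) : ∃ t' ≥ t, ∀ b ∈ S, d.level b ≤ t' :=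
  ⟨t ⊔ S.sup d.level, le_sup_left, fun _ hb => (Finset.le_sup hb).trans le_sup_right⟩

lemma component_sum_lift [DecidableEq D] {S : Finset D} {t : ℕ} (hS : ∀ b ∈ S, d.level b ≤ t)
    (w : ∀ b, Zd b) (b : D) :
    d.component t b (∑ b' ∈ S, d.lift t b' (w b')) = if b ∈ S then (w b : W) else 0 := by
  rw [map_sum]
  split_ifs with hb
  · rw [Finset.sum_eq_single_of_mem b hb fun b' _ hne => d.component_lift_of_ne _ hne.symm,
      d.component_lift_self (hS b hb) (w b).2]
  · exact Finset.sum_eq_zero fun b' hb' =>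
      d.component_lift_of_ne _ (ne_of_mem_of_not_mem hb' hb).symm

variable {L : Type*} [AddCommGroup L] [Module A L] [Module k L] [Algebra k A]
  [IsScalarTower k A L] [IsScalarTower k A V] (c : SubquotientColimit Z B τ L)

/-- The class in the colimit of a homogeneous element of degree `b`. -/
noncomputable def classMap (b : D) : Zd b →ₗ[k] L :=
  (c.toColimit (d.level b)).restrictScalars k ∘ₗ
    ((d.lift (d.level b) b).restrict (q := (Z (d.level b)).restrictScalars k)
      fun _ hw => d.lift_mem le_rfl hw)

lemma classMap_eq_toColimit {b : D} {t : ℕ} (hb : d.level b ≤ t) (w : Zd b) :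
    d.classMap c b w = c.toColimit t ⟨d.lift t b w, d.lift_mem hb w.2⟩ :=
  (c.toColimit_trans hb ⟨_, d.lift_mem le_rfl w.2⟩ _ (d.trans_lift le_rfl hb w.2).symm).symm

lemma sum_classMap {S : Finset D} {t : ℕ} (hS : ∀ b ∈ S, d.level b ≤ t) (w : ∀ b, Zd b) :
    ∑ b ∈ S, d.classMap c b (w b) =
      c.toColimit t ⟨∑ b ∈ S, d.lift t b (w b),
        Submodule.sum_mem _ fun b hb => d.lift_mem (hS b hb) (w b).2⟩ := by
  calc ∑ b ∈ S, d.classMap c b (w b)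
      = ∑ b ∈ S.attach, c.toColimit t ⟨d.lift t b (w b), d.lift_mem (hS b b.2) (w b).2⟩ := by
        rw [← Finset.sum_attach]
        exact Finset.sum_congr rfl fun b _ => d.classMap_eq_toColimit c (hS b b.2) (w b)
    _ = _ := by
        rw [← map_sum]
        refine congrArg _ (Subtype.ext ?_)
        rw [AddSubmonoidClass.coe_finsetSum]
        exact Finset.sum_attach S fun b => d.lift t b (w b)

lemma toColimit_eq_sum_classMap {t : ℕ} (x : Z t) :
    c.toColimit t x = ∑ b ∈ (d.finite_support t x).toFinset,
      d.classMap c b ⟨d.component t b x, d.component_mem x.2⟩ := by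
  classical
  obtain ⟨t', htt', hlevel⟩ := d.exists_level_le (d.finite_support t x).toFinset t
  rw [d.sum_classMap c hlevel fun b => ⟨d.component t b x, d.component_mem x.2⟩]
  refine (c.toColimit_trans htt' x _ (d.ext (t := t') fun b => ?_)).symm
  rw [d.component_trans b _ htt', d.component_sum_lift hlevel]
  split_ifs with hb
  · rfl
  · simpa [eq_comm] using hb

lemma mem_boundaries_of_sum_classMap_eq_zero {S : Finset D} {w : ∀ b, Zd b}
    (h : ∑ b ∈ S, d.classMap c b (w b) = 0) {b : D} (hb : b ∈ S) : (w b : W) ∈ Bd b := by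
  classical
  obtain ⟨t, -, hlevel⟩ := d.exists_level_le S 0
  rw [d.sum_classMap c hlevel, c.toColimit_eq_zero_iff] at h
  obtain ⟨t', htt', hmem⟩ := h
  have := d.component_mem_boundaries (b := b) hmem
  rwa [d.component_trans b _ htt', d.component_sum_lift hlevel, if_pos hb] at this

lemma ker_classMap (b : D) : LinearMap.ker (d.classMap c b) = (Bd b).submoduleOf (Zd b) := by
  classical
  ext w
  refine ⟨fun hw => ?_, fun hw => ?_⟩
  · have := d.mem_boundaries_of_sum_classMap_eq_zero c (S := {b}) (w := Pi.single b w)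
      (by simpa using hw) (Finset.mem_singleton_self b)
    rwa [Pi.single_eq_same] at this
  · refine (c.toColimit_eq_zero_iff _).2 ⟨_, le_rfl, ?_⟩
    exact (d.trans_lift le_rfl le_rfl w.2).symm ▸ d.lift_mem_boundaries le_rfl hw

/-- The homogeneous parts of the colimit. -/
noncomputable def homogeneousPart (b : D) : Submodule k L := LinearMap.range (d.classMap c b)

lemma isInternal_homogeneousPart [DecidableEq D] : DirectSum.IsInternal (d.homogeneousPart c) := by
  rw [DirectSum.isInternal_submodule_iff_iSupIndep_and_iSup_eq_top]
  constructor
  · rw [iSupIndep_iff_finsetSum_eq_zero_imp_eq_zero]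
    intro S v hv hsum b hb
    obtain ⟨w, hw⟩ : ∃ w : ∀ b, Zd b, ∀ b ∈ S, d.classMap c b (w b) = v b :=
      ⟨fun b => if hb : b ∈ S then (hv b hb).choose else 0,
        fun b hb => by simpa [hb] using (hv b hb).choose_spec⟩
    have hwb := d.mem_boundaries_of_sum_classMap_eq_zero c
      ((Finset.sum_congr rfl hw).trans hsum) hb
    rw [← hw b hb, ← LinearMap.mem_ker, d.ker_classMap]
    exact hwb
  · refine eq_top_iff.2 fun y _ => ?_
    obtain ⟨t, x, rfl⟩ := c.exists_rep y
    rw [d.toColimit_eq_sum_classMap c x]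
    exact Submodule.sum_mem _ fun b _ => Submodule.mem_iSup_of_mem b ⟨_, rfl⟩

lemma smul_mem_homogeneousPart {a : A} {b b' : D}
    (ha : ∀ t w b'', b'' ≠ b' → d.component t b'' (a • d.lift t b w) = 0) {y : L}
    (hy : y ∈ d.homogeneousPart c b) : a • y ∈ d.homogeneousPart c b' := by
  obtain ⟨w, rfl⟩ := hy
  rw [d.classMap_eq_toColimit c le_rfl, ← map_smul, d.toColimit_eq_sum_classMap c]
  refine Submodule.sum_mem _ fun b'' hb'' => ?_
  obtain rfl | hne := eq_or_ne b'' b'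
  · exact ⟨_, rfl⟩
  · exact absurd (ha _ _ _ hne) ((Set.Finite.mem_toFinset _).1 hb'')

/-- The homogeneous part of degree `b` is the subquotient `Zd b ⧸ Bd b`. -/
noncomputable def homogeneousPartEquiv (b : D) :
    Subquotient (Zd b) (Bd b) ≃ₗ[k] d.homogeneousPart c b :=
  (Submodule.quotEquivOfEq _ _ (d.ker_classMap c b).symm).trans
    (d.classMap c b).quotKerEquivRange

end DegreewiseDescription

end DegreewiseDescription

section IntCoeff

variable {σ k : Type*} [CommRing k]

/-- The exponent vector `e` as a vector of integers. -/
def intExp (e : σ →₀ ℕ) : σ → ℤ := fun i => e i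

lemma intExp_injective : Function.Injective (intExp (σ := σ)) := fun _ _ h =>
  Finsupp.ext fun i => Nat.cast_injective (congrFun h i)

lemma intExp_nonneg (e : σ →₀ ℕ) : 0 ≤ intExp e := fun _ => Nat.cast_nonneg _

lemma intExp_le_intExp {e e' : σ →₀ ℕ} : intExp e ≤ intExp e' ↔ e ≤ e' :=
  forall_congr' fun _ => Nat.cast_le

lemma intExp_tsub {e e' : σ →₀ ℕ} (h : e' ≤ e) : intExp (e - e') = intExp e - intExp e' :=
  funext fun i => Nat.cast_sub (h i)

variable [Finite σ]

lemma exists_intExp_eq {c : σ → ℤ} (h : 0 ≤ c) : ∃ e, intExp e = c := by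
  refine ⟨Finsupp.equivFunOnFinite.symm fun i => (c i).toNat, funext fun i => ?_⟩
  simpa [intExp] using h i

/-- The coefficient of a polynomial at an exponent vector with integer entries, which is zero when
some entry is negative. -/
noncomputable def intCoeff (c : σ → ℤ) : MvPolynomial σ k →ₗ[k] k :=
  open Classical in if h : 0 ≤ c then lcoeff k (exists_intExp_eq h).choose else 0

lemma intCoeff_intExp (e : σ →₀ ℕ) (a : MvPolynomial σ k) : intCoeff (intExp e) a = coeff e a := by
  have h := intExp_nonneg e
  rw [intCoeff, dif_pos h, intExp_injective (exists_intExp_eq h).choose_spec]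
  rfl

lemma intCoeff_of_not_nonneg {c : σ → ℤ} (h : ¬ 0 ≤ c) (a : MvPolynomial σ k) :
    intCoeff c a = 0 := by
  rw [intCoeff, dif_neg h, LinearMap.zero_apply]

lemma ext_intCoeff {a a' : MvPolynomial σ k} (h : ∀ c, intCoeff c a = intCoeff c a') : a = a' :=
  MvPolynomial.ext _ _ fun e => by simpa only [intCoeff_intExp] using h (intExp e)

lemma intCoeff_monomial_mul (c : σ → ℤ) (e : σ →₀ ℕ) (a : MvPolynomial σ k) :
    intCoeff c (monomial e 1 * a) = intCoeff (c - intExp e) a := by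
  by_cases hc : 0 ≤ c
  · obtain ⟨e', rfl⟩ := exists_intExp_eq hc
    rw [intCoeff_intExp, coeff_monomial_mul', one_mul]
    split_ifs with h
    · rw [← intExp_tsub h, intCoeff_intExp]
    · rw [intCoeff_of_not_nonneg]
      rwa [sub_nonneg, intExp_le_intExp]
  · rw [intCoeff_of_not_nonneg hc, intCoeff_of_not_nonneg]
    exact fun h => hc ((intExp_nonneg e).trans (sub_nonneg.1 h))

/-- The monomial with an exponent vector with integer entries, which is zero when some entry is
negative. -/
noncomputable def intMonomial (c : σ → ℤ) : k →ₗ[k] MvPolynomial σ k :=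
  open Classical in if h : 0 ≤ c then monomial (exists_intExp_eq h).choose else 0

lemma intMonomial_intExp (e : σ →₀ ℕ) (x : k) : intMonomial (intExp e) x = monomial e x := by
  have h := intExp_nonneg e
  rw [intMonomial, dif_pos h, intExp_injective (exists_intExp_eq h).choose_spec]

lemma intCoeff_intMonomial_self {c : σ → ℤ} (h : 0 ≤ c) (x : k) :
    intCoeff c (intMonomial c x) = x := by
  classical
  obtain ⟨e, rfl⟩ := exists_intExp_eq h
  rw [intMonomial_intExp, intCoeff_intExp, coeff_monomial, if_pos rfl]

lemma intCoeff_intMonomial_of_ne {c c' : σ → ℤ} (h : c' ≠ c) (x : k) :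
    intCoeff c' (intMonomial c x) = 0 := by
  classical
  by_cases hc' : 0 ≤ c'
  · by_cases hc : 0 ≤ c
    · obtain ⟨e, rfl⟩ := exists_intExp_eq hc
      obtain ⟨e', rfl⟩ := exists_intExp_eq hc'
      rw [intMonomial_intExp, intCoeff_intExp, coeff_monomial, if_neg (ne_of_apply_ne _ h.symm)]
    · rw [intMonomial, dif_neg hc, LinearMap.zero_apply, map_zero]
  · exact intCoeff_of_not_nonneg hc' _

end IntCoeff

section SupportedFunctions

variable (A : Type*) {M X : Type*} [Semiring A] [AddCommMonoid M] [Module A M]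

variable (M) in
/-- The functions `X → M` vanishing outside `s`. -/
def supportedFunctions (s : Set X) : Submodule A (X → M) where
  carrier := {f | ∀ x, f x ≠ 0 → x ∈ s}
  zero_mem' := fun _ h => absurd rfl h
  add_mem' := fun {f g} hf hg x hx => by
    by_cases h : f x = 0
    · exact hg x fun h' => hx (by simp [h, h'])
    · exact hf x h
  smul_mem' := fun c f hf x hx => hf x fun h => hx (by simp [h])

end SupportedFunctions

section TupleCochains

variable {k ι : Type*} [CommRing k]

variable (k ι) in
/-- The simplicial coboundary on cochains on (not necessarily injective) tuples in `ι`. -/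
def tupleCoboundary (r : ℕ) : ((Fin r → ι) → k) →ₗ[k] ((Fin (r + 1) → ι) → k) :=
  ∑ i : Fin (r + 1), (-1 : k) ^ (i : ℕ) • LinearMap.funLeft k k (· ∘ i.succAbove)

lemma tupleCoboundary_apply (r : ℕ) (f : (Fin r → ι) → k) (T : Fin (r + 1) → ι) :
    tupleCoboundary k ι r f T = ∑ i : Fin (r + 1), (-1 : k) ^ (i : ℕ) * f (T ∘ i.succAbove) := by
  simp [tupleCoboundary, LinearMap.funLeft]

variable {σ : Type*} [DecidableEq σ]

variable (k) in
/-- The cochains supported on the tuples whose union contains `N`. -/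
def coverCochains (u : ι → Finset σ) (N : Finset σ) (r : ℕ) : Submodule k ((Fin r → ι) → k) :=
  supportedFunctions k k {T | N ⊆ tupleUnion u T}

variable (k) in
/-- The cocycles among the cochains supported on the tuples whose union contains `N`. -/
def coverCocycles (u : ι → Finset σ) (N : Finset σ) (r : ℕ) : Submodule k ((Fin r → ι) → k) :=
  coverCochains k u N r ⊓ LinearMap.ker (tupleCoboundary k ι r)

variable (k) in
/-- The coboundaries of the cochains supported on the tuples whose union contains `N`. -/
def coverCoboundaries (u : ι → Finset σ) (N : Finset σ) : ∀ r, Submodule k ((Fin r → ι) → k)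
  | 0 => ⊥
  | r + 1 => (coverCochains k u N r).map (tupleCoboundary k ι r)

variable {u : ι → Finset σ} {N : Finset σ}

lemma tupleCoboundary_mem_coverCochains {r : ℕ} {f : (Fin r → ι) → k}
    (hf : f ∈ coverCochains k u N r) : tupleCoboundary k ι r f ∈ coverCochains k u N (r + 1) := by
  intro T hT
  rw [tupleCoboundary_apply] at hT
  obtain ⟨i, -, hi⟩ := Finset.exists_ne_zero_of_sum_ne_zero hT
  exact (hf _ (right_ne_zero_of_mul hi)).trans (tupleUnion_comp_subset T _)

end TupleCochains

section TaylorGrading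

variable {σ ι k : Type u} [CommRing k] [DecidableEq σ] (u : ι → Finset σ)

/-- The exponent vector in which the degree-`b` component of a cochain on the stage-`t` Taylor
complex sits at the tuple `T`. -/
noncomputable def taylorDegree (t : ℕ) (b : σ → ℤ) {r : ℕ} (T : Fin r → ι) : σ → ℤ :=
  b + intExp (expPow t (tupleUnion u T))

/-- The set of indices of the negative entries of `b`. -/
def negSupport [Fintype σ] (b : σ → ℤ) : Finset σ := {i | b i < 0}

variable {u}

lemma taylorDegree_apply_of_mem {t : ℕ} {b : σ → ℤ} {r : ℕ} {T : Fin r → ι} {i : σ}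
    (h : i ∈ tupleUnion u T) : taylorDegree u t b T i = b i + t := by
  simp [taylorDegree, intExp, expPow, h]

lemma taylorDegree_apply_of_notMem {t : ℕ} {b : σ → ℤ} {r : ℕ} {T : Fin r → ι} {i : σ}
    (h : i ∉ tupleUnion u T) : taylorDegree u t b T i = b i := by
  simp [taylorDegree, intExp, expPow, h]

lemma negSupport_subset_of_taylorDegree_nonneg [Fintype σ] {t : ℕ} {b : σ → ℤ} {r : ℕ}
    {T : Fin r → ι} (h : 0 ≤ taylorDegree u t b T) : negSupport b ⊆ tupleUnion u T := by
  intro i hi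
  by_contra hT
  have := h i
  rw [taylorDegree_apply_of_notMem hT] at this
  exact not_le.2 (Finset.mem_filter.1 hi).2 this

lemma taylorDegree_nonneg [Fintype σ] {t : ℕ} {b : σ → ℤ}
    (ht : Finset.univ.sup (fun i => (b i).natAbs) ≤ t) {r : ℕ} {T : Fin r → ι}
    (h : negSupport b ⊆ tupleUnion u T) : 0 ≤ taylorDegree u t b T := by
  intro i
  have hi : (b i).natAbs ≤ t := 
    (Finset.le_sup (f := fun i => (b i).natAbs) (Finset.mem_univ i)).trans ht
  rw [Pi.zero_apply]
  by_cases hT : i ∈ tupleUnion u T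
  · rw [taylorDegree_apply_of_mem hT]
    lia
  · rw [taylorDegree_apply_of_notMem hT]
    simpa [negSupport] using mt (@h i) hT

lemma taylorDegree_sub_expPow (t : ℕ) (b : σ → ℤ) {r : ℕ} (T : Fin (r + 1) → ι)
    (i : Fin (r + 1)) :
    taylorDegree u t b T -
        intExp (expPow t (tupleUnion u T \ tupleUnion u (T ∘ i.succAbove))) =
      taylorDegree u t b (T ∘ i.succAbove) := by
  funext j
  by_cases hj : j ∈ tupleUnion u (T ∘ i.succAbove)
  · simp [taylorDegree, intExp, expPow, hj, tupleUnion_comp_subset T _ hj]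
  · by_cases hT : j ∈ tupleUnion u T <;> simp [taylorDegree, intExp, expPow, hj, hT]

variable [Finite σ]

variable (u) in
/-- The component of degree `b` of a cochain on the stage-`t` Taylor complex. -/
noncomputable def taylorComponent (r t : ℕ) (b : σ → ℤ) :
    (((Fin r → ι) →₀ MvPolynomial σ k) →ₗ[MvPolynomial σ k] MvPolynomial σ k) →ₗ[k]
      ((Fin r → ι) → k) where
  toFun ψ T := intCoeff (taylorDegree u t b T) (ψ (Finsupp.single T 1))
  map_add' ψ ψ' := funext fun T => by simp
  map_smul' x ψ := funext fun T => by simp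

variable (u) in
/-- The cochain on the stage-`t` Taylor complex that is homogeneous of degree `b` with the given
coefficients, restricted to those tuples at which there is a monomial of this degree. -/
noncomputable def taylorLift (r t : ℕ) (b : σ → ℤ) :
    ((Fin r → ι) → k) →ₗ[k]
      (((Fin r → ι) →₀ MvPolynomial σ k) →ₗ[MvPolynomial σ k] MvPolynomial σ k) where
  toFun f := Finsupp.linearCombination _ fun T => intMonomial (taylorDegree u t b T) (f T)
  map_add' f g := by ext T; simp
  map_smul' x f := by ext T; simp [-smul_eq_mul]

lemma taylorComponent_apply (r t : ℕ) (b : σ → ℤ)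
    (ψ : ((Fin r → ι) →₀ MvPolynomial σ k) →ₗ[MvPolynomial σ k] MvPolynomial σ k) (T) :
    taylorComponent u r t b ψ T = intCoeff (taylorDegree u t b T) (ψ (Finsupp.single T 1)) :=
  rfl

lemma taylorLift_single (r t : ℕ) (b : σ → ℤ) (f : (Fin r → ι) → k) (T : Fin r → ι) :
    taylorLift u r t b f (Finsupp.single T 1) = intMonomial (taylorDegree u t b T) (f T) := by
  simp [taylorLift]

lemma taylorComponent_taylorLift_of_ne (r t : ℕ) {b b' : σ → ℤ} (f : (Fin r → ι) → k)
    (h : b' ≠ b) : taylorComponent u r t b' (taylorLift u r t b f) = 0 := by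
  funext T
  rw [taylorComponent_apply, taylorLift_single]
  exact intCoeff_intMonomial_of_ne (fun h' => h (add_right_cancel h')) _

lemma ext_taylorComponent {r t : ℕ}
    {ψ ψ' : ((Fin r → ι) →₀ MvPolynomial σ k) →ₗ[MvPolynomial σ k] MvPolynomial σ k}
    (h : ∀ b, taylorComponent u r t b ψ = taylorComponent u r t b ψ') : ψ = ψ' := by
  ext T : 2
  refine ext_intCoeff fun c => ?_
  have := congrFun (h (c - intExp (expPow t (tupleUnion u T)))) T
  simpa only [taylorComponent_apply, taylorDegree, sub_add_cancel, LinearMap.comp_apply,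
    Finsupp.lsingle_apply] using this

lemma finite_setOf_taylorComponent_ne_zero [Finite ι] (r t : ℕ)
    (ψ : ((Fin r → ι) →₀ MvPolynomial σ k) →ₗ[MvPolynomial σ k] MvPolynomial σ k) :
    {b | taylorComponent u r t b ψ ≠ 0}.Finite := by
  refine (Set.finite_iUnion fun T => (ψ (Finsupp.single T 1)).support.finite_toSet.image
    fun e => intExp e - intExp (expPow t (tupleUnion u T))).subset fun b hb => ?_
  obtain ⟨T, hT⟩ := Function.ne_iff.1 hb
  rw [taylorComponent_apply, Pi.zero_apply] at hT
  have hnonneg : 0 ≤ taylorDegree u t b T := by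
    by_contra h
    exact hT (intCoeff_of_not_nonneg h _)
  obtain ⟨e, he⟩ := exists_intExp_eq hnonneg
  rw [← he, intCoeff_intExp] at hT
  refine Set.mem_iUnion.2 ⟨T, e, mem_support_iff.2 hT, ?_⟩
  simp only [he, taylorDegree, add_sub_cancel_right]

lemma taylorComponent_X_smul (r t : ℕ) (b : σ → ℤ) (i : σ)
    (ψ : ((Fin r → ι) →₀ MvPolynomial σ k) →ₗ[MvPolynomial σ k] MvPolynomial σ k) :
    taylorComponent u r t b ((X i : MvPolynomial σ k) • ψ) =
      taylorComponent u r t (b - Pi.single i 1) ψ := by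
  funext T
  have hi : intExp (Finsupp.single i 1) = Pi.single i 1 := by
    funext j
    simp [intExp, Finsupp.single_apply, Pi.single_apply, eq_comm]
  rw [taylorComponent_apply, LinearMap.smul_apply, smul_eq_mul, X, intCoeff_monomial_mul, hi,
    taylorComponent_apply, taylorDegree, taylorDegree, add_sub_right_comm]

lemma taylorComponent_comp_taylorScale {t t' : ℕ} (h : t ≤ t') (r : ℕ) (b : σ → ℤ)
    (ψ : ((Fin r → ι) →₀ MvPolynomial σ k) →ₗ[MvPolynomial σ k] MvPolynomial σ k) :
    taylorComponent u r t' b (ψ ∘ₗ taylorScale k u (t' - t) r) = taylorComponent u r t b ψ := by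
  funext T
  rw [taylorComponent_apply, LinearMap.comp_apply, taylorScale_single, ← smul_eq_mul,
    ← Finsupp.smul_single, map_smul, smul_eq_mul, monomialPow, intCoeff_monomial_mul,
    taylorComponent_apply]
  congr 2
  funext i
  by_cases hi : i ∈ tupleUnion u T
  · simp [taylorDegree, intExp, expPow, hi, h, add_sub_assoc]
  · simp [taylorDegree, intExp, expPow, hi]

lemma taylorComponent_comp_taylorBoundary (t r : ℕ) (b : σ → ℤ)
    (ψ : ((Fin r → ι) →₀ MvPolynomial σ k) →ₗ[MvPolynomial σ k] MvPolynomial σ k) :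
    taylorComponent u (r + 1) t b (ψ ∘ₗ taylorBoundary k u t r) =
      tupleCoboundary k ι r (taylorComponent u r t b ψ) := by
  funext T
  rw [taylorComponent_apply, LinearMap.comp_apply, taylorBoundary_single, tupleCoboundary_apply,
    map_sum, map_sum]
  refine Finset.sum_congr rfl fun i _ => ?_
  have hψ : ψ (Finsupp.single (T ∘ i.succAbove) ((-1) ^ (i : ℕ) *
      monomialPow k t (tupleUnion u T \ tupleUnion u (T ∘ i.succAbove)) * 1)) =
      (-1 : k) ^ (i : ℕ) • (monomialPow k t (tupleUnion u T \ tupleUnion u (T ∘ i.succAbove)) *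
        ψ (Finsupp.single (T ∘ i.succAbove) 1)) := by
    rw [← smul_eq_mul, ← Finsupp.smul_single, map_smul, smul_eq_mul, smul_eq_C_mul, mul_assoc]
    simp only [map_pow, map_neg, map_one]
  rw [hψ, map_smul, monomialPow, intCoeff_monomial_mul, smul_eq_mul, taylorComponent_apply,
    taylorDegree_sub_expPow]

lemma mem_cocycles_taylorResolution_iff [Finite ι] {r t : ℕ}
    {ψ : ((Fin r → ι) →₀ MvPolynomial σ k) →ₗ[MvPolynomial σ k] MvPolynomial σ k} :
    ψ ∈ (taylorResolution k u t).cocycles (MvPolynomial σ k) r ↔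
      ∀ b, tupleCoboundary k ι r (taylorComponent u r t b ψ) = 0 := by
  simp_rw [← taylorComponent_comp_taylorBoundary]
  refine ⟨fun h b => ?_, fun h => ext_taylorComponent (u := u) (t := t) fun b => ?_⟩
  · exact (congrArg _ (h : ψ ∘ₗ taylorBoundary k u t r = 0)).trans (map_zero _)
  · exact (h b).trans (map_zero _).symm

end TaylorGrading

section TaylorGrading

variable {σ ι k : Type u} [CommRing k] [DecidableEq σ] {u : ι → Finset σ} [Fintype σ]

lemma taylorComponent_mem_coverCochains (r t : ℕ) (b : σ → ℤ)
    (ψ : ((Fin r → ι) →₀ MvPolynomial σ k) →ₗ[MvPolynomial σ k] MvPolynomial σ k) :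
    taylorComponent u r t b ψ ∈ coverCochains k u (negSupport b) r := fun _ hT =>
  negSupport_subset_of_taylorDegree_nonneg <| not_not.1 fun h : ¬ 0 ≤ taylorDegree u t b _ =>
    hT (intCoeff_of_not_nonneg h _)

lemma taylorComponent_taylorLift_self {r t : ℕ} {b : σ → ℤ} {f : (Fin r → ι) → k}
    (ht : Finset.univ.sup (fun i => (b i).natAbs) ≤ t)
    (hf : f ∈ coverCochains k u (negSupport b) r) :
    taylorComponent u r t b (taylorLift u r t b f) = f := by
  funext T
  rw [taylorComponent_apply, taylorLift_single]
  by_cases h : f T = 0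
  · rw [h, map_zero, map_zero]
  · exact intCoeff_intMonomial_self (taylorDegree_nonneg ht (hf T h)) _

lemma taylorLift_comp_taylorBoundary {r t : ℕ} {b : σ → ℤ} {f : (Fin r → ι) → k}
    (ht : Finset.univ.sup (fun i => (b i).natAbs) ≤ t)
    (hf : f ∈ coverCochains k u (negSupport b) r) :
    taylorLift u r t b f ∘ₗ taylorBoundary k u t r =
      taylorLift u (r + 1) t b (tupleCoboundary k ι r f) := by
  refine ext_taylorComponent (u := u) (t := t) fun b' => ?_
  rw [taylorComponent_comp_taylorBoundary]
  obtain rfl | h := eq_or_ne b' b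
  · rw [taylorComponent_taylorLift_self ht hf,
      taylorComponent_taylorLift_self ht (tupleCoboundary_mem_coverCochains hf)]
  · rw [taylorComponent_taylorLift_of_ne r t f h, taylorComponent_taylorLift_of_ne _ t _ h,
      map_zero]

variable (k u) in
/-- The description of the cohomology of the Taylor complexes by homogeneous components. -/
noncomputable def taylorDescription [Finite ι] (r : ℕ) : DegreewiseDescription k
    (fun t => ((taylorTower k u).res t).cocycles (MvPolynomial σ k) r)
    (fun t => ((taylorTower k u).res t).coboundaries (MvPolynomial σ k) r)
    (fun t t' => LinearMap.lcomp _ (MvPolynomial σ k) ((taylorTower k u).trans t t' r))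
    (fun b : σ → ℤ => coverCocycles k u (negSupport b) r)
    (fun b => coverCoboundaries k u (negSupport b) r) where
  component := taylorComponent u r
  lift := taylorLift u r
  level b := Finset.univ.sup fun i => (b i).natAbs
  component_mem h :=
    ⟨taylorComponent_mem_coverCochains _ _ _ _, mem_cocycles_taylorResolution_iff.1 h _⟩
  component_mem_boundaries {t b ψ} h := by
    cases r with
    | zero => exact (congrArg _ (h : ψ = 0)).trans (map_zero _)
    | succ r =>
      obtain ⟨φ, rfl⟩ := h
      exact ⟨_, taylorComponent_mem_coverCochains r t b φ,
        (taylorComponent_comp_taylorBoundary ..).symm⟩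
  lift_mem {t b f} ht hf := by
    refine mem_cocycles_taylorResolution_iff.2 fun b' => ?_
    obtain rfl | h := eq_or_ne b' b
    · rw [taylorComponent_taylorLift_self ht hf.1]
      exact hf.2
    · rw [taylorComponent_taylorLift_of_ne r t f h, map_zero]
  lift_mem_boundaries {t b f} ht hf := by
    cases r with
    | zero => exact (congrArg _ (hf : f = 0)).trans (map_zero _)
    | succ r =>
      obtain ⟨g, hg, rfl⟩ := hf
      exact ⟨taylorLift u r t b g, taylorLift_comp_taylorBoundary ht hg⟩
  component_lift_self ht hf := taylorComponent_taylorLift_self ht hf.1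
  component_lift_of_ne f h := taylorComponent_taylorLift_of_ne r _ f h
  component_trans b ψ h := taylorComponent_comp_taylorScale h r b ψ
  ext := ext_taylorComponent
  finite_support := finite_setOf_taylorComponent_ne_zero r

end TaylorGrading

section Bicomplex

variable {A : Type*} [Ring A] {W : ℕ → Type*} [∀ p, AddCommGroup (W p)] [∀ p, Module A (W p)]

/-- A first-quadrant cochain bicomplex with commuting differentials and exact rows and columns
(except at the edges). The entries of column `p` are the submodules `D p q` of a single module
`W p`. -/
structure ExactCochainBicomplex (h : ∀ p, W p →ₗ[A] W (p + 1)) (v : ∀ p, W p →ₗ[A] W p)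
    (D : ∀ p, ℕ → Submodule A (W p)) : Prop where
  h_mem : ∀ {p q x}, x ∈ D p q → h p x ∈ D (p + 1) q
  v_mem : ∀ {p q x}, x ∈ D p q → v p x ∈ D p (q + 1)
  h_v : ∀ p x, h p (v p x) = v (p + 1) (h p x)
  h_h : ∀ p x, h (p + 1) (h p x) = 0
  v_v : ∀ p x, v p (v p x) = 0
  h_exact : ∀ {p q x}, x ∈ D (p + 1) q → h (p + 1) x = 0 → ∃ y ∈ D p q, h p y = x
  v_exact : ∀ {p q x}, x ∈ D p (q + 1) → v p x = 0 → ∃ y ∈ D p q, v p y = x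

namespace ExactCochainBicomplex

variable {h : ∀ p, W p →ₗ[A] W (p + 1)} {v : ∀ p, W p →ₗ[A] W p} {D : ∀ p, ℕ → Submodule A (W p)}
  (b : ExactCochainBicomplex h v D)
include b

lemma map_h_inf_ker (p q : ℕ) : (D p q ⊓ LinearMap.ker (v (p + 1) ∘ₗ h p)).map (h p) =
    D (p + 1) q ⊓ LinearMap.ker (h (p + 1)) ⊓ LinearMap.ker (v (p + 1)) := by
  ext y
  constructor
  · rintro ⟨x, ⟨hx, hvh⟩, rfl⟩
    exact ⟨⟨b.h_mem hx, b.h_h p x⟩, hvh⟩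
  · rintro ⟨⟨hy, hhy⟩, hvy⟩
    obtain ⟨x, hx, rfl⟩ := b.h_exact hy hhy
    exact ⟨x, ⟨hx, hvy⟩, rfl⟩

lemma map_v_inf_ker (p q : ℕ) : (D p q ⊓ LinearMap.ker (v (p + 1) ∘ₗ h p)).map (v p) =
    D p (q + 1) ⊓ LinearMap.ker (h p) ⊓ LinearMap.ker (v p) := by
  ext y
  constructor
  · rintro ⟨x, ⟨hx, hvh⟩, rfl⟩
    exact ⟨⟨b.v_mem hx, (b.h_v p x).trans hvh⟩, b.v_v p x⟩
  · rintro ⟨⟨hy, hhy⟩, hvy⟩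
    obtain ⟨x, hx, rfl⟩ := b.v_exact hy hvy
    exact ⟨x, ⟨hx, (b.h_v p x).symm.trans hhy⟩, rfl⟩

lemma map_v_ker_h (p q : ℕ) : (D (p + 1) q ⊓ LinearMap.ker (h (p + 1))).map (v (p + 1)) =
    (D p (q + 1) ⊓ LinearMap.ker (v p)).map (h p) := by
  ext z
  constructor
  · rintro ⟨x, ⟨hx, hhx⟩, rfl⟩
    obtain ⟨y, hy, rfl⟩ := b.h_exact hx hhx
    exact ⟨v p y, ⟨b.v_mem hy, b.v_v p y⟩, b.h_v p y⟩
  · rintro ⟨x, ⟨hx, hvx⟩, rfl⟩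
    obtain ⟨y, hy, rfl⟩ := b.v_exact hx hvx
    exact ⟨h p y, ⟨b.h_mem hy, b.h_h p y⟩, (b.h_v p y).symm⟩

lemma nonempty_equiv_step (p q : ℕ) : Nonempty (
    Subquotient (D (p + 1) q ⊓ LinearMap.ker (h (p + 1)) ⊓ LinearMap.ker (v (p + 1)))
      ((D p q ⊓ LinearMap.ker (v p)).map (h p)) ≃ₗ[A]
    Subquotient (D p (q + 1) ⊓ LinearMap.ker (h p) ⊓ LinearMap.ker (v p))
      ((D p q ⊓ LinearMap.ker (h p)).map (v p))) := by
  rw [← b.map_h_inf_ker, ← b.map_v_inf_ker]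
  refine nonempty_subquotient_map_equiv_map (h p) (v p) inf_le_left
    (inf_le_inf_left _ (LinearMap.ker_le_ker_comp _ _)) (inf_le_inf_left _ fun x hx => ?_)
  rw [LinearMap.mem_ker, LinearMap.comp_apply, ← b.h_v, LinearMap.mem_ker.1 hx, map_zero]

lemma nonempty_equiv_antidiagonal {p q r : ℕ} (hr : p + q = r) : Nonempty (
    Subquotient (D (p + 1) q ⊓ LinearMap.ker (h (p + 1)) ⊓ LinearMap.ker (v (p + 1)))
      ((D p q ⊓ LinearMap.ker (v p)).map (h p)) ≃ₗ[A]
    Subquotient (D 0 (r + 1) ⊓ LinearMap.ker (h 0) ⊓ LinearMap.ker (v 0))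
      ((D 0 r ⊓ LinearMap.ker (h 0)).map (v 0))) := by
  induction p generalizing q with
  | zero =>
    obtain rfl : q = r := by lia
    exact b.nonempty_equiv_step 0 q
  | succ p ih =>
    obtain ⟨e⟩ := b.nonempty_equiv_step (p + 1) q
    obtain ⟨e'⟩ := ih (q := q + 1) (by lia)
    rw [b.map_v_ker_h] at e
    exact ⟨e.trans e'⟩

theorem nonempty_edge_equiv_edge (r : ℕ) : Nonempty (
    Subquotient (D (r + 1) 0 ⊓ LinearMap.ker (h (r + 1)) ⊓ LinearMap.ker (v (r + 1)))
      ((D r 0 ⊓ LinearMap.ker (v r)).map (h r)) ≃ₗ[A]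
    Subquotient (D 0 (r + 1) ⊓ LinearMap.ker (h 0) ⊓ LinearMap.ker (v 0))
      ((D 0 r ⊓ LinearMap.ker (h 0)).map (v 0))) :=
  b.nonempty_equiv_antidiagonal (add_zero r)

end ExactCochainBicomplex

/-- The cycles of a chain complex indexed by `ℕ`; everything is a cycle in degree `0`. -/
def chainCycles (h : ∀ p, W (p + 1) →ₗ[A] W p) : ∀ p, Submodule A (W p)
  | 0 => ⊤
  | p + 1 => LinearMap.ker (h p)

/-- A first-quadrant chain bicomplex with commuting differentials and exact rows and columns
(except at the edges). The entries of column `p` are the submodules `D p q` of a single module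
`W p`. -/
structure ExactChainBicomplex (h : ∀ p, W (p + 1) →ₗ[A] W p) (v : ∀ p, W p →ₗ[A] W p)
    (D : ∀ p, ℕ → Submodule A (W p)) : Prop where
  h_mem : ∀ {p q x}, x ∈ D (p + 1) q → h p x ∈ D p q
  v_mem : ∀ {p q x}, x ∈ D p (q + 1) → v p x ∈ D p q
  v_eq_zero : ∀ {p x}, x ∈ D p 0 → v p x = 0
  h_v : ∀ p x, h p (v (p + 1) x) = v p (h p x)
  h_h : ∀ p x, h p (h (p + 1) x) = 0
  v_v : ∀ p x, v p (v p x) = 0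
  h_exact : ∀ {p q x}, x ∈ D p (q + 1) → x ∈ chainCycles h p → ∃ y ∈ D (p + 1) (q + 1), h p y = x
  v_exact : ∀ {p q x}, x ∈ D (p + 1) q → v (p + 1) x = 0 →
    ∃ y ∈ D (p + 1) (q + 1), v (p + 1) y = x

namespace ExactChainBicomplex

variable {h : ∀ p, W (p + 1) →ₗ[A] W p} {v : ∀ p, W p →ₗ[A] W p} {D : ∀ p, ℕ → Submodule A (W p)}
  (b : ExactChainBicomplex h v D)
include b

lemma h_mem_chainCycles (p : ℕ) (x : W (p + 1)) : h p x ∈ chainCycles h p := by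
  cases p with
  | zero => trivial
  | succ p => exact b.h_h p x

lemma map_h_inf_ker (p q : ℕ) : (D (p + 1) (q + 1) ⊓ LinearMap.ker (v p ∘ₗ h p)).map (h p) =
    D p (q + 1) ⊓ LinearMap.ker (v p) ⊓ chainCycles h p := by
  ext y
  constructor
  · rintro ⟨x, ⟨hx, hvh⟩, rfl⟩
    exact ⟨⟨b.h_mem hx, hvh⟩, b.h_mem_chainCycles p x⟩
  · rintro ⟨⟨hy, hvy⟩, hhy⟩
    obtain ⟨x, hx, rfl⟩ := b.h_exact hy hhy
    exact ⟨x, ⟨hx, hvy⟩, rfl⟩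

lemma map_v_inf_ker (p q : ℕ) :
    (D (p + 1) (q + 1) ⊓ LinearMap.ker (v p ∘ₗ h p)).map (v (p + 1)) =
      D (p + 1) q ⊓ LinearMap.ker (v (p + 1)) ⊓ chainCycles h (p + 1) := by
  ext y
  constructor
  · rintro ⟨x, ⟨hx, hvh⟩, rfl⟩
    exact ⟨⟨b.v_mem hx, b.v_v (p + 1) x⟩, (b.h_v p x).trans hvh⟩
  · rintro ⟨⟨hy, hvy⟩, hhy⟩
    obtain ⟨x, hx, rfl⟩ := b.v_exact hy hvy
    exact ⟨x, ⟨hx, (b.h_v p x).symm.trans hhy⟩, rfl⟩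

lemma map_v_ker_h (p q : ℕ) : (D p (q + 1) ⊓ chainCycles h p).map (v p) =
    (D (p + 1) (q + 1)).map (v p ∘ₗ h p) := by
  ext z
  constructor
  · rintro ⟨x, ⟨hx, hhx⟩, rfl⟩
    obtain ⟨y, hy, rfl⟩ := b.h_exact hx hhx
    exact ⟨y, hy, rfl⟩
  · rintro ⟨y, hy, rfl⟩
    exact ⟨h p y, ⟨b.h_mem hy, b.h_mem_chainCycles p y⟩, rfl⟩

lemma map_h_ker_v (p q : ℕ) : (D (p + 1) q ⊓ LinearMap.ker (v (p + 1))).map (h p) =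
    (D (p + 1) (q + 1)).map (v p ∘ₗ h p) := by
  ext z
  constructor
  · rintro ⟨x, ⟨hx, hvx⟩, rfl⟩
    obtain ⟨y, hy, rfl⟩ := b.v_exact hx hvx
    exact ⟨y, hy, (b.h_v p y).symm⟩
  · rintro ⟨y, hy, rfl⟩
    exact ⟨v (p + 1) y, ⟨b.v_mem hy, b.v_v (p + 1) y⟩, b.h_v p y⟩

lemma nonempty_equiv_step (p q : ℕ) : Nonempty (
    Subquotient (D (p + 1) q ⊓ LinearMap.ker (v (p + 1)) ⊓ chainCycles h (p + 1))
      ((D (p + 2) (q + 1)).map (v (p + 1) ∘ₗ h (p + 1))) ≃ₗ[A]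
    Subquotient (D p (q + 1) ⊓ LinearMap.ker (v p) ⊓ chainCycles h p)
      ((D (p + 1) (q + 2)).map (v p ∘ₗ h p))) := by
  rw [← b.map_h_inf_ker, ← b.map_v_inf_ker, ← b.map_h_ker_v p,
    ← b.map_v_ker_h (p + 1)]
  refine nonempty_subquotient_map_equiv_map (v (p + 1)) (h p) inf_le_left
    (inf_le_inf_left _ fun x hx => ?_) (inf_le_inf_left _ (LinearMap.ker_le_ker_comp _ _))
  rw [LinearMap.mem_ker, LinearMap.comp_apply, ← b.h_v, LinearMap.mem_ker.1 hx, map_zero]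

lemma nonempty_equiv_antidiagonal {p q r : ℕ} (hr : p + q = r) : Nonempty (
    Subquotient (D p q ⊓ LinearMap.ker (v p) ⊓ chainCycles h p)
      ((D (p + 1) (q + 1)).map (v p ∘ₗ h p)) ≃ₗ[A]
    Subquotient (D 0 r ⊓ LinearMap.ker (v 0) ⊓ chainCycles h 0)
      ((D 1 (r + 1)).map (v 0 ∘ₗ h 0))) := by
  induction p generalizing q with
  | zero =>
    obtain rfl : q = r := by lia
    exact ⟨LinearEquiv.refl _ _⟩
  | succ p ih =>
    obtain ⟨e⟩ := b.nonempty_equiv_step p q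
    obtain ⟨e'⟩ := ih (q := q + 1) (by lia)
    exact ⟨e.trans e'⟩

theorem nonempty_edge_equiv_edge (r : ℕ) : Nonempty (
    Subquotient (D r 0 ⊓ chainCycles h r) ((D (r + 1) 0).map (h r)) ≃ₗ[A]
    Subquotient (D 0 r ⊓ LinearMap.ker (v 0)) ((D 0 (r + 1)).map (v 0))) := by
  obtain ⟨e⟩ := b.nonempty_equiv_antidiagonal (add_zero r)
  have inf_ker_v (p : ℕ) : D p 0 ⊓ LinearMap.ker (v p) = D p 0 :=
    inf_eq_left.2 fun _ hx => b.v_eq_zero hx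
  have inf_cycles (q : ℕ) : D 0 q ⊓ chainCycles h 0 = D 0 q := inf_top_eq _
  rw [← b.map_h_ker_v, ← b.map_v_ker_h, inf_ker_v, inf_ker_v, inf_right_comm, inf_cycles,
    inf_cycles] at e
  exact ⟨e⟩

end ExactChainBicomplex

end Bicomplex

section KoszulSign

variable (A : Type*) {σ : Type*} [CommRing A] [LinearOrder σ]

/-- The sign of the position of `v` in the ordered set `insert v G`. -/
def koszulSign (v : σ) (G : Finset σ) : A := ∏ w ∈ G, if w < v then -1 else 1

variable {A}

lemma koszulSign_mul_self (v : σ) (G : Finset σ) : koszulSign A v G * koszulSign A v G = 1 := by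
  rw [koszulSign, ← Finset.prod_mul_distrib]
  exact Finset.prod_eq_one fun w _ => by split_ifs <;> simp

lemma koszulSign_insert {w : σ} {G : Finset σ} (hw : w ∉ G) (v : σ) :
    koszulSign A v (insert w G) = (if w < v then -1 else 1) * koszulSign A v G :=
  Finset.prod_insert hw

lemma koszulSign_insert_self (v : σ) (G : Finset σ) :
    koszulSign A v (insert v G) = koszulSign A v G :=
  Finset.prod_insert_one (if_neg (lt_irrefl v))

lemma koszulSign_erase_self (v : σ) (G : Finset σ) :
    koszulSign A v (G.erase v) = koszulSign A v G :=
  Finset.prod_erase G (if_neg (lt_irrefl v))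

lemma koszulSign_erase {w : σ} {G : Finset σ} (hw : w ∈ G) (v : σ) :
    koszulSign A v (G.erase w) = (if w < v then -1 else 1) * koszulSign A v G := by
  conv_rhs => rw [← Finset.insert_erase hw, koszulSign_insert (Finset.notMem_erase w G)]
  split_ifs <;> ring

lemma koszulSign_mul_koszulSign_erase_add {v w : σ} {G : Finset σ} (hv : v ∈ G) (hw : w ∈ G)
    (hvw : v ≠ w) : koszulSign A v G * koszulSign A w (G.erase v) +
      koszulSign A w G * koszulSign A v (G.erase w) = 0 := by
  rw [koszulSign_erase hv, koszulSign_erase hw]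
  obtain h | h := hvw.lt_or_gt <;> simp [h, h.not_gt] <;> ring

lemma koszulSign_mul_koszulSign_erase_add_insert {v w : σ} {G : Finset σ} (hv : v ∉ G)
    (hw : w ∈ G) : koszulSign A w G * koszulSign A v (G.erase w) +
      koszulSign A v G * koszulSign A w (insert v G) = 0 := by
  rw [koszulSign_erase hw, koszulSign_insert hv]
  obtain h | h := (ne_of_mem_of_not_mem hw hv).lt_or_gt <;> simp [h, h.not_gt] <;> ring

end KoszulSign

section KoszulComplex

variable (A M : Type*) {σ : Type*} [CommRing A] [AddCommGroup M] [Module A M] [LinearOrder σ]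

/-- The simplicial coboundary of the full simplex on `F`, on functions of the faces of `F`. -/
def koszulDifferential (F : Finset σ) : (Finset σ → M) →ₗ[A] (Finset σ → M) :=
  LinearMap.pi fun G =>
    if G ⊆ F then ∑ v ∈ G, koszulSign A v G • LinearMap.proj (G.erase v) else 0

/-- The contraction of the full simplex to its vertex `v`. -/
def koszulHomotopy (v : σ) : (Finset σ → M) →ₗ[A] (Finset σ → M) :=
  LinearMap.pi fun G => if v ∈ G then 0 else koszulSign A v G • LinearMap.proj (insert v G)

variable {A M} {F G : Finset σ} {v : σ}

lemma koszulDifferential_apply (x : Finset σ → M) (hG : G ⊆ F) :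
    koszulDifferential A M F x G = ∑ v ∈ G, koszulSign A v G • x (G.erase v) := by
  simp [koszulDifferential, hG]

lemma koszulDifferential_apply_of_not_subset (x : Finset σ → M) (hG : ¬ G ⊆ F) :
    koszulDifferential A M F x G = 0 := by
  simp [koszulDifferential, hG]

lemma exists_mem_of_koszulDifferential_ne_zero {x : Finset σ → M}
    (h : koszulDifferential A M F x G ≠ 0) : G ⊆ F ∧ ∃ v ∈ G, x (G.erase v) ≠ 0 := by
  by_cases hG : G ⊆ F
  · rw [koszulDifferential_apply x hG] at h
    obtain ⟨v, hv, hvx⟩ := Finset.exists_ne_zero_of_sum_ne_zero h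
    exact ⟨hG, v, hv, right_ne_zero_of_smul hvx⟩
  · exact absurd (koszulDifferential_apply_of_not_subset x hG) h

lemma koszulHomotopy_apply_of_mem (x : Finset σ → M) (hv : v ∈ G) :
    koszulHomotopy A M v x G = 0 := by
  simp [koszulHomotopy, hv]

lemma koszulHomotopy_apply_of_notMem (x : Finset σ → M) (hv : v ∉ G) :
    koszulHomotopy A M v x G = koszulSign A v G • x (insert v G) := by
  simp [koszulHomotopy, hv]

lemma notMem_of_koszulHomotopy_ne_zero {x : Finset σ → M} (h : koszulHomotopy A M v x G ≠ 0) :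
    v ∉ G ∧ x (insert v G) ≠ 0 := by
  by_cases hv : v ∈ G
  · exact absurd (koszulHomotopy_apply_of_mem x hv) h
  · rw [koszulHomotopy_apply_of_notMem x hv] at h
    exact ⟨hv, right_ne_zero_of_smul h⟩

lemma koszulDifferential_koszulDifferential (F : Finset σ) (x : Finset σ → M) :
    koszulDifferential A M F (koszulDifferential A M F x) = 0 := by
  funext G
  by_cases hG : G ⊆ F
  · have expand : ∀ v ∈ G, koszulSign A v G • koszulDifferential A M F x (G.erase v) =
        ∑ w ∈ G.erase v, (koszulSign A v G * koszulSign A w (G.erase v)) •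
          x ((G.erase v).erase w) := fun v _ => by
      simp_rw [koszulDifferential_apply x ((Finset.erase_subset v G).trans hG), Finset.smul_sum,
        mul_smul]
    rw [koszulDifferential_apply _ hG, Finset.sum_congr rfl expand, Finset.sum_sigma']
    refine Finset.sum_involution (fun a _ => ⟨a.2, a.1⟩) ?_ ?_ ?_ fun _ _ => rfl
    all_goals
      rintro ⟨v, w⟩ hvw
      obtain ⟨hv, hwv, hw⟩ : v ∈ G ∧ w ≠ v ∧ w ∈ G := by simpa using hvw
    · simp only
      rw [Finset.erase_right_comm, ← add_smul,
        koszulSign_mul_koszulSign_erase_add hv hw hwv.symm, zero_smul]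
    · exact fun _ h => hwv (congrArg Sigma.fst h)
    · simpa using ⟨hw, hwv.symm, hv⟩
  · exact koszulDifferential_apply_of_not_subset _ hG

lemma koszulDifferential_compLeft {M' : Type*} [AddCommGroup M'] [Module A M'] (f : M →ₗ[A] M')
    (F : Finset σ) (x : Finset σ → M) : koszulDifferential A M' F (f.compLeft (Finset σ) x) =
      f.compLeft (Finset σ) (koszulDifferential A M F x) := by
  funext G
  by_cases hG : G ⊆ F <;> simp [koszulDifferential, hG]

lemma koszulDifferential_koszulHomotopy_apply_of_mem (hv : v ∈ G) (hG : G ⊆ F)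
    (x : Finset σ → M) : koszulDifferential A M F (koszulHomotopy A M v x) G = x G := by
  rw [koszulDifferential_apply _ hG, Finset.sum_eq_single_of_mem v hv fun w _ hwv => by
      rw [koszulHomotopy_apply_of_mem _ (Finset.mem_erase_of_ne_of_mem hwv.symm hv), smul_zero],
    koszulHomotopy_apply_of_notMem _ (Finset.notMem_erase v G), Finset.insert_erase hv,
    koszulSign_erase_self, smul_smul, koszulSign_mul_self, one_smul]

lemma koszulDifferential_koszulHomotopy_add_apply_of_notMem (hvG : v ∉ G) (hv : v ∈ F)
    (hG : G ⊆ F) (x : Finset σ → M) : koszulDifferential A M F (koszulHomotopy A M v x) G +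
      koszulHomotopy A M v (koszulDifferential A M F x) G = x G := by
  have cancel : ∀ w ∈ G, koszulSign A w G • koszulHomotopy A M v x (G.erase w) +
      (koszulSign A v G * koszulSign A w (insert v G)) • x ((insert v G).erase w) = 0 := by
    intro w hw
    rw [koszulHomotopy_apply_of_notMem _ fun h => hvG (Finset.mem_of_mem_erase h), smul_smul,
      Finset.erase_insert_of_ne (ne_of_mem_of_not_mem hw hvG).symm, ← add_smul,
      koszulSign_mul_koszulSign_erase_add_insert hvG hw, zero_smul]
  rw [koszulHomotopy_apply_of_notMem _ hvG, koszulDifferential_apply _ hG,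
    koszulDifferential_apply _ (Finset.insert_subset hv hG), Finset.sum_insert hvG, smul_add,
    Finset.erase_insert hvG, smul_smul, koszulSign_insert_self, koszulSign_mul_self, one_smul,
    add_left_comm, Finset.smul_sum, ← Finset.sum_add_distrib]
  simp_rw [smul_smul]
  rw [Finset.sum_eq_zero cancel, add_zero]

lemma koszulDifferential_koszulHomotopy_add (hv : v ∈ F) {x : Finset σ → M}
    (hx : x ∈ supportedFunctions A M {G | G ⊆ F}) :
    koszulDifferential A M F (koszulHomotopy A M v x) +
      koszulHomotopy A M v (koszulDifferential A M F x) = x := by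
  funext G
  rw [Pi.add_apply]
  by_cases hG : G ⊆ F
  · by_cases hvG : v ∈ G
    · rw [koszulHomotopy_apply_of_mem _ hvG, add_zero,
        koszulDifferential_koszulHomotopy_apply_of_mem hvG hG]
    · exact koszulDifferential_koszulHomotopy_add_apply_of_notMem hvG hv hG x
  · have hxG : x G = 0 := not_imp_comm.1 (hx G) hG
    rw [hxG, koszulDifferential_apply_of_not_subset _ hG, zero_add]
    by_contra h
    obtain ⟨-, h⟩ := notMem_of_koszulHomotopy_ne_zero h
    exact hG ((Finset.subset_insert v G).trans (exists_mem_of_koszulDifferential_ne_zero h).1)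

lemma koszulDifferential_koszulHomotopy (hv : v ∈ F) {x : Finset σ → M}
    (hx : x ∈ supportedFunctions A M {G | G ⊆ F}) (hdx : koszulDifferential A M F x = 0) :
    koszulDifferential A M F (koszulHomotopy A M v x) = x := by
  simpa [hdx] using koszulDifferential_koszulHomotopy_add hv hx

lemma koszulDifferential_mem_supportedFunctions {q : ℕ} {x : Finset σ → M}
    (hx : x ∈ supportedFunctions A M {G | G ⊆ F ∧ G.card = q}) :
    koszulDifferential A M F x ∈ supportedFunctions A M {G | G ⊆ F ∧ G.card = q + 1} := by
  intro G hG
  obtain ⟨hGF, v, hv, hvx⟩ := exists_mem_of_koszulDifferential_ne_zero hG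
  exact ⟨hGF, by rw [← (hx _ hvx).2, Finset.card_erase_add_one hv]⟩

lemma exists_koszulDifferential_eq {q : ℕ} {x : Finset σ → M}
    (hx : x ∈ supportedFunctions A M {G | G ⊆ F ∧ G.card = q + 1})
    (hdx : koszulDifferential A M F x = 0) :
    ∃ y ∈ supportedFunctions A M {G | G ⊆ F ∧ G.card = q}, koszulDifferential A M F y = x := by
  obtain rfl | ⟨v, hv⟩ := F.eq_empty_or_nonempty
  · refine ⟨0, zero_mem _, (map_zero _).trans (funext fun G => ?_)⟩
    by_contra h
    obtain ⟨hG, hcard⟩ := hx G (Ne.symm h)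
    simp [Finset.subset_empty.1 hG] at hcard
  · refine ⟨koszulHomotopy A M v x, fun G hG => ?_,
      koszulDifferential_koszulHomotopy hv (fun G hG => (hx G hG).1) hdx⟩
    obtain ⟨hvG, hG⟩ := notMem_of_koszulHomotopy_ne_zero hG
    obtain ⟨hGF, hcard⟩ := hx _ hG
    rw [Finset.card_insert_of_notMem hvG] at hcard
    exact ⟨(Finset.subset_insert v G).trans hGF, Nat.succ_injective hcard⟩

end KoszulComplex

section Transversal

variable {ι σ : Type*}

/-- `G` is a transversal of the family `u`: it meets every member. -/
def IsTransversal (u : ι → Finset σ) (G : Finset σ) : Prop := ∀ s, ¬ Disjoint (u s) G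

lemma IsTransversal.mono {u : ι → Finset σ} {G G' : Finset σ} (hG : IsTransversal u G)
    (h : G ⊆ G') : IsTransversal u G' :=
  fun s hs => hG s (hs.mono_right h)

variable (k : Type*) [CommRing k] [LinearOrder σ] (u : ι → Finset σ) (F : Finset σ)

/-- The functions on the `r`-element transversals contained in `F`. -/
def transversalCochains (r : ℕ) : Submodule k (Finset σ → k) :=
  supportedFunctions k k {G | G ⊆ F ∧ IsTransversal u G ∧ G.card = r}

/-- The cocycles of the simplicial cochain complex of the full simplex on `F` relative to the
subcomplex of non-transversals. -/
def transversalCocycles (r : ℕ) : Submodule k (Finset σ → k) :=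
  transversalCochains k u F r ⊓ LinearMap.ker (koszulDifferential k k F)

/-- The coboundaries of the simplicial cochain complex of the full simplex on `F` relative to the
subcomplex of non-transversals. -/
def transversalCoboundaries : ℕ → Submodule k (Finset σ → k)
  | 0 => ⊥
  | r + 1 => (transversalCochains k u F r).map (koszulDifferential k k F)

variable {k u F}

lemma transversalCocycles_le_of_card_lt {r : ℕ} (hr : F.card < r) :
    transversalCocycles k u F r ≤ transversalCoboundaries k u F r := by
  intro x hx
  have : x = 0 := funext fun G => by
    by_contra hG
    obtain ⟨hGF, -, hcard⟩ := hx.1 G hG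
    exact hr.not_ge (hcard ▸ Finset.card_le_card hGF)
  exact this ▸ zero_mem _

lemma transversalCocycles_le_of_not_isTransversal (hF : ¬ IsTransversal u F) (r : ℕ) :
    transversalCocycles k u F r ≤ transversalCoboundaries k u F r := by
  intro x hx
  have : x = 0 := funext fun G => by
    by_contra hG
    obtain ⟨hGF, hG, -⟩ := hx.1 G hG
    exact hF (hG.mono hGF)
  exact this ▸ zero_mem _

lemma koszulHomotopy_mem_transversalCochains {v : σ}
    (hvF : ∀ G ⊆ F, IsTransversal u (insert v G) → IsTransversal u G) {r : ℕ} {x : Finset σ → k}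
    (hx : x ∈ transversalCochains k u F (r + 1)) :
    koszulHomotopy k k v x ∈ transversalCochains k u F r := by
  intro G hG
  obtain ⟨hvG, hG⟩ := notMem_of_koszulHomotopy_ne_zero hG
  obtain ⟨hGF, hG, hcard⟩ := hx _ hG
  rw [Finset.card_insert_of_notMem hvG] at hcard
  exact ⟨(Finset.subset_insert v G).trans hGF, hvF G ((Finset.subset_insert v G).trans hGF) hG,
    Nat.succ_injective hcard⟩

/-- If some vertex of `F` never matters for being a transversal, then the simplex on `F` and its
subcomplex of non-transversals are both cones over it. -/
lemma transversalCocycles_le_of_forall_insert {v : σ} (hv : v ∈ F)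
    (hvF : ∀ G ⊆ F, IsTransversal u (insert v G) → IsTransversal u G) (r : ℕ) :
    transversalCocycles k u F r ≤ transversalCoboundaries k u F r := by
  intro x hx
  have hdx := koszulDifferential_koszulHomotopy hv (fun G hG => (hx.1 G hG).1) hx.2
  cases r with
  | zero =>
    have : koszulHomotopy k k v x = 0 := funext fun G => by
      by_contra hG
      obtain ⟨-, hG⟩ := notMem_of_koszulHomotopy_ne_zero hG
      exact Finset.insert_ne_empty v G (Finset.card_eq_zero.1 (hx.1 _ hG).2.2)
    rw [this, map_zero] at hdx
    exact hdx ▸ zero_mem _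
  | succ r => exact ⟨_, koszulHomotopy_mem_transversalCochains hvF hx.1, hdx⟩

end Transversal

section CoverVerticalEdge

variable (k ι σ : Type*) [CommRing k]

/-- A function of subsets as an element of column `0` of the cover bicomplex. -/
def coverVerticalEdge : (Finset σ → k) →ₗ[k] ((Fin 0 → ι) → Finset σ → k) :=
  LinearMap.pi fun _ => LinearMap.id

lemma coverVerticalEdge_injective : Function.Injective (coverVerticalEdge k ι σ) :=
  fun _ _ h => congr_fun h Fin.elim0

end CoverVerticalEdge

section CoverBicomplex

variable (k : Type*) {ι σ : Type*} [CommRing k] [LinearOrder σ] (u : ι → Finset σ) (F : Finset σ)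

/-- Entry `(p, q)` of the cover bicomplex: functions of a `p`-tuple `T` in `ι` and a `q`-element
subset `G` of `F` disjoint from all `u (T i)`. -/
def coverBicomplex (p q : ℕ) : Submodule k ((Fin p → ι) → Finset σ → k) :=
  Submodule.pi Set.univ fun T =>
    supportedFunctions k k {G | G ⊆ F \ tupleUnion u T ∧ G.card = q}

/-- The horizontal differential of the cover bicomplex. -/
def coverHorizontal (p : ℕ) :
    ((Fin p → ι) → Finset σ → k) →ₗ[k] ((Fin (p + 1) → ι) → Finset σ → k) :=
  LinearMap.pi fun T => LinearMap.pi fun G =>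
    if G ⊆ F \ tupleUnion u T then
      LinearMap.proj T ∘ₗ tupleCoboundary k ι p ∘ₗ (LinearMap.proj G).compLeft _
    else 0

/-- The vertical differential of the cover bicomplex. -/
def coverVertical (p : ℕ) : ((Fin p → ι) → Finset σ → k) →ₗ[k] ((Fin p → ι) → Finset σ → k) :=
  LinearMap.pi fun T => koszulDifferential k k (F \ tupleUnion u T) ∘ₗ LinearMap.proj T

variable {k u F} {p q : ℕ}

lemma mem_coverBicomplex {x : (Fin p → ι) → Finset σ → k} : x ∈ coverBicomplex k u F p q ↔
    ∀ T G, x T G ≠ 0 → G ⊆ F \ tupleUnion u T ∧ G.card = q := by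
  simp [coverBicomplex, Submodule.mem_pi, supportedFunctions]

lemma coverHorizontal_apply (x : (Fin p → ι) → Finset σ → k) {T : Fin (p + 1) → ι}
    {G : Finset σ} (hG : G ⊆ F \ tupleUnion u T) :
    coverHorizontal k u F p x T G = tupleCoboundary k ι p (fun T' => x T' G) T := by
  rw [coverHorizontal, LinearMap.pi_apply, LinearMap.pi_apply, if_pos hG]
  rfl

lemma coverHorizontal_apply_of_not_subset (x : (Fin p → ι) → Finset σ → k) {T : Fin (p + 1) → ι}
    {G : Finset σ} (hG : ¬ G ⊆ F \ tupleUnion u T) : coverHorizontal k u F p x T G = 0 := by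
  rw [coverHorizontal, LinearMap.pi_apply, LinearMap.pi_apply, if_neg hG, LinearMap.zero_apply]

lemma coverVertical_apply (x : (Fin p → ι) → Finset σ → k) (T : Fin p → ι) :
    coverVertical k u F p x T = koszulDifferential k k (F \ tupleUnion u T) (x T) := rfl

lemma sdiff_tupleUnion_subset_comp (T : Fin (p + 1) → ι) (i : Fin (p + 1)) :
    F \ tupleUnion u T ⊆ F \ tupleUnion u (T ∘ i.succAbove) :=
  Finset.sdiff_subset_sdiff subset_rfl (tupleUnion_comp_subset T i.succAbove)

lemma tupleCoboundary_cons (f : (Fin (p + 1) → ι) → k) (s : ι) (T : Fin (p + 1) → ι) :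
    tupleCoboundary k ι (p + 1) f (Fin.cons s T) =
      f T - tupleCoboundary k ι p (fun T' => f (Fin.cons s T')) T := by
  rw [tupleCoboundary_apply, Fin.sum_univ_succ, cons_comp_zero_succAbove, tupleCoboundary_apply,
    sub_eq_add_neg, ← Finset.sum_neg_distrib]
  simp only [cons_comp_succ_succAbove, Fin.val_zero, pow_zero, one_mul, Fin.val_succ, pow_succ,
    mul_neg, mul_one, neg_mul]

lemma tupleCoboundary_tupleCoboundary (f : (Fin p → ι) → k) :
    tupleCoboundary k ι (p + 1) (tupleCoboundary k ι p f) = 0 := by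
  funext T
  simp_rw [tupleCoboundary_apply, Finset.mul_sum, Function.comp_assoc]
  exact sum_neg_one_pow_smul_succAbove_comp_succAbove (A := k) fun c => f (T ∘ c)

lemma coverHorizontal_mem {x : (Fin p → ι) → Finset σ → k} (hx : x ∈ coverBicomplex k u F p q) :
    coverHorizontal k u F p x ∈ coverBicomplex k u F (p + 1) q := by
  rw [mem_coverBicomplex] at hx ⊢
  intro T G h
  by_cases hG : G ⊆ F \ tupleUnion u T
  · rw [coverHorizontal_apply x hG, tupleCoboundary_apply] at h
    obtain ⟨i, -, hi⟩ := Finset.exists_ne_zero_of_sum_ne_zero h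
    exact ⟨hG, (hx _ _ (right_ne_zero_of_mul hi)).2⟩
  · exact absurd (coverHorizontal_apply_of_not_subset x hG) h

lemma coverHorizontal_coverVertical (x : (Fin p → ι) → Finset σ → k) :
    coverHorizontal k u F p (coverVertical k u F p x) =
      coverVertical k u F (p + 1) (coverHorizontal k u F p x) := by
  funext T G
  rw [coverVertical_apply]
  by_cases hG : G ⊆ F \ tupleUnion u T
  · calc coverHorizontal k u F p (coverVertical k u F p x) T G
        = ∑ i : Fin (p + 1), ∑ v ∈ G,
            (-1) ^ (i : ℕ) * (koszulSign k v G * x (T ∘ i.succAbove) (G.erase v)) := by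
          rw [coverHorizontal_apply _ hG, tupleCoboundary_apply]
          refine Finset.sum_congr rfl fun i _ => ?_
          rw [coverVertical_apply,
            koszulDifferential_apply _ (hG.trans (sdiff_tupleUnion_subset_comp T i)),
            Finset.mul_sum]
          rfl
      _ = ∑ v ∈ G, ∑ i : Fin (p + 1),
            koszulSign k v G * ((-1) ^ (i : ℕ) * x (T ∘ i.succAbove) (G.erase v)) := by
          rw [Finset.sum_comm]
          simp only [mul_left_comm]
      _ = koszulDifferential k k (F \ tupleUnion u T) (coverHorizontal k u F p x T) G := by
          rw [koszulDifferential_apply _ hG]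
          refine Finset.sum_congr rfl fun v _ => ?_
          rw [coverHorizontal_apply _ ((Finset.erase_subset v G).trans hG), tupleCoboundary_apply,
            smul_eq_mul, Finset.mul_sum]
  · rw [coverHorizontal_apply_of_not_subset _ hG, koszulDifferential_apply_of_not_subset _ hG]

lemma coverHorizontal_coverHorizontal (x : (Fin p → ι) → Finset σ → k) :
    coverHorizontal k u F (p + 1) (coverHorizontal k u F p x) = 0 := by
  funext T G
  by_cases hG : G ⊆ F \ tupleUnion u T
  · rw [coverHorizontal_apply _ hG, tupleCoboundary_apply]
    simp_rw [coverHorizontal_apply x (hG.trans (sdiff_tupleUnion_subset_comp T _))]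
    rw [← tupleCoboundary_apply, tupleCoboundary_tupleCoboundary]
    rfl
  · exact coverHorizontal_apply_of_not_subset _ hG

/-- A subset `G` disjoint from some `u s` is contractible in the horizontal direction, by prepending
`s` to all tuples. -/
lemma exists_coverHorizontal_eq {x : (Fin (p + 1) → ι) → Finset σ → k}
    (hx : x ∈ coverBicomplex k u F (p + 1) q) (hdx : coverHorizontal k u F (p + 1) x = 0) :
    ∃ y ∈ coverBicomplex k u F p q, coverHorizontal k u F p y = x := by
  classical
  rw [mem_coverBicomplex] at hx
  let y : (Fin p → ι) → Finset σ → k := fun T G =>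
    if h : ∃ s, Disjoint (u s) G then x (Fin.cons h.choose T) G else 0
  refine ⟨y, mem_coverBicomplex.2 fun T G hG => ?_, funext₂ fun T G => ?_⟩
  · obtain ⟨h, hG⟩ := (dite_ne_right_iff (P := ∃ s, Disjoint (u s) G)).1 hG
    obtain ⟨hGF, hcard⟩ := hx _ G hG
    rw [tupleUnion_cons] at hGF
    exact ⟨hGF.trans (Finset.sdiff_subset_sdiff subset_rfl Finset.subset_union_right), hcard⟩
  · by_cases hG : G ⊆ F \ tupleUnion u T
    · obtain ⟨hGF, hGT⟩ := Finset.subset_sdiff.1 hG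
      have h : ∃ s, Disjoint (u s) G :=
        ⟨T 0, (hGT.mono_right (subset_tupleUnion T 0)).symm⟩
      have hcons : G ⊆ F \ tupleUnion u (Fin.cons h.choose T : Fin (p + 2) → ι) := by
        rw [tupleUnion_cons, Finset.subset_sdiff, Finset.disjoint_union_right]
        exact ⟨hGF, h.choose_spec.symm, hGT⟩
      have hcocycle := congr_fun₂ hdx (Fin.cons h.choose T) G
      rw [coverHorizontal_apply x hcons, tupleCoboundary_cons] at hcocycle
      simp_rw [coverHorizontal_apply y hG, y, dif_pos h]
      exact (sub_eq_zero.1 hcocycle).symm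
    · rw [coverHorizontal_apply_of_not_subset y hG]
      exact (not_imp_comm.1 (fun h => (hx T G h).1) hG).symm

lemma exactCochainBicomplex_coverBicomplex :
    ExactCochainBicomplex (coverHorizontal k u F) (coverVertical k u F)
      (coverBicomplex k u F) where
  h_mem := coverHorizontal_mem
  v_mem hx T _ := koszulDifferential_mem_supportedFunctions (hx T trivial)
  h_v _ x := coverHorizontal_coverVertical x
  h_h _ x := coverHorizontal_coverHorizontal x
  v_v _ _ := funext fun _ => koszulDifferential_koszulDifferential _ _
  h_exact := exists_coverHorizontal_eq
  v_exact hx hdx := by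
    choose y hy hyx using fun T => exists_koszulDifferential_eq (hx T trivial) (congr_fun hdx T)
    exact ⟨y, fun T _ => hy T, funext hyx⟩

variable (k σ) in
/-- A cochain on `p`-tuples as an element of row `0` of the cover bicomplex. -/
def coverHorizontalEdge (p : ℕ) : ((Fin p → ι) → k) →ₗ[k] ((Fin p → ι) → Finset σ → k) :=
  (LinearMap.single k (fun _ : Finset σ => k) ∅).compLeft (Fin p → ι)

lemma coverHorizontalEdge_injective (p : ℕ) :
    Function.Injective (coverHorizontalEdge k σ (ι := ι) p) :=
  fun _ _ h => funext fun T => Pi.single_injective ∅ (congr_fun h T)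

lemma coverHorizontal_coverHorizontalEdge (f : (Fin p → ι) → k) :
    coverHorizontal k u F p (coverHorizontalEdge k σ p f) =
      coverHorizontalEdge k σ (p + 1) (tupleCoboundary k ι p f) := by
  funext T G
  obtain rfl | hG := eq_or_ne G ∅
  · rw [coverHorizontal_apply _ (Finset.empty_subset _)]
    simp [coverHorizontalEdge]
  · by_cases hGF : G ⊆ F \ tupleUnion u T
    · simp [coverHorizontal_apply _ hGF, coverHorizontalEdge, tupleCoboundary_apply, hG]
    · simp [coverHorizontal_apply_of_not_subset _ hGF, coverHorizontalEdge, hG]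

lemma map_coverHorizontalEdge_coverCochains (p : ℕ) :
    (coverCochains k u F p).map (coverHorizontalEdge k σ p) =
      coverBicomplex k u F p 0 ⊓ LinearMap.ker (coverVertical k u F p) := by
  ext x
  simp only [Submodule.mem_inf, mem_coverBicomplex, Finset.card_eq_zero]
  constructor
  · rintro ⟨f, hf, rfl⟩
    refine ⟨fun T G h => ?_, funext₂ fun T G => ?_⟩
    · obtain rfl : G = ∅ := by
        by_contra hG
        exact h (Pi.single_eq_of_ne hG _)
      exact ⟨Finset.empty_subset _, rfl⟩
    · by_contra h
      obtain ⟨hG, v, hv, h⟩ := exists_mem_of_koszulDifferential_ne_zero h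
      have hfT : f T ≠ 0 := fun hfT => h (by simp [coverHorizontalEdge, hfT])
      exact (Finset.mem_sdiff.1 (hG hv)).2 (hf T hfT (Finset.mem_sdiff.1 (hG hv)).1)
  · rintro ⟨hx, hdx⟩
    refine ⟨fun T => x T ∅, fun T hT v hv => ?_, funext₂ fun T G => ?_⟩
    · by_contra hvT
      have hv' : {v} ⊆ F \ tupleUnion u T := by simpa using ⟨hv, hvT⟩
      have := congr_fun₂ hdx T {v}
      rw [coverVertical_apply, koszulDifferential_apply _ hv'] at this
      exact hT (by simpa [koszulSign] using this)
    · obtain rfl | hG := eq_or_ne G ∅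
      · simp [coverHorizontalEdge]
      · have : x T G = 0 := by
          by_contra h
          exact hG (hx T G h).2
        simp [coverHorizontalEdge, hG, this]

lemma sdiff_tupleUnion_zero (T : Fin 0 → ι) : F \ tupleUnion u T = F := by
  simp [tupleUnion]

lemma coverVertical_coverVerticalEdge (φ : Finset σ → k) :
    coverVertical k u F 0 (coverVerticalEdge k ι σ φ) =
      coverVerticalEdge k ι σ (koszulDifferential k k F φ) := by
  funext T
  rw [coverVertical_apply, sdiff_tupleUnion_zero]
  rfl

lemma map_coverVerticalEdge_transversalCochains (q : ℕ) :
    (transversalCochains k u F q).map (coverVerticalEdge k ι σ) =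
      coverBicomplex k u F 0 q ⊓ LinearMap.ker (coverHorizontal k u F 0) := by
  ext x
  simp only [Submodule.mem_inf, mem_coverBicomplex, sdiff_tupleUnion_zero]
  constructor
  · rintro ⟨φ, hφ, rfl⟩
    refine ⟨fun _ G hG => ⟨(hφ G hG).1, (hφ G hG).2.2⟩, funext₂ fun T G => ?_⟩
    by_cases hG : G ⊆ F \ tupleUnion u T
    · have hφG : φ G = 0 := by
        by_contra h
        exact (hφ G h).2.1 (T 0) ((Finset.subset_sdiff.1 hG).2.mono_right
          (subset_tupleUnion T 0)).symm
      simp [coverHorizontal_apply _ hG, tupleCoboundary_apply, coverVerticalEdge, hφG]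
    · exact coverHorizontal_apply_of_not_subset _ hG
  · rintro ⟨hx, hdx⟩
    refine ⟨x Fin.elim0, fun G hG => ⟨(hx _ G hG).1, fun s hs => hG ?_, (hx _ G hG).2⟩,
      funext fun T => congrArg x (Subsingleton.elim _ _)⟩
    have hGs : G ⊆ F \ tupleUnion u fun _ : Fin 1 => s := by
      simpa [Finset.subset_sdiff, tupleUnion] using ⟨(hx _ G hG).1, hs.symm⟩
    have := congr_fun₂ hdx (fun _ => s) G
    rw [coverHorizontal_apply _ hGs, tupleCoboundary_apply] at this
    simpa [Subsingleton.elim _ Fin.elim0] using this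

lemma map_coverHorizontalEdge_coverCocycles (r : ℕ) :
    (coverCocycles k u F r).map (coverHorizontalEdge k σ r) =
      coverBicomplex k u F r 0 ⊓ LinearMap.ker (coverHorizontal k u F r) ⊓
        LinearMap.ker (coverVertical k u F r) := by
  rw [coverCocycles, map_inf_ker_of_comp_eq (coverHorizontalEdge_injective _)
    coverHorizontal_coverHorizontalEdge, map_coverHorizontalEdge_coverCochains, inf_right_comm]

lemma map_coverVerticalEdge_transversalCocycles (r : ℕ) :
    (transversalCocycles k u F r).map (coverVerticalEdge k ι σ) =
      coverBicomplex k u F 0 r ⊓ LinearMap.ker (coverHorizontal k u F 0) ⊓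
        LinearMap.ker (coverVertical k u F 0) := by
  rw [transversalCocycles, map_inf_ker_of_comp_eq (coverVerticalEdge_injective k ι σ)
    coverVertical_coverVerticalEdge, map_coverVerticalEdge_transversalCochains]

lemma map_coverHorizontalEdge_coverCoboundaries (r : ℕ) :
    (coverCoboundaries k u F (r + 1)).map (coverHorizontalEdge k σ (r + 1)) =
      (coverBicomplex k u F r 0 ⊓ LinearMap.ker (coverVertical k u F r)).map
        (coverHorizontal k u F r) := by
  rw [← map_coverHorizontalEdge_coverCochains, coverCoboundaries, ← Submodule.map_comp,
    ← Submodule.map_comp]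
  congr 1
  ext1 f
  exact (coverHorizontal_coverHorizontalEdge f).symm

lemma map_coverVerticalEdge_transversalCoboundaries (r : ℕ) :
    (transversalCoboundaries k u F (r + 1)).map (coverVerticalEdge k ι σ) =
      (coverBicomplex k u F 0 r ⊓ LinearMap.ker (coverHorizontal k u F 0)).map
        (coverVertical k u F 0) := by
  rw [← map_coverVerticalEdge_transversalCochains, transversalCoboundaries, ← Submodule.map_comp,
    ← Submodule.map_comp]
  congr 1
  ext1 φ
  exact (coverVertical_coverVerticalEdge φ).symm

lemma coverCoboundaries_le (r : ℕ) : coverCoboundaries k u F r ≤ coverCocycles k u F r := by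
  cases r with
  | zero => exact bot_le
  | succ r =>
    rintro _ ⟨f, hf, rfl⟩
    exact ⟨tupleCoboundary_mem_coverCochains hf, tupleCoboundary_tupleCoboundary f⟩

lemma transversalCoboundaries_le (r : ℕ) :
    transversalCoboundaries k u F r ≤ transversalCocycles k u F r := by
  cases r with
  | zero => exact bot_le
  | succ r =>
    rintro _ ⟨φ, hφ, rfl⟩
    refine ⟨fun G hG => ?_, koszulDifferential_koszulDifferential F φ⟩
    obtain ⟨hGF, v, hv, hφG⟩ := exists_mem_of_koszulDifferential_ne_zero hG
    obtain ⟨-, hG', hcard⟩ := hφ _ hφG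
    exact ⟨hGF, hG'.mono (Finset.erase_subset v G), by rw [← hcard, Finset.card_erase_add_one hv]⟩

theorem nonempty_coverSubquotient_equiv_transversalSubquotient (r : ℕ) :
    Nonempty (Subquotient (coverCocycles k u F r) (coverCoboundaries k u F r) ≃ₗ[k]
      Subquotient (transversalCocycles k u F r) (transversalCoboundaries k u F r)) := by
  obtain ⟨e⟩ := nonempty_subquotient_equiv_map_of_injective
    (coverHorizontalEdge_injective (k := k) (σ := σ) (ι := ι) r)
    (coverCoboundaries_le (k := k) (u := u) (F := F) r)
  obtain ⟨e'⟩ := nonempty_subquotient_equiv_map_of_injective (coverVerticalEdge_injective k ι σ)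
    (transversalCoboundaries_le (k := k) (u := u) (F := F) r)
  rw [map_coverHorizontalEdge_coverCocycles] at e
  rw [map_coverVerticalEdge_transversalCocycles] at e'
  cases r with
  | zero =>
    rw [coverCoboundaries, Submodule.map_bot] at e
    rw [transversalCoboundaries, Submodule.map_bot] at e'
    exact ⟨e.trans e'.symm⟩
  | succ r =>
    rw [map_coverHorizontalEdge_coverCoboundaries] at e
    rw [map_coverVerticalEdge_transversalCoboundaries] at e'
    obtain ⟨edge⟩ := (exactCochainBicomplex_coverBicomplex (k := k) (u := u)
      (F := F)).nonempty_edge_equiv_edge r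
    exact ⟨(e.trans edge).trans e'.symm⟩

end CoverBicomplex

section OrderComplex

variable {A M P : Type*} [CommRing A] [AddCommGroup M] [Module A M]

lemma apply_mem_of_mem_supported {X V : Type*} [AddCommGroup V] [Module A V]
    {T : (X →₀ M) →ₗ[A] V} {s : Set X} {S : Submodule A V}
    (h : ∀ c ∈ s, ∀ z, T (Finsupp.single c z) ∈ S) {x : X →₀ M}
    (hx : x ∈ Finsupp.supported M A s) : T x ∈ S := by
  rw [← Finsupp.sum_single x, map_finsuppSum]
  exact Submodule.finsuppSum_mem _ S x _ fun c hc => h c (hx (Finsupp.mem_support_iff.2 hc)) _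

/-- A strictly monotone tuple as a chain. -/
def orderChain [Preorder P] {m : ℕ} (τ : Fin m → P) (hτ : StrictMono τ) :
    pchains P m :=
  ⟨τ, hτ⟩

open Classical in
/-- The simplex with vertices `τ` as a chain with coefficient `z`, and `0` if `τ` is not strictly
monotone. -/
noncomputable def tupleChain [Preorder P] {m : ℕ} (z : M) (τ : Fin m → P) : pchains P m →₀ M :=
  if h : StrictMono τ then Finsupp.single (orderChain τ h) z else 0

variable (A) in
/-- The cone over chains with apex `p`. -/
noncomputable def chainCone [Preorder P] (p : P) (m : ℕ) :
    (pchains P m →₀ M) →ₗ[A] (pchains P (m + 1) →₀ M) :=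
  Finsupp.lsum ℕ fun c => open Classical in
    if h : StrictMono (Fin.cons p c.1 : Fin (m + 1) → P) then Finsupp.lsingle (orderChain _ h)
    else 0

section Preorder

variable [Preorder P] {m : ℕ}

lemma tupleChain_of_strictMono (z : M) {τ : Fin m → P} (hτ : StrictMono τ) :
    tupleChain z τ = Finsupp.single (orderChain τ hτ) z :=
  dif_pos hτ

lemma tupleChain_coe (z : M) (c : pchains P m) : tupleChain z c.1 = Finsupp.single c z :=
  tupleChain_of_strictMono z c.2

lemma tupleChain_of_not_strictMono (z : M) {τ : Fin m → P} (hτ : ¬ StrictMono τ) :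
    tupleChain z τ = 0 :=
  dif_neg hτ

lemma simpBdry_tupleChain (z : M) {τ : Fin (m + 1) → P} (hτ : StrictMono τ) :
    simpBdry A M P m (tupleChain z τ) =
      ∑ i : Fin (m + 1), (-1 : A) ^ (i : ℕ) • tupleChain z (τ ∘ i.succAbove) := by
  rw [tupleChain_of_strictMono z hτ, simpBdry, Finsupp.lsum_single, LinearMap.sum_apply]
  refine Finset.sum_congr rfl fun i _ => ?_
  rw [tupleChain_of_strictMono z (hτ.comp (Fin.strictMono_succAbove i))]
  rfl

lemma chainCone_tupleChain (p : P) (z : M) {τ : Fin m → P} (hτ : StrictMono τ) :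
    chainCone A p m (tupleChain z τ) = tupleChain z (Fin.cons p τ : Fin (m + 1) → P) := by
  rw [tupleChain_of_strictMono z hτ, chainCone, Finsupp.lsum_single]
  by_cases h : StrictMono (Fin.cons p τ : Fin (m + 1) → P)
  · rw [tupleChain_of_strictMono z h]
    exact LinearMap.congr_fun (dif_pos h) z
  · rw [tupleChain_of_not_strictMono z h]
    exact LinearMap.congr_fun (dif_neg h) z

lemma simpBdry_simpBdry (x : pchains P (m + 2) →₀ M) :
    simpBdry A M P m (simpBdry A M P (m + 1) x) = 0 := by
  induction x using Finsupp.induction_linear with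
  | zero => simp only [map_zero]
  | add x y hx hy => rw [map_add, map_add, hx, hy, add_zero]
  | single c z =>
    rw [← tupleChain_coe z c, simpBdry_tupleChain z c.2, map_sum]
    simp_rw [map_smul, simpBdry_tupleChain z (c.2.comp (Fin.strictMono_succAbove _)),
      Finset.smul_sum, Function.comp_assoc]
    exact sum_neg_one_pow_smul_succAbove_comp_succAbove fun τ => tupleChain z (c.1 ∘ τ)

lemma range_simpBdry_le (m : ℕ) : LinearMap.range (simpBdry A M P m) ≤ simpCycles A M P m := by
  cases m with
  | zero => exact le_top
  | succ m =>
    rintro _ ⟨x, rfl⟩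
    exact simpBdry_simpBdry x

lemma simpBdry_mem_supported {s : Set P} {x : pchains P (m + 1) →₀ M}
    (hx : x ∈ Finsupp.supported M A {c : pchains P (m + 1) | ∀ i, c.1 i ∈ s}) :
    simpBdry A M P m x ∈ Finsupp.supported M A {c : pchains P m | ∀ i, c.1 i ∈ s} := by
  refine apply_mem_of_mem_supported (fun c hc z => ?_) hx
  rw [← tupleChain_coe z c, simpBdry_tupleChain z c.2]
  refine Submodule.sum_mem _ fun i _ => Submodule.smul_mem _ _ ?_
  rw [tupleChain_of_strictMono z (c.2.comp (Fin.strictMono_succAbove i))]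
  exact Finsupp.single_mem_supported A z fun j => hc _

lemma chainCone_mem_supported {s : Set P} {p : P} (hp : p ∈ s) {x : pchains P m →₀ M}
    (hx : x ∈ Finsupp.supported M A {c : pchains P m | ∀ i, c.1 i ∈ s}) :
    chainCone A p m x ∈ Finsupp.supported M A {c : pchains P (m + 1) | ∀ i, c.1 i ∈ s} := by
  refine apply_mem_of_mem_supported (fun c hc z => ?_) hx
  rw [← tupleChain_coe z c, chainCone_tupleChain p z c.2]
  by_cases h : StrictMono (Fin.cons p c.1 : Fin (m + 1) → P)
  · rw [tupleChain_of_strictMono z h]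
    exact Finsupp.single_mem_supported A z (Fin.cons hp hc)
  · rw [tupleChain_of_not_strictMono z h]
    exact zero_mem _

lemma simpBdry_tupleChain_cons (z : M) {p : P} {τ : Fin (m + 1) → P}
    (hτ : StrictMono (Fin.cons p τ : Fin (m + 2) → P)) :
    simpBdry A M P (m + 1) (tupleChain z (Fin.cons p τ : Fin (m + 2) → P)) = tupleChain z τ -
      ∑ i : Fin (m + 1), (-1 : A) ^ (i : ℕ) •
        tupleChain z (Fin.cons p (τ ∘ i.succAbove) : Fin (m + 1) → P) := by
  rw [simpBdry_tupleChain z hτ, Fin.sum_univ_succ, cons_comp_zero_succAbove, sub_eq_add_neg,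
    ← Finset.sum_neg_distrib]
  simp only [cons_comp_succ_succAbove, Fin.val_zero, pow_zero, one_smul, Fin.val_succ, pow_succ,
    mul_neg, mul_one, neg_smul]

lemma simpBdry_chainCone_zero (p : P) (x : pchains P 0 →₀ M) :
    simpBdry A M P 0 (chainCone A p 0 x) = x := by
  induction x using Finsupp.induction_linear with
  | zero => simp only [map_zero]
  | add x y hx hy => rw [map_add, map_add, hx, hy]
  | single c z =>
    rw [← tupleChain_coe z c, chainCone_tupleChain p z c.2,
      simpBdry_tupleChain z fun i j hij => absurd (Subsingleton.elim (α := Fin 1) i j) hij.ne,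
      Fin.sum_univ_one, cons_comp_zero_succAbove, Fin.val_zero, pow_zero, one_smul]

end Preorder

section PartialOrder

variable [PartialOrder P] {m : ℕ}

lemma simpBdry_chainCone_tupleChain (z : M) {p : P} {τ : Fin (m + 1) → P} (hτ : StrictMono τ)
    (hp : p ≤ τ 0) :
    simpBdry A M P (m + 1) (chainCone A p (m + 1) (tupleChain z τ)) +
      chainCone A p m (simpBdry A M P m (tupleChain z τ)) = tupleChain z τ := by
  have cone_boundary : chainCone A p m (simpBdry A M P m (tupleChain z τ)) =
      ∑ i : Fin (m + 1), (-1 : A) ^ (i : ℕ) •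
        tupleChain z (Fin.cons p (τ ∘ i.succAbove) : Fin (m + 1) → P) := by
    simp_rw [simpBdry_tupleChain z hτ, map_sum, map_smul,
      chainCone_tupleChain p z (hτ.comp (Fin.strictMono_succAbove _))]
  rw [cone_boundary, chainCone_tupleChain p z hτ]
  obtain hp | rfl := hp.lt_or_eq
  · have hcons : StrictMono (Fin.cons p τ : Fin (m + 2) → P) :=
      strictMono_vecCons.2 ⟨hp, hτ⟩
    rw [simpBdry_tupleChain_cons z hcons, sub_add_cancel]
  · have hcons : ¬ StrictMono (Fin.cons (τ 0) τ : Fin (m + 2) → P) := fun h =>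
      lt_irrefl (τ 0) (h (Fin.succ_pos 0))
    have degenerate (i : Fin m) :
        ¬ StrictMono (Fin.cons (τ 0) (τ ∘ i.succ.succAbove) : Fin (m + 1) → P) := by
      cases m with
      | zero => exact i.elim0
      | succ m => exact fun h => by simpa using h (Fin.succ_pos 0)
    have first : (Fin.cons (τ 0) (τ ∘ (0 : Fin (m + 1)).succAbove) : Fin (m + 1) → P) = τ := by
      rw [Fin.succAbove_zero]
      exact Fin.cons_self_tail τ
    rw [tupleChain_of_not_strictMono z hcons, map_zero, zero_add, Fin.sum_univ_succ, first]
    simp [tupleChain_of_not_strictMono z (degenerate _)]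

/-- The order complex of a poset with least element `p` is a cone with apex `p`. -/
lemma exists_simpBdry_eq {s : Set P} {p : P} (hp : IsLeast s p) {x : pchains P m →₀ M}
    (hx : x ∈ Finsupp.supported M A {c : pchains P m | ∀ i, c.1 i ∈ s})
    (hcycle : x ∈ simpCycles A M P m) :
    ∃ y ∈ Finsupp.supported M A {c : pchains P (m + 1) | ∀ i, c.1 i ∈ s},
      simpBdry A M P m y = x := by
  refine ⟨_, chainCone_mem_supported hp.1 hx, ?_⟩
  cases m with
  | zero => exact simpBdry_chainCone_zero p x
  | succ m =>
    have homotopy : simpBdry A M P (m + 1) (chainCone A p (m + 1) x) +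
        chainCone A p m (simpBdry A M P m x) = x := by
      refine sub_eq_zero.1 (apply_mem_of_mem_supported (S := ⊥)
        (T := simpBdry A M P (m + 1) ∘ₗ chainCone A p (m + 1) +
          chainCone A p m ∘ₗ simpBdry A M P m - LinearMap.id) (fun c hc z => ?_) hx)
      rw [← tupleChain_coe z c]
      exact sub_eq_zero.2 (simpBdry_chainCone_tupleChain z c.2 (hp.2 (hc 0)))
    rwa [LinearMap.mem_ker.1 hcycle, map_zero, add_zero] at homotopy

end PartialOrder

end OrderComplex

section TransversalPoset

/-- The poset `P`, through `st : P → Finset σ`, is a poset of proper transversals of `u` inside `F`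
ordered by reverse inclusion, in which the transversals contained in any `G ⊂ F` have a largest
element. -/
structure IsTransversalPoset {ι σ P : Type*} [PartialOrder P] (u : ι → Finset σ) (F : Finset σ)
    (st : P → Finset σ) : Prop where
  antitone : Antitone st
  ssubset : ∀ p, st p ⊂ F
  isTransversal : ∀ p, IsTransversal u (st p)
  exists_isLeast : ∀ G ⊂ F, IsTransversal u G → ∃ p, IsLeast {q | st q ⊆ G} p

variable (A : Type*) {ι σ P : Type*} [CommRing A] [PartialOrder P]

/-- Entry `(m, q)` of the chain bicomplex: functions assigning to a transversal `G ⊆ F` with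
`q` elements fewer than `F` a chain of length `m` of elements of `P` contained in `G`. -/
noncomputable def chainBicomplex (u : ι → Finset σ) (F : Finset σ) (st : P → Finset σ) (m q : ℕ) :
    Submodule A (Finset σ → pchains P m →₀ A) :=
  supportedFunctions A _ {G | G ⊆ F ∧ IsTransversal u G ∧ G.card + q = F.card} ⊓
    Submodule.pi Set.univ fun G => Finsupp.supported A A {c | ∀ i, c.1 i ∈ {p | st p ⊆ G}}

variable (P σ) in
/-- The horizontal differential of the chain bicomplex. -/
noncomputable def chainHorizontal (m : ℕ) :
    (Finset σ → pchains P (m + 1) →₀ A) →ₗ[A] (Finset σ → pchains P m →₀ A) :=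
  (simpBdry A A P m).compLeft (Finset σ)

variable {A} {u : ι → Finset σ} {F : Finset σ} {st : P → Finset σ} {m q : ℕ}

lemma chainHorizontal_mem {x : Finset σ → pchains P (m + 1) →₀ A}
    (hx : x ∈ chainBicomplex A u F st (m + 1) q) :
    chainHorizontal A σ P m x ∈ chainBicomplex A u F st m q := by
  refine ⟨fun G hG => hx.1 G fun h => hG ?_, fun G _ => simpBdry_mem_supported (hx.2 G trivial)⟩
  exact (congrArg _ h).trans (map_zero (simpBdry A A P m))

lemma apply_mem_simpCycles {x : Finset σ → pchains P m →₀ A}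
    (hx : x ∈ chainCycles (W := fun m => Finset σ → pchains P m →₀ A) (chainHorizontal A σ P) m)
    (G : Finset σ) :
    x G ∈ simpCycles A A P m := by
  cases m with
  | zero => trivial
  | succ m => exact congr_fun hx G

lemma IsTransversalPoset.exists_chainHorizontal_eq (hst : IsTransversalPoset u F st)
    {x : Finset σ → pchains P m →₀ A} (hx : x ∈ chainBicomplex A u F st m (q + 1))
    (hdx : x ∈ chainCycles (W := fun m => Finset σ → pchains P m →₀ A) (chainHorizontal A σ P) m) :
    ∃ y ∈ chainBicomplex A u F st (m + 1) (q + 1), chainHorizontal A σ P m y = x := by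
  have fill (G : Finset σ) : ∃ y ∈ Finsupp.supported A A {c | ∀ i, c.1 i ∈ {p | st p ⊆ G}},
      simpBdry A A P m y = x G ∧ (y ≠ 0 → x G ≠ 0) := by
    by_cases hG : x G = 0
    · exact ⟨0, zero_mem _, by rw [map_zero, hG], fun h => absurd rfl h⟩
    · obtain ⟨hGF, hGu, hcard⟩ := hx.1 G hG
      have hne : G ≠ F := fun h => by
        rw [h] at hcard
        lia
      obtain ⟨p, hp⟩ := hst.exists_isLeast G (hGF.ssubset_of_ne hne) hGu
      obtain ⟨y, hy, hyx⟩ := exists_simpBdry_eq hp (hx.2 G trivial) (apply_mem_simpCycles hdx G)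
      exact ⟨y, hy, hyx, fun _ => hG⟩
  choose y hy hyx hy0 using fill
  exact ⟨y, ⟨fun G hG => hx.1 G (hy0 G hG), fun G _ => hy G⟩, funext hyx⟩

section HorizontalEdge

variable [DecidableEq σ]

variable (A P) in
/-- A chain as an element of row `0` of the chain bicomplex. -/
noncomputable def chainHorizontalEdge (F : Finset σ) (m : ℕ) :
    (pchains P m →₀ A) →ₗ[A] (Finset σ → pchains P m →₀ A) :=
  LinearMap.single A (fun _ => pchains P m →₀ A) F

lemma chainHorizontalEdge_injective (F : Finset σ) (m : ℕ) :
    Function.Injective (chainHorizontalEdge A P F m) :=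
  Pi.single_injective (M := fun _ => pchains P m →₀ A) F

lemma chainHorizontalEdge_apply_self (z : pchains P m →₀ A) :
    chainHorizontalEdge A P F m z F = z :=
  Pi.single_eq_same (M := fun _ => pchains P m →₀ A) F z

lemma chainHorizontalEdge_apply_of_ne {G : Finset σ} (hG : G ≠ F) (z : pchains P m →₀ A) :
    chainHorizontalEdge A P F m z G = 0 :=
  Pi.single_eq_of_ne (M := fun _ => pchains P m →₀ A) hG z

lemma chainHorizontal_chainHorizontalEdge (F : Finset σ) (z : pchains P (m + 1) →₀ A) :
    chainHorizontal A σ P m (chainHorizontalEdge A P F (m + 1) z) =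
      chainHorizontalEdge A P F m (simpBdry A A P m z) :=
  funext fun G => Pi.apply_single (fun _ => simpBdry A A P m) (fun _ => map_zero _) F z G

lemma IsTransversalPoset.map_chainHorizontalEdge_top (hst : IsTransversalPoset u F st)
    (hF : IsTransversal u F) (m : ℕ) :
    (⊤ : Submodule A (pchains P m →₀ A)).map (chainHorizontalEdge A P F m) =
      chainBicomplex A u F st m 0 := by
  ext x
  constructor
  · rintro ⟨z, -, rfl⟩
    refine ⟨fun G hG => ?_, fun G _ c hc i => ?_⟩
    · obtain rfl : G = F := by_contra fun h => hG (chainHorizontalEdge_apply_of_ne h z)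
      exact ⟨subset_rfl, hF, add_zero _⟩
    · obtain rfl : G = F := by_contra fun h => Finsupp.mem_support_iff.1 hc
        (DFunLike.congr_fun (chainHorizontalEdge_apply_of_ne h z) c)
      exact (hst.ssubset _).subset
  · intro hx
    refine ⟨x F, trivial, funext fun G => ?_⟩
    obtain rfl | hG := eq_or_ne G F
    · exact chainHorizontalEdge_apply_self _
    · rw [chainHorizontalEdge_apply_of_ne hG]
      by_contra hxG
      obtain ⟨hGF, -, hcard⟩ := hx.1 G (Ne.symm hxG)
      exact hG (Finset.eq_of_subset_of_card_le hGF hcard.ge)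

lemma IsTransversalPoset.map_chainHorizontalEdge_simpCycles (hst : IsTransversalPoset u F st)
    (hF : IsTransversal u F) (m : ℕ) :
    (simpCycles A A P m).map (chainHorizontalEdge A P F m) = chainBicomplex A u F st m 0 ⊓
      chainCycles (W := fun m => Finset σ → pchains P m →₀ A) (chainHorizontal A σ P) m := by
  rw [← hst.map_chainHorizontalEdge_top hF]
  cases m with
  | zero => exact (inf_top_eq _).symm
  | succ m =>
    have := map_inf_ker_of_comp_eq (chainHorizontalEdge_injective (A := A) (P := P) F m)
      (chainHorizontal_chainHorizontalEdge F) ⊤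
    rwa [top_inf_eq] at this

lemma IsTransversalPoset.map_chainHorizontalEdge_range (hst : IsTransversalPoset u F st)
    (hF : IsTransversal u F) (m : ℕ) :
    (LinearMap.range (simpBdry A A P m)).map (chainHorizontalEdge A P F m) =
      (chainBicomplex A u F st (m + 1) 0).map (chainHorizontal A σ P m) := by
  rw [← hst.map_chainHorizontalEdge_top hF, LinearMap.range_eq_map, ← Submodule.map_comp,
    ← Submodule.map_comp]
  congr 1
  exact LinearMap.ext fun z => (chainHorizontal_chainHorizontalEdge F z).symm

end HorizontalEdge

variable (A σ P) in
/-- A function of subsets as an element of column `0` of the chain bicomplex. -/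
noncomputable def chainVerticalEdge : (Finset σ → A) →ₗ[A] (Finset σ → pchains P 0 →₀ A) :=
  (Finsupp.lsingle (orderChain Fin.elim0 fun i => i.elim0)).compLeft (Finset σ)

lemma chainVerticalEdge_injective : Function.Injective (chainVerticalEdge A σ P) :=
  fun _ _ h => funext fun G => Finsupp.single_injective _ (congr_fun h G)

lemma map_chainVerticalEdge_transversalCochains {r : ℕ} (hr : r + q = F.card) :
    (transversalCochains A u F r).map (chainVerticalEdge A σ P) = chainBicomplex A u F st 0 q := by
  ext x
  constructor
  · rintro ⟨φ, hφ, rfl⟩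
    refine ⟨fun G hG => ?_, fun G _ c _ i => i.elim0⟩
    obtain ⟨hGF, hGu, hcard⟩ := hφ G fun h => hG
      ((congrArg _ h).trans (Finsupp.single_zero _))
    exact ⟨hGF, hGu, hcard ▸ hr⟩
  · intro hx
    refine ⟨fun G => x G (orderChain Fin.elim0 fun i => i.elim0), fun G hG => ?_,
      funext fun G => Finsupp.ext fun c => ?_⟩
    · obtain ⟨hGF, hGu, hcard⟩ := hx.1 G fun h => hG (DFunLike.congr_fun h _)
      exact ⟨hGF, hGu, by lia⟩
    · obtain rfl : c = orderChain Fin.elim0 fun i => i.elim0 :=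
        Subtype.ext (Subsingleton.elim _ _)
      exact Finsupp.single_eq_same

variable [LinearOrder σ]

lemma koszulDifferential_mem_chainBicomplex {x : Finset σ → pchains P m →₀ A}
    (hx : x ∈ chainBicomplex A u F st m (q + 1)) :
    koszulDifferential A _ F x ∈ chainBicomplex A u F st m q := by
  refine ⟨fun G hG => ?_, fun G _ => ?_⟩
  · obtain ⟨hGF, v, hv, hxG⟩ := exists_mem_of_koszulDifferential_ne_zero hG
    obtain ⟨-, hGu, hcard⟩ := hx.1 _ hxG
    have := Finset.card_erase_add_one hv
    exact ⟨hGF, hGu.mono (Finset.erase_subset v G), by lia⟩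
  · by_cases hG : G ⊆ F
    · rw [koszulDifferential_apply x hG]
      refine Submodule.sum_mem _ fun v _ => Submodule.smul_mem _ _ ?_
      exact Finsupp.supported_mono (fun c hc i => (hc i).trans (Finset.erase_subset v G))
        (hx.2 _ trivial)
    · rw [koszulDifferential_apply_of_not_subset x hG]
      exact zero_mem _

lemma koszulDifferential_eq_zero_of_mem_chainBicomplex {x : Finset σ → pchains P m →₀ A}
    (hx : x ∈ chainBicomplex A u F st m 0) : koszulDifferential A _ F x = 0 := by
  funext G
  by_contra hG
  obtain ⟨hGF, v, hv, hxG⟩ := exists_mem_of_koszulDifferential_ne_zero hG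
  have := (hx.1 _ hxG).2.2
  have := Finset.card_erase_add_one hv
  have := Finset.card_le_card hGF
  lia

lemma IsTransversalPoset.koszulHomotopy_mem (hst : IsTransversalPoset u F st) {v : σ}
    {x : Finset σ → pchains P (m + 1) →₀ A} (hx : x ∈ chainBicomplex A u F st (m + 1) q)
    (hv : ∀ G c, x G c ≠ 0 → v ∉ st (c.1 0)) :
    koszulHomotopy A _ v x ∈ chainBicomplex A u F st (m + 1) (q + 1) := by
  have avoid (G : Finset σ) (c : pchains P (m + 1)) (hc : x (insert v G) c ≠ 0) (i : Fin (m + 1)) :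
      st (c.1 i) ⊆ G := by
    have hv0 : v ∉ st (c.1 i) := fun h =>
      hv _ c hc (hst.antitone (c.2.monotone (Fin.zero_le i)) h)
    exact (Finset.subset_insert_iff_of_notMem hv0).1
      ((hx.2 (insert v G) trivial) (Finsupp.mem_support_iff.2 hc) i)
  refine ⟨fun G hG => ?_, fun G _ c hc => ?_⟩
  · obtain ⟨hvG, hxG⟩ := notMem_of_koszulHomotopy_ne_zero hG
    obtain ⟨hGF, -, hcard⟩ := hx.1 _ hxG
    obtain ⟨c, hc⟩ := Finsupp.ne_iff.1 hxG
    rw [Finset.card_insert_of_notMem hvG, add_assoc, add_comm 1 q] at hcard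
    exact ⟨(Finset.subset_insert v G).trans hGF, (hst.isTransversal _).mono (avoid G c hc 0), hcard⟩
  · have hc' := Finsupp.mem_support_iff.1 hc
    obtain ⟨hvG, -⟩ := notMem_of_koszulHomotopy_ne_zero (v := v) (G := G) (x := x) fun h =>
      hc' (DFunLike.congr_fun h c)
    rw [koszulHomotopy_apply_of_notMem x hvG, Finsupp.smul_apply] at hc'
    exact avoid G c (right_ne_zero_of_smul hc')

/-- A chain of sets contained in a proper subset of `F` misses some vertex `v` of `F`; the sets `G`
containing such a chain are contracted to `v`. -/
lemma IsTransversalPoset.exists_koszulDifferential_eq (hst : IsTransversalPoset u F st)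
    {x : Finset σ → pchains P (m + 1) →₀ A} (hx : x ∈ chainBicomplex A u F st (m + 1) q)
    (hdx : koszulDifferential A _ F x = 0) :
    ∃ y ∈ chainBicomplex A u F st (m + 1) (q + 1), koszulDifferential A _ F y = x := by
  choose w hwF hw using fun c : pchains P (m + 1) => Finset.exists_of_ssubset (hst.ssubset (c.1 0))
  let part (v : σ) : (pchains P (m + 1) →₀ A) →ₗ[A] (pchains P (m + 1) →₀ A) :=
    (Finsupp.supported A A {c | w c = v}).subtype ∘ₗ Finsupp.restrictDom A A {c | w c = v}
  have part_apply (v : σ) (z : pchains P (m + 1) →₀ A) (c) :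
      part v z c = if w c = v then z c else 0 := by
    simp [part, Finsupp.filter_apply]
  have part_mem (v : σ) : (part v).compLeft _ x ∈ chainBicomplex A u F st (m + 1) q := by
    refine ⟨fun G hG => hx.1 G fun h => hG ((congrArg _ h).trans (map_zero (part v))),
      fun G _ c hc => hx.2 G trivial ?_⟩
    have hc' := Finsupp.mem_support_iff.1 hc
    rw [LinearMap.compLeft_apply, Function.comp_apply, part_apply] at hc'
    exact Finsupp.mem_support_iff.2 (ite_ne_right_iff.1 hc').2
  have part_cocycle (v : σ) : koszulDifferential A _ F ((part v).compLeft _ x) = 0 := by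
    rw [koszulDifferential_compLeft, hdx, map_zero]
  refine ⟨∑ v ∈ F, koszulHomotopy A _ v ((part v).compLeft _ x),
    Submodule.sum_mem _ fun v _ => hst.koszulHomotopy_mem (part_mem v) fun G c hc => ?_, ?_⟩
  · rw [LinearMap.compLeft_apply, Function.comp_apply, part_apply] at hc
    exact (ite_ne_right_iff.1 hc).1 ▸ hw c
  · rw [map_sum, Finset.sum_congr rfl fun v hv => koszulDifferential_koszulHomotopy hv
      (fun G hG => ((part_mem v).1 G hG).1) (part_cocycle v)]
    ext G c
    simp [part_apply, hwF]

lemma IsTransversalPoset.exactChainBicomplex (hst : IsTransversalPoset u F st) :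
    ExactChainBicomplex (chainHorizontal A σ P)
      (fun m => koszulDifferential A (pchains P m →₀ A) F) (chainBicomplex A u F st) where
  h_mem := chainHorizontal_mem
  v_mem := koszulDifferential_mem_chainBicomplex
  v_eq_zero := koszulDifferential_eq_zero_of_mem_chainBicomplex
  h_v m x := (koszulDifferential_compLeft (simpBdry A A P m) F x).symm
  h_h _ x := funext fun G => simpBdry_simpBdry (x G)
  v_v _ := koszulDifferential_koszulDifferential F
  h_exact := hst.exists_chainHorizontal_eq
  v_exact := hst.exists_koszulDifferential_eq

lemma koszulDifferential_chainVerticalEdge (F : Finset σ) (φ : Finset σ → A) :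
    koszulDifferential A _ F (chainVerticalEdge A σ P φ) =
      chainVerticalEdge A σ P (koszulDifferential A A F φ) :=
  koszulDifferential_compLeft _ F φ

lemma map_chainVerticalEdge_transversalCocycles {r : ℕ} (hr : r + q = F.card) :
    (transversalCocycles A u F r).map (chainVerticalEdge A σ P) =
      chainBicomplex A u F st 0 q ⊓ LinearMap.ker (koszulDifferential A _ F) := by
  rw [transversalCocycles, map_inf_ker_of_comp_eq chainVerticalEdge_injective
    (koszulDifferential_chainVerticalEdge F), map_chainVerticalEdge_transversalCochains hr]

lemma map_chainVerticalEdge_transversalCoboundaries {r : ℕ} (hr : r + q = F.card) :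
    (transversalCoboundaries A u F r).map (chainVerticalEdge A σ P) =
      (chainBicomplex A u F st 0 (q + 1)).map (koszulDifferential A _ F) := by
  cases r with
  | zero =>
    have : chainBicomplex A u F st 0 (q + 1) = ⊥ := by
      refine (Submodule.eq_bot_iff _).2 fun x hx => funext fun G => ?_
      by_contra hG
      have := (hx.1 G hG).2.2
      lia
    rw [this, transversalCoboundaries, Submodule.map_bot, Submodule.map_bot]
  | succ r =>
    have hr' : r + (q + 1) = F.card := by lia
    rw [← map_chainVerticalEdge_transversalCochains hr', transversalCoboundaries,
      ← Submodule.map_comp, ← Submodule.map_comp]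
    congr 1
    exact LinearMap.ext fun φ => (koszulDifferential_chainVerticalEdge F φ).symm

theorem IsTransversalPoset.nonempty_simpHomology_equiv (hst : IsTransversalPoset u F st)
    (hF : IsTransversal u F) {r : ℕ} (hr : r ≤ F.card) :
    Nonempty (simpHomology A A P (F.card - r) ≃ₗ[A]
      Subquotient (transversalCocycles A u F r) (transversalCoboundaries A u F r)) := by
  have hr' := Nat.add_sub_of_le hr
  obtain ⟨e⟩ := nonempty_subquotient_equiv_map_of_injective
    (chainHorizontalEdge_injective (A := A) (P := P) F (F.card - r)) (range_simpBdry_le _)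
  obtain ⟨e'⟩ := nonempty_subquotient_equiv_map_of_injective
    (chainVerticalEdge_injective (P := P)) (transversalCoboundaries_le (k := A) (u := u) (F := F) r)
  rw [hst.map_chainHorizontalEdge_simpCycles hF, hst.map_chainHorizontalEdge_range hF] at e
  rw [map_chainVerticalEdge_transversalCocycles (st := st) hr',
    map_chainVerticalEdge_transversalCoboundaries (st := st) hr'] at e'
  obtain ⟨edge⟩ := (hst.exactChainBicomplex (A := A)).nonempty_edge_equiv_edge (F.card - r)
  exact ⟨(e.trans edge).trans e'.symm⟩

end TransversalPoset

section MinimalTransversals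

variable {ι σ : Type*} {u : ι → Finset σ} {G C : Finset σ}

open Classical in
/-- The union of the minimal transversals of `u` contained in `G`. -/
noncomputable def minimalTransversalUnion (u : ι → Finset σ) (G : Finset σ) : Finset σ :=
  {v ∈ G | ∃ C ⊆ G, v ∈ C ∧ Minimal (IsTransversal u) C}

lemma minimalTransversalUnion_subset : minimalTransversalUnion u G ⊆ G := by
  classical exact Finset.filter_subset _ _

lemma mem_minimalTransversalUnion {v : σ} :
    v ∈ minimalTransversalUnion u G ↔ ∃ C ⊆ G, v ∈ C ∧ Minimal (IsTransversal u) C := by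
  classical
  rw [minimalTransversalUnion, Finset.mem_filter, and_iff_right_iff_imp]
  rintro ⟨C, hC, hv, -⟩
  exact hC hv

lemma subset_minimalTransversalUnion (hC : Minimal (IsTransversal u) C) (h : C ⊆ G) :
    C ⊆ minimalTransversalUnion u G :=
  fun _ hv => mem_minimalTransversalUnion.2 ⟨C, h, hv, hC⟩

lemma minimalTransversalUnion_mono : Monotone (minimalTransversalUnion u) := fun _ _ h _ hv => by
  obtain ⟨C, hC, hv, hmin⟩ := mem_minimalTransversalUnion.1 hv
  exact subset_minimalTransversalUnion hmin (hC.trans h) hv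

/-- `G` is a nonempty union of minimal transversals of `u`. -/
def IsMinimalTransversalUnion (u : ι → Finset σ) (G : Finset σ) : Prop :=
  IsTransversal u G ∧ G ⊆ minimalTransversalUnion u G

lemma IsTransversal.isMinimalTransversalUnion (hG : IsTransversal u G) :
    IsMinimalTransversalUnion u (minimalTransversalUnion u G) := by
  obtain ⟨C, hCG, hC⟩ := exists_minimal_le_of_wellFoundedLT (IsTransversal u) G hG
  refine ⟨hC.prop.mono (subset_minimalTransversalUnion hC hCG), fun v hv => ?_⟩
  obtain ⟨C', hC'G, hv, hC'⟩ := mem_minimalTransversalUnion.1 hv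
  exact subset_minimalTransversalUnion hC' (subset_minimalTransversalUnion hC' hC'G) hv

lemma isMinimalTransversalUnion_iff_exists [DecidableEq σ] :
    IsMinimalTransversalUnion u G ↔ ∃ T : Finset (Finset σ),
      (∀ C ∈ T, Minimal (IsTransversal u) C) ∧ T.Nonempty ∧ T.biUnion id = G := by
  classical
  constructor
  · rintro ⟨hG, hsub⟩
    obtain ⟨C, hCG, hC⟩ := exists_minimal_le_of_wellFoundedLT (IsTransversal u) G hG
    refine ⟨{C ∈ G.powerset | Minimal (IsTransversal u) C}, fun C hC => (Finset.mem_filter.1 hC).2,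
      ⟨C, Finset.mem_filter.2 ⟨Finset.mem_powerset.2 hCG, hC⟩⟩, ?_⟩
    refine Finset.Subset.antisymm (Finset.biUnion_subset.2 fun C hC =>
      Finset.mem_powerset.1 (Finset.mem_filter.1 hC).1) fun v hv => ?_
    obtain ⟨C, hCG, hvC, hC⟩ := mem_minimalTransversalUnion.1 (hsub hv)
    exact Finset.mem_biUnion.2
      ⟨C, Finset.mem_filter.2 ⟨Finset.mem_powerset.2 hCG, hC⟩, hvC⟩
  · rintro ⟨T, hT, ⟨C, hC⟩, rfl⟩
    exact ⟨(hT C hC).prop.mono (Finset.subset_biUnion_of_mem id hC),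
      Finset.biUnion_subset.2 fun C hC =>
        subset_minimalTransversalUnion (hT C hC) (Finset.subset_biUnion_of_mem id hC)⟩

lemma transversalCocycles_le_of_not_isMinimalTransversalUnion {k : Type*} [CommRing k]
    [LinearOrder σ] {F : Finset σ} (hF : ¬ IsMinimalTransversalUnion u F) (r : ℕ) :
    transversalCocycles k u F r ≤ transversalCoboundaries k u F r := by
  by_cases hFu : IsTransversal u F
  · obtain ⟨v, hv, hvF⟩ := Finset.not_subset.1 fun h => hF ⟨hFu, h⟩
    refine transversalCocycles_le_of_forall_insert hv (fun G hG hvG => ?_) r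
    obtain ⟨C, hC, hmin⟩ := exists_minimal_le_of_wellFoundedLT (IsTransversal u) _ hvG
    have hvC : v ∉ C := fun h => hvF <|
      subset_minimalTransversalUnion hmin (hC.trans (Finset.insert_subset hv hG)) h
    exact hmin.prop.mono ((Finset.subset_insert_iff_of_notMem hvC).1 hC)
  · exact transversalCocycles_le_of_not_isTransversal hFu r

end MinimalTransversals

section VariableIdeal

variable {σ k : Type*} [CommRing k]

variable (k) in
/-- The ideal generated by the variables in `G`. -/
noncomputable def variableIdeal (G : Finset σ) : Ideal (MvPolynomial σ k) :=
  Ideal.span (X '' (G : Set σ))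

lemma variableIdeal_le_iff {G : Finset σ} {J : Ideal (MvPolynomial σ k)} :
    variableIdeal k G ≤ J ↔ ∀ i ∈ G, X i ∈ J := by
  rw [variableIdeal, Ideal.span_le, Set.image_subset_iff]
  rfl

lemma X_mem_variableIdeal_of_mem {G : Finset σ} {i : σ} (hi : i ∈ G) :
    (X i : MvPolynomial σ k) ∈ variableIdeal k G :=
  Ideal.subset_span (Set.mem_image_of_mem X hi)

lemma variableIdeal_eq_ker [DecidableEq σ] (G : Finset σ) :
    variableIdeal k G = RingHom.ker (aeval fun i => if i ∈ G then 0 else X i :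
      MvPolynomial σ k →ₐ[k] MvPolynomial σ k) := by
  set φ : MvPolynomial σ k →ₐ[k] MvPolynomial σ k := aeval fun i => if i ∈ G then 0 else X i
  refine le_antisymm (variableIdeal_le_iff.2 fun i hi => by simp [φ, RingHom.mem_ker, hi])
    fun p hp => ?_
  have hφ : (Ideal.Quotient.mkₐ k (variableIdeal k G)).comp φ = Ideal.Quotient.mkₐ k _ := by
    refine algHom_ext fun i => ?_
    by_cases hi : i ∈ G
    · have hX := Ideal.Quotient.eq_zero_iff_mem.2 (X_mem_variableIdeal_of_mem (k := k) hi)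
      simpa [φ, hi] using hX.symm
    · simp [φ, hi]
  rw [← Ideal.Quotient.eq_zero_iff_mem, ← Ideal.Quotient.mkₐ_eq_mk k, ← hφ, AlgHom.comp_apply,
    RingHom.mem_ker.1 hp, map_zero]

lemma isPrime_variableIdeal [IsDomain k] (G : Finset σ) : (variableIdeal k G).IsPrime := by
  classical
  rw [variableIdeal_eq_ker]
  exact RingHom.ker_isPrime _

lemma X_mem_variableIdeal [Nontrivial k] {G : Finset σ} {i : σ} :
    (X i : MvPolynomial σ k) ∈ variableIdeal k G ↔ i ∈ G := by
  classical
  rw [variableIdeal_eq_ker, RingHom.mem_ker, aeval_X, ite_eq_left_iff]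
  exact not_imp_comm.trans (imp_iff_right (X_ne_zero i))

lemma variableIdeal_le_variableIdeal [Nontrivial k] {G G' : Finset σ} :
    variableIdeal k G ≤ variableIdeal k G' ↔ G ⊆ G' := by
  simp only [variableIdeal_le_iff, X_mem_variableIdeal, Finset.subset_iff]

lemma variableIdeal_biUnion {κ : Type*} [DecidableEq σ] (T : Finset κ) (f : κ → Finset σ) :
    variableIdeal k (T.biUnion f) = T.sup fun p => variableIdeal k (f p) := by
  refine le_antisymm (variableIdeal_le_iff.2 fun i hi => ?_) (Finset.sup_le fun p hp => ?_)
  · obtain ⟨p, hp, hip⟩ := Finset.mem_biUnion.1 hi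
    exact Finset.le_sup (f := fun p => variableIdeal k (f p)) hp
      (X_mem_variableIdeal_of_mem hip)
  · exact variableIdeal_le_iff.2 fun i hi =>
      X_mem_variableIdeal_of_mem (Finset.mem_biUnion.2 ⟨p, hp, hi⟩)

variable [Finite σ]

/-- The variables contained in the ideal `J`. -/
noncomputable def variablesIn (J : Ideal (MvPolynomial σ k)) : Finset σ :=
  (Set.toFinite {i | X i ∈ J}).toFinset

lemma mem_variablesIn {J : Ideal (MvPolynomial σ k)} {i : σ} : i ∈ variablesIn J ↔ X i ∈ J := by
  simp [variablesIn]

lemma variablesIn_mono : Monotone (variablesIn : Ideal (MvPolynomial σ k) → Finset σ) :=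
  fun _ _ h _ hi => mem_variablesIn.2 (h (mem_variablesIn.1 hi))

lemma variableIdeal_variablesIn_le (J : Ideal (MvPolynomial σ k)) :
    variableIdeal k (variablesIn J) ≤ J :=
  variableIdeal_le_iff.2 fun _ => mem_variablesIn.1

lemma variablesIn_variableIdeal [Nontrivial k] (G : Finset σ) :
    variablesIn (variableIdeal k G) = G := by
  ext i
  rw [mem_variablesIn, X_mem_variableIdeal]

end VariableIdeal

section MinimalPrimes

variable {ι σ k : Type*} [CommRing k] [Finite σ] {u : ι → Finset σ}

lemma edgeIdeal_le_iff_isTransversal {p : Ideal (MvPolynomial σ k)} (hp : p.IsPrime) :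
    edgeIdeal k u ≤ p ↔ IsTransversal u (variablesIn p) := by
  simp only [edgeIdeal, Ideal.span_le, Set.range_subset_iff, SetLike.mem_coe, hp.prod_mem_iff,
    IsTransversal, Finset.not_disjoint_iff, mem_variablesIn]

variable [IsDomain k]

lemma edgeIdeal_le_variableIdeal_iff {G : Finset σ} :
    edgeIdeal k u ≤ variableIdeal k G ↔ IsTransversal u G := by
  rw [edgeIdeal_le_iff_isTransversal (isPrime_variableIdeal G), variablesIn_variableIdeal]

lemma variableIdeal_variablesIn_of_mem_minimalPrimes {p : Ideal (MvPolynomial σ k)}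
    (hp : p ∈ (edgeIdeal k u).minimalPrimes) : variableIdeal k (variablesIn p) = p :=
  have h := (edgeIdeal_le_iff_isTransversal hp.1.1).1 hp.1.2
  (variableIdeal_variablesIn_le p).antisymm <| hp.2
    ⟨isPrime_variableIdeal _, edgeIdeal_le_variableIdeal_iff.2 h⟩ (variableIdeal_variablesIn_le p)

lemma variableIdeal_mem_minimalPrimes_iff {G : Finset σ} :
    variableIdeal k G ∈ (edgeIdeal k u).minimalPrimes ↔ Minimal (IsTransversal u) G := by
  constructor
  · refine fun h => ⟨edgeIdeal_le_variableIdeal_iff.1 h.1.2, fun G' hG' hle => ?_⟩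
    exact variableIdeal_le_variableIdeal.1 <| h.2
      ⟨isPrime_variableIdeal G', edgeIdeal_le_variableIdeal_iff.2 hG'⟩
      (variableIdeal_le_variableIdeal.2 hle)
  · refine fun h => ⟨⟨isPrime_variableIdeal G, edgeIdeal_le_variableIdeal_iff.2 h.1⟩, ?_⟩
    rintro q ⟨hq, hle⟩ hqG
    have hqG' : variablesIn q ⊆ G := by
      simpa only [variablesIn_variableIdeal] using variablesIn_mono hqG
    exact (variableIdeal_le_variableIdeal.2
      (h.2 ((edgeIdeal_le_iff_isTransversal hq).1 hle) hqG')).trans (variableIdeal_variablesIn_le q)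

end MinimalPrimes

section IntersectionPoset

variable {ι : Type*} {n : ℕ} {k : Type} [Field k] {u : ι → Finset (Fin n)}

lemma arrMem_edgeIdeal_iff {J : Ideal (MvPolynomial (Fin n) k)} :
    arrMem k (edgeIdeal k u) J ↔
      ∃ G, IsMinimalTransversalUnion u G ∧ variableIdeal k G = J := by
  classical
  simp only [isMinimalTransversalUnion_iff_exists]
  constructor
  · rintro ⟨-, T, hT, hne, rfl⟩
    have eq_of_mem (p) (hp : p ∈ T) : variableIdeal k (variablesIn p) = p :=
      variableIdeal_variablesIn_of_mem_minimalPrimes (hT hp)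
    refine ⟨_, ⟨T.image variablesIn, Finset.forall_mem_image.2 fun p hp => ?_,
      hne.image _, rfl⟩, ?_⟩
    · rw [← variableIdeal_mem_minimalPrimes_iff (k := k), eq_of_mem p hp]
      exact hT hp
    · rw [variableIdeal_biUnion, Finset.sup_image]
      exact Finset.sup_congr rfl eq_of_mem
  · rintro ⟨_, ⟨T, hT, hne, rfl⟩, rfl⟩
    refine ⟨(isPrime_variableIdeal _).ne_top, T.image (variableIdeal k), ?_, hne.image _, ?_⟩
    · rw [Finset.coe_image, Set.image_subset_iff]
      exact fun C hC => variableIdeal_mem_minimalPrimes_iff.2 (hT C hC)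
    · rw [variableIdeal_biUnion, Finset.sup_image]
      rfl

lemma isMinimalTransversalUnion_variablesIn {J : Ideal (MvPolynomial (Fin n) k)}
    (hJ : arrMem k (edgeIdeal k u) J) : IsMinimalTransversalUnion u (variablesIn J) := by
  obtain ⟨G, hG, rfl⟩ := arrMem_edgeIdeal_iff.1 hJ
  rwa [variablesIn_variableIdeal]

lemma variableIdeal_variablesIn_of_arrMem {J : Ideal (MvPolynomial (Fin n) k)}
    (hJ : arrMem k (edgeIdeal k u) J) : variableIdeal k (variablesIn J) = J := by
  obtain ⟨G, -, rfl⟩ := arrMem_edgeIdeal_iff.1 hJ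
  rw [variablesIn_variableIdeal]

lemma isTransversalPoset_arrP {F : Finset (Fin n)}
    (hF : arrMem k (edgeIdeal k u) (variableIdeal k F)) :
    IsTransversalPoset u F fun q : {q : arrP k (edgeIdeal k u) //
      (⟨OrderDual.toDual (variableIdeal k F), hF⟩ : arrP k (edgeIdeal k u)) < q} =>
        variablesIn (OrderDual.ofDual q.1.1) where
  antitone _ _ h := variablesIn_mono h
  ssubset q := by
    have hlt : OrderDual.ofDual q.1.1 < variableIdeal k F := q.2
    rw [← variableIdeal_variablesIn_of_arrMem q.1.2] at hlt
    exact ⟨variableIdeal_le_variableIdeal.1 hlt.le,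
      fun h => hlt.not_ge (variableIdeal_le_variableIdeal.2 h)⟩
  isTransversal q := (isMinimalTransversalUnion_variablesIn q.1.2).1
  exists_isLeast G hGF hG := by
    have hU : minimalTransversalUnion u G ⊂ F := minimalTransversalUnion_subset.trans_ssubset hGF
    refine ⟨⟨⟨OrderDual.toDual (variableIdeal k (minimalTransversalUnion u G)),
      arrMem_edgeIdeal_iff.2 ⟨_, hG.isMinimalTransversalUnion, rfl⟩⟩, ?_⟩, ?_, fun q hq => ?_⟩
    · exact ⟨variableIdeal_le_variableIdeal.2 hU.1, fun h =>
        hU.2 (variableIdeal_le_variableIdeal.1 h)⟩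
    · exact (variablesIn_variableIdeal (k := k) _).trans_subset minimalTransversalUnion_subset
    · change OrderDual.ofDual q.1.1 ≤ variableIdeal k _
      rw [← variableIdeal_variablesIn_of_arrMem q.1.2, variableIdeal_le_variableIdeal]
      exact (isMinimalTransversalUnion_variablesIn q.1.2).2.trans (minimalTransversalUnion_mono hq)

end IntersectionPoset

section Main

variable {n : ℕ} {k : Type} [Field k]

lemma negSupport_eq_of_isOm {a : Fin n → ℤ} (ha : isOm a) :
    negSupport a = ({i | a i = -1} : Finset (Fin n)) := by
  ext i
  rcases ha i with h | h <;> simp [negSupport, h]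

lemma card_negSupport_of_isOm {a : Fin n → ℤ} (ha : isOm a) : (negSupport a).card = wt a := by
  rw [negSupport_eq_of_isOm ha, wt]

lemma faceIdeal_eq_variableIdeal {a : Fin n → ℤ} (ha : isOm a) :
    faceIdeal k a = variableIdeal k (negSupport a) := by
  rw [negSupport_eq_of_isOm ha, faceIdeal, variableIdeal, Finset.coe_filter_univ]

variable {ι : Type} [Finite ι] (u : ι → Finset (Fin n)) (r : ℕ)
  [Module k (LC k (edgeIdeal k u) r)]
  [IsScalarTower k (MvPolynomial (Fin n) k) (LC k (edgeIdeal k u) r)]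

variable (k) in
/-- The homogeneous part of degree `a` of the local cohomology of the polynomial ring at a
squarefree monomial ideal. -/
noncomputable def localCohomologyPart (a : Fin n → ℤ) : Submodule k (LC k (edgeIdeal k u) r) :=
  (taylorDescription k u r).homogeneousPart ((taylorTower k u).subquotientColimit r _) a

lemma isInternal_localCohomologyPart :
    DirectSum.IsInternal (localCohomologyPart k u r) :=
  (taylorDescription k u r).isInternal_homogeneousPart _

lemma gradingCompat_localCohomologyPart :
    GradingCompat k _ (localCohomologyPart k u r) := fun i a _ hy =>
  (taylorDescription k u r).smul_mem_homogeneousPart _ (fun t f b hb => by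
    exact (taylorComponent_X_smul r t b i _).trans
      (taylorComponent_taylorLift_of_ne r t f (mt sub_eq_iff_eq_add.1 hb))) hy

lemma finrank_localCohomologyPart (a : Fin n → ℤ) :
    Module.finrank k (localCohomologyPart k u r a) =
      Module.finrank k (Subquotient (transversalCocycles k u (negSupport a) r)
        (transversalCoboundaries k u (negSupport a) r)) := by
  obtain ⟨e⟩ := nonempty_coverSubquotient_equiv_transversalSubquotient (k := k) (u := u)
    (F := negSupport a) r
  rw [← e.finrank_eq]
  exact ((taylorDescription k u r).homogeneousPartEquiv _ a).finrank_eq.symm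

end Main

/-- For a squarefree monomial ideal `I ⊆ k[x₁,…,xₙ]` and `r ≥ 0`, the dimension of the
degree-`a` piece (`a ∈ {-1,0}ⁿ`) of the canonical `ℤⁿ`-grading of `H^r_I(R)` equals the
multiplicity `m_{r,a} = dim_k H̃_{|a|-r-1}(K(>p_a); k)` computed from the intersection poset
(`m_{r,a} = 0` when `p_a ∉ P(X)` or `r > |a|`). -/
theorem stmt_11 (n : ℕ) (k : Type) [Field k]
    (I : Ideal (MvPolynomial (Fin n) k)) (S : Finset (Finset (Fin n)))
    (hI : I = Ideal.span
      ((fun s : Finset (Fin n) => ∏ i ∈ s, MvPolynomial.X i) '' (S : Set (Finset (Fin n)))))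
    [∀ r : ℕ, Module k (LC k I r)]
    [∀ r : ℕ, IsScalarTower k (MvPolynomial (Fin n) k) (LC k I r)] :
    ∃ g : ∀ r : ℕ, (Fin n → ℤ) → Submodule k (LC k I r),
      (∀ r, DirectSum.IsInternal (g r) ∧ GradingCompat k _ (g r)) ∧
      ∀ (r : ℕ) (a : Fin n → ℤ), isOm a →
        ((∀ hmem : arrMem k I (faceIdeal k a), r ≤ wt a →
          Module.finrank k (g r a) =
            Module.finrank k (simpHomology k k
              {q : arrP k I //
                (⟨OrderDual.toDual (faceIdeal k a), hmem⟩ : arrP k I) < q} (wt a - r))) ∧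
        (arrMem k I (faceIdeal k a) → wt a < r → Module.finrank k (g r a) = 0) ∧
        (¬ arrMem k I (faceIdeal k a) → Module.finrank k (g r a) = 0)) := by
  obtain ⟨ι, _, u, rfl⟩ : ∃ (ι : Type) (_ : Finite ι) (u : ι → Finset (Fin n)),
      I = edgeIdeal k u :=
    ⟨S, inferInstance, fun s => s.1, by
      rw [hI, Set.image_eq_range]
      rfl⟩
  refine ⟨fun r => localCohomologyPart k u r, fun r => ⟨isInternal_localCohomologyPart u r,
    gradingCompat_localCohomologyPart u r⟩, fun r a ha => ?_⟩
  rw [finrank_localCohomologyPart, ← card_negSupport_of_isOm ha]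
  generalize hJ : faceIdeal k a = J
  obtain rfl : J = variableIdeal k (negSupport a) := hJ.symm.trans (faceIdeal_eq_variableIdeal ha)
  refine ⟨fun hmem hr => ?_, fun _ hr => ?_, fun hmem => ?_⟩
  · have hF : IsTransversal u (negSupport a) := by
      simpa only [variablesIn_variableIdeal] using (isMinimalTransversalUnion_variablesIn hmem).1
    obtain ⟨e⟩ := (isTransversalPoset_arrP hmem).nonempty_simpHomology_equiv (A := k) hF hr
    exact e.finrank_eq.symm
  · exact finrank_subquotient_eq_zero (transversalCocycles_le_of_card_lt hr)
  · exact finrank_subquotient_eq_zero <| transversalCocycles_le_of_not_isMinimalTransversalUnion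
      (fun h => hmem (arrMem_edgeIdeal_iff.2 ⟨_, h, rfl⟩)) r
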